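/- arXiv:0710.2767 — 3 statements merged into one kernel-verified Lean document; each statement's English description precedes it below -/
import Mathlib

section
/- Let m > 2 be a prime number, s = 4 and q = p ≡ 1 (mod 4). Then P_m(0,4,h) = (1/4)·(p^{p−2} − 1) if m = p, and P_m(0,4,h) = (1/(4m))·(p^{m−1} − 1) if m ≠ p. For a ≠ 0: if m = p then P_p(a,4,h) = (1/(4p))·( p^{p−1} + (−1)^h·( p^{(p−1)/2}·ρ(a) + 2·p^{(p−1)/4}·Re(π_4^{(p−1)/2}·χ_4(a)·i^h) ) ); if m ≠ p then P_m(a,4,h) = (1/(4m))·( p^{m−1} − 1 + (−1)^h·( ρ(a)·( p^{(m−1)/2} − ρ(m) ) + 2·Re R_m ) ), where R_m = p^{(m−1)/4}·π_4^{(m−1)/2}·χ_4(a)·i^h − χ_4(m³·a)·i^h if m ≡ 1 (mod 4), and R_m = (−1)^f·p^{(m−3)/4}·π_4^{(m+1)/2}·χ̄_4(a)·i^h − χ_4(m³·a)·i^{3h} if m ≡ 3 (mod 4). -/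
noncomputable section

open Complex Polynomial Classical

/-- `P_m(a,s,h)`: the number of monic irreducible `f = x^m − a x^{m-1} + ⋯ + (−1)^m b`
of degree `m` over `F` with `b ∈ g^h·⟨g^s⟩`. -/
def PP (F : Type*) [Field F] [Fintype F] (g : F) (m s h : ℕ) (a : F) : ℕ :=
  Nat.card {f : Polynomial F // f.Monic ∧ f.natDegree = m ∧ Irreducible f ∧
    f.coeff (m - 1) = -a ∧ ∃ k : ℕ, (-1 : F) ^ m * f.coeff 0 = g ^ (h + s * k)}

section Part1
variable {F : Type*} [Field F] [Fintype F]

def monEquiv (F : Type*) [Field F] (n : ℕ) :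
    {f : F[X] // f.Monic ∧ f.natDegree = n} ≃ (Fin n → F) :=
  (Polynomial.monicEquivDegreeLT n).trans (degreeLTEquiv F n).toEquiv

lemma monSet_finite (F : Type*) [Field F] [Fintype F] (n : ℕ) :
    {f : F[X] | f.Monic ∧ f.natDegree = n}.Finite := by
  have : Finite {f : F[X] // f.Monic ∧ f.natDegree = n} := Finite.of_equiv _ (monEquiv F n).symm
  exact Set.finite_coe_iff.mp this

def MM (F : Type*) [Field F] [Fintype F] (n : ℕ) : Finset F[X] := (monSet_finite F n).toFinset

lemma mem_MM {n : ℕ} {f : F[X]} : f ∈ MM F n ↔ f.Monic ∧ f.natDegree = n := by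
  simp [MM]

lemma card_MM (n : ℕ) : (MM F n).card = Fintype.card F ^ n := by
  have h2 := Nat.card_congr (monEquiv F n)
  rw [MM, ← Nat.card_eq_card_finite_toFinset (monSet_finite F n)]
  exact h2.trans (by simp)

def Irr (F : Type*) [Field F] [Fintype F] (n : ℕ) : Finset F[X] := (MM F n).filter Irreducible

lemma mem_Irr {n : ℕ} {f : F[X]} : f ∈ Irr F n ↔ f.Monic ∧ f.natDegree = n ∧ Irreducible f := by
  simp [Irr, mem_MM, and_assoc]

structure MulW (w : F[X] → ℂ) : Prop where
  one : w 1 = 1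
  mul : ∀ f g : F[X], f.Monic → g.Monic → w (f * g) = w f * w g

lemma MulW.pow {w : F[X] → ℂ} (hw : MulW w) (f : F[X]) (hf : f.Monic) (k : ℕ) :
    w (f ^ k) = w f ^ k := by
  induction k with
  | zero => simp [hw.one]
  | succ k ih => rw [pow_succ, hw.mul _ _ (hf.pow k) hf, ih, pow_succ]

def LL (w : F[X] → ℂ) (n : ℕ) : ℂ := ∑ f ∈ MM F n, w f

def Lam (w : F[X] → ℂ) (n : ℕ) : ℂ :=
  ∑ dk ∈ n.divisorsAntidiagonal, (dk.1 : ℂ) * ∑ P ∈ Irr F dk.1, w P ^ dk.2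

lemma sum_dvd {w : F[X] → ℂ} (hw : MulW w) (Q : F[X]) (hQ : Q.Monic) (n : ℕ)
    (h : Q.natDegree ≤ n) :
    ∑ f ∈ MM F n with Q ∣ f, w f = w Q * LL w (n - Q.natDegree) := by
  rw [LL, Finset.mul_sum]
  symm
  refine Finset.sum_bij (fun g _ => Q * g) ?_ ?_ ?_ ?_
  · intro g hg
    rw [mem_MM] at hg
    simp only [Finset.mem_filter, mem_MM, dvd_mul_right, and_true]
    refine ⟨hQ.mul hg.1, ?_⟩
    rw [hQ.natDegree_mul hg.1, hg.2]; omega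
  · intro g _ g' _ h
    exact mul_left_cancel₀ hQ.ne_zero h
  · intro f hf
    simp only [Finset.mem_filter, mem_MM] at hf
    obtain ⟨⟨h1, h2⟩, g, rfl⟩ := hf
    have hg : g.Monic := hQ.of_mul_monic_left h1
    refine ⟨g, ?_, rfl⟩
    rw [mem_MM]
    rw [hQ.natDegree_mul hg] at h2
    exact ⟨hg, by omega⟩
  · intro g hg
    rw [mem_MM] at hg
    rw [hw.mul _ _ hQ hg.1]

lemma deg_sum (n : ℕ) (f : F[X]) (hf : f ∈ MM F n) :
    ∑ j ∈ Finset.Icc 1 n, ∑ dk ∈ j.divisorsAntidiagonal,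
      ∑ P ∈ Irr F dk.1, (if P ^ dk.2 ∣ f then (dk.1 : ℂ) else 0) = n := by
  rw [mem_MM] at hf
  obtain ⟨hf, hn⟩ := hf
  have h0 := hf.ne_zero
  set s := UniqueFactorizationMonoid.normalizedFactors f with hs
  have hprod : s.prod = f := by
    have := leadingCoeff_mul_prod_normalizedFactors f
    rw [hf.leadingCoeff] at this
    simpa using this
  have hmem : ∀ P, P ∈ s ↔ Irreducible P ∧ P.Monic ∧ P ∣ f := fun P =>
    Polynomial.mem_normalizedFactors_iff h0
  have hdvd : ∀ P : F[X], Irreducible P → P.Monic → ∀ k, P ^ k ∣ f ↔ k ≤ s.count P := by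
    intro P hP hPm k
    rw [pow_dvd_iff_le_emultiplicity,
      UniqueFactorizationMonoid.emultiplicity_eq_count_normalizedFactors hP h0,
      hPm.normalize_eq_self]
    exact Nat.cast_le
  have key : (n : ℂ) = ∑ P ∈ s.toFinset, ∑ k ∈ Finset.Icc 1 (s.count P), (P.natDegree : ℂ) := by
    simp only [Finset.sum_const, Nat.card_Icc, Nat.add_sub_cancel, nsmul_eq_mul]
    have h1 : n = (s.map natDegree).sum := by
      rw [← hn, ← hprod]
      apply natDegree_multiset_prod_of_monic
      intro P hP
      exact ((hmem P).1 hP).2.1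
    rw [h1, Finset.sum_multiset_map_count]
    push_cast
    simp
  rw [key]
  simp only [Finset.sum_sigma']
  rw [← Finset.sum_filter]
  symm
  refine Finset.sum_bij' (fun x _ => ⟨x.1.natDegree * x.2, ⟨(x.1.natDegree, x.2), x.1⟩⟩)
    (fun y _ => ⟨y.2.2, y.2.1.2⟩) ?_ ?_ ?_ ?_ ?_
  · rintro ⟨P, k⟩ hx
    simp only [Finset.mem_sigma, Multiset.mem_toFinset, Finset.mem_Icc] at hx
    obtain ⟨hP, hk1, hk⟩ := hx
    obtain ⟨h1, h2, h3⟩ := (hmem P).1 hP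
    have hd := h1.natDegree_pos
    have hk' := (hdvd P h1 h2 k).2 hk
    have hle := natDegree_le_of_dvd hk' h0
    rw [natDegree_pow, hn] at hle
    have hpos : 0 < P.natDegree * k := Nat.mul_pos hd hk1
    simp only [Finset.mem_filter, Finset.mem_sigma, Finset.mem_Icc,
      Nat.mem_divisorsAntidiagonal, mem_Irr]
    refine ⟨⟨⟨hpos, by linarith⟩, ⟨trivial, hpos.ne'⟩, h2, trivial, h1⟩, hk'⟩
  · rintro ⟨j, ⟨d, k⟩, P⟩ hx
    simp only [Finset.mem_filter, Finset.mem_sigma, Finset.mem_Icc,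
      Nat.mem_divisorsAntidiagonal, mem_Irr] at hx
    obtain ⟨⟨⟨hj1, hj2⟩, ⟨hdk, hj0⟩, h2, h3, h1⟩, h4⟩ := hx
    have hk : 1 ≤ k := by
      rcases Nat.eq_zero_or_pos k with rfl | h
      · omega
      · exact h
    simp only [Finset.mem_sigma, Multiset.mem_toFinset, Finset.mem_Icc]
    exact ⟨(hmem P).2 ⟨h1, h2, (dvd_pow_self P (by omega)).trans h4⟩, hk, (hdvd P h1 h2 k).1 h4⟩
  · rintro ⟨P, k⟩ hx
    rfl
  · rintro ⟨j, ⟨d, k⟩, P⟩ hx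
    simp only [Finset.mem_filter, Finset.mem_sigma, Finset.mem_Icc,
      Nat.mem_divisorsAntidiagonal, mem_Irr] at hx
    obtain ⟨⟨⟨hj1, hj2⟩, ⟨hdk, hj0⟩, h2, h3, h1⟩, h4⟩ := hx
    subst h3
    subst hdk
    rfl
  · rintro ⟨P, k⟩ hx
    rfl

lemma newton {w : F[X] → ℂ} (hw : MulW w) (n : ℕ) :
    (n : ℂ) * LL w n = ∑ j ∈ Finset.Icc 1 n, Lam w j * LL w (n - j) := by
  have h1 : ∀ j ∈ Finset.Icc 1 n, Lam w j * LL w (n - j) =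
      ∑ dk ∈ j.divisorsAntidiagonal, ∑ P ∈ Irr F dk.1, ∑ f ∈ MM F n,
        (if P ^ dk.2 ∣ f then (dk.1 : ℂ) else 0) * w f := by
    intro j hj
    rw [Lam, Finset.sum_mul]
    refine Finset.sum_congr rfl fun dk hdk => ?_
    rw [Finset.mul_sum, Finset.sum_mul]
    refine Finset.sum_congr rfl fun P hP => ?_
    rw [mem_Irr] at hP
    rw [Nat.mem_divisorsAntidiagonal] at hdk
    have hdeg : (P ^ dk.2).natDegree = j := by
      rw [natDegree_pow, hP.2.1, mul_comm, hdk.1]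
    have := sum_dvd hw (P ^ dk.2) (hP.1.pow _) n (by rw [hdeg]; exact (Finset.mem_Icc.1 hj).2)
    rw [hdeg, hw.pow _ hP.1] at this
    rw [mul_assoc, ← this, Finset.sum_filter, Finset.mul_sum]
    refine Finset.sum_congr rfl fun f hf => ?_
    split_ifs <;> simp
  rw [Finset.sum_congr rfl h1, LL, Finset.mul_sum]
  rw [Finset.sum_congr rfl fun f hf => by rw [← deg_sum n f hf]]
  simp only [Finset.sum_mul]
  rw [Finset.sum_comm]
  refine Finset.sum_congr rfl fun j _ => ?_
  rw [Finset.sum_comm]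
  refine Finset.sum_congr rfl fun dk _ => ?_
  rw [Finset.sum_comm]

lemma MM_zero : MM F 0 = {1} := by
  ext f
  simp only [mem_MM, Finset.mem_singleton]
  constructor
  · rintro ⟨h1, h2⟩
    exact h1.natDegree_eq_zero.1 h2
  · rintro rfl
    exact ⟨monic_one, natDegree_one⟩

lemma LL_zero {w : F[X] → ℂ} (hw : MulW w) : LL w 0 = 1 := by
  simp [LL, MM_zero, hw.one]

lemma Lam_one {w : F[X] → ℂ} (hw : MulW w) : Lam w 1 = LL w 1 := by
  have := newton hw 1
  simp [LL_zero hw] at this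
  exact this.symm

lemma Lam_of_vanish {w : F[X] → ℂ} (hw : MulW w) (hv : ∀ n, 2 ≤ n → LL w n = 0) (n : ℕ) :
    Lam w (n + 1) = (-1) ^ n * LL w 1 ^ (n + 1) := by
  induction n with
  | zero => simp [Lam_one hw]
  | succ n ih =>
    have := newton hw (n + 2)
    rw [hv _ (by omega), mul_zero, ← Finset.sum_subset (s₁ := {n + 1, n + 2})] at this
    · rw [Finset.sum_pair (by omega)] at this
      have e1 : n + 2 - (n + 1) = 1 := by omega
      rw [e1, Nat.sub_self, LL_zero hw, ih] at this
      have h2 : n + 1 + 1 = n + 2 := rfl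
      rw [h2]
      linear_combination -this
    · intro x hx
      simp at hx ⊢
      omega
    · intro x hx hx2
      simp at hx hx2
      rw [hv _ (by omega), mul_zero]

lemma mulW_one : MulW (fun _ : F[X] => (1 : ℂ)) := ⟨rfl, by simp⟩

lemma Lam_triv (n : ℕ) (hn : 1 ≤ n) :
    Lam (fun _ : F[X] => (1 : ℂ)) n = (Fintype.card F : ℂ) ^ n := by
  induction n using Nat.strong_induction_on with
  | _ n ih =>
    have hL : ∀ k, LL (fun _ : F[X] => (1 : ℂ)) k = (Fintype.card F : ℂ) ^ k := by
      intro k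
      simp [LL, card_MM]
    have := newton (F := F) mulW_one n
    obtain ⟨k, rfl⟩ : ∃ k, n = k + 1 := ⟨n - 1, by omega⟩
    rw [Finset.sum_Icc_succ_top (by omega), hL, Nat.sub_self, hL, pow_zero, mul_one,
      Finset.sum_congr rfl (g := fun _ => (Fintype.card F : ℂ) ^ (k + 1))] at this
    · simp at this
      linear_combination -this
    · intro j hj
      rw [Finset.mem_Icc] at hj
      rw [ih j (by omega) hj.1, hL, ← pow_add]
      congr 1
      omega

lemma sum_Irr_one (φ : F[X] → ℂ) : ∑ P ∈ Irr F 1, φ P = ∑ x : F, φ (X - C x) := by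
  symm
  refine Finset.sum_bij (fun x _ => X - C x) ?_ ?_ ?_ ?_
  · intro x _
    rw [mem_Irr]
    exact ⟨monic_X_sub_C x, natDegree_X_sub_C x, irreducible_X_sub_C x⟩
  · intro x _ y _ h
    simpa using h
  · intro f hf
    rw [mem_Irr] at hf
    refine ⟨- f.coeff 0, Finset.mem_univ _, ?_⟩
    rw [hf.1.eq_X_add_C hf.2.1]
    simp
  · intros; rfl

lemma MM_one_eq : MM F 1 = Irr F 1 := by
  ext f
  rw [mem_MM, mem_Irr]
  constructor
  · rintro ⟨h1, h2⟩
    exact ⟨h1, h2, irreducible_of_degree_eq_one (by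
      rw [degree_eq_natDegree h1.ne_zero, h2]; rfl)⟩
  · rintro ⟨h1, h2, _⟩
    exact ⟨h1, h2⟩

lemma LL_one (w : F[X] → ℂ) : LL w 1 = ∑ x : F, w (X - C x) := by
  rw [LL, MM_one_eq, sum_Irr_one]

lemma Lam_prime (w : F[X] → ℂ) (m : ℕ) (hm : m.Prime) :
    Lam w m = (m : ℂ) * ∑ P ∈ Irr F m, w P + ∑ x : F, w (X - C x) ^ m := by
  rw [Lam, Nat.sum_divisorsAntidiagonal
    (f := fun d k => (d : ℂ) * ∑ P ∈ Irr F d, w P ^ k), Nat.Prime.sum_divisors hm,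
    Nat.div_self hm.pos, Nat.div_one]
  simp only [Nat.cast_one, one_mul, pow_one]
  rw [sum_Irr_one (fun P => w P ^ m)]
end Part1

section Part2
variable {F : Type*} [Field F] [Fintype F]

def ww (χ : MulChar F ℂ) (ψ : AddChar F ℂ) (c : F) (f : F[X]) : ℂ :=
  χ ((-1) ^ f.natDegree * f.coeff 0) * ψ (c * (-f.nextCoeff))

lemma ww_mulW (χ : MulChar F ℂ) (ψ : AddChar F ℂ) (c : F) : MulW (ww χ ψ c) := by
  constructor
  · simp [ww, nextCoeff]
  · intro f g hf hg
    have e1 : (-1 : F) ^ (f.natDegree + g.natDegree) * (f.coeff 0 * g.coeff 0) =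
      ((-1) ^ f.natDegree * f.coeff 0) * ((-1) ^ g.natDegree * g.coeff 0) := by ring
    have e2 : c * -(f.nextCoeff + g.nextCoeff) = c * (-f.nextCoeff) + c * (-g.nextCoeff) := by ring
    simp only [ww]
    rw [hf.natDegree_mul hg, mul_coeff_zero, hf.nextCoeff_mul hg, e1, e2, map_mul,
      AddChar.map_add_eq_mul]
    ring

lemma ww_lin (χ : MulChar F ℂ) (ψ : AddChar F ℂ) (c x : F) :
    ww χ ψ c (X - C x) = χ x * ψ (c * x) := by
  simp [ww, nextCoeff_X_sub_C]

lemma MM_add {n : ℕ} {f r : F[X]} (hf : f ∈ MM F n) (hr : r.degree < n) : f + r ∈ MM F n := by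
  rw [mem_MM] at hf ⊢
  have hd : f.degree = n := by rw [degree_eq_natDegree hf.1.ne_zero, hf.2]
  have h2 : r.degree < f.degree := by rw [hd]; exact hr
  refine ⟨hf.1.add_of_left h2, ?_⟩
  rw [natDegree_add_eq_left_of_degree_lt h2, hf.2]

lemma nextCoeff_MM {n : ℕ} (hn : 1 ≤ n) {f : F[X]} (hf : f ∈ MM F n) :
    f.nextCoeff = f.coeff (n - 1) := by
  rw [mem_MM] at hf
  rw [nextCoeff_of_natDegree_pos (by omega), hf.2]

lemma vanish1 (χ : MulChar F ℂ) (ψ : AddChar F ℂ) (hψ : ψ.IsPrimitive) (c : F) (hc : c ≠ 0)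
    (n : ℕ) (hn : 2 ≤ n) : LL (ww χ ψ c) n = 0 := by
  obtain ⟨t, ht⟩ : ∃ t, ψ (c * t) ≠ 1 := by
    by_contra! h
    exact hψ hc (by ext t; simpa using h t)
  have hdeg : ∀ t : F, (C t * X ^ (n - 1) : F[X]).degree < n := by
    intro t
    refine (degree_C_mul_X_pow_le _ _).trans_lt ?_
    exact_mod_cast (by omega : n - 1 < n)
  have key : LL (ww χ ψ c) n = ψ (c * t) * LL (ww χ ψ c) n := by
    conv_lhs => rw [LL]
    rw [LL, Finset.mul_sum]
    symm
    refine Finset.sum_bij' (fun f _ => f + C (-t) * X ^ (n - 1))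
      (fun f _ => f + C t * X ^ (n - 1)) ?_ ?_ ?_ ?_ ?_
    · intro f hf; exact MM_add hf (hdeg _)
    · intro f hf; exact MM_add hf (hdeg _)
    · intro f hf; simp
    · intro f hf; simp
    · intro f hf
      have hf2 := MM_add hf (hdeg (-t))
      simp only [ww]
      rw [nextCoeff_MM (by omega) hf2, nextCoeff_MM (by omega) hf, (mem_MM.1 hf).2,
        (mem_MM.1 hf2).2]
      have e0 : (f + C (-t) * X ^ (n - 1)).coeff 0 = f.coeff 0 := by
        simp [coeff_X_pow]; omega
      have e1 : (f + C (-t) * X ^ (n - 1)).coeff (n - 1) = f.coeff (n - 1) - t := by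
        simp [coeff_X_pow]; ring
      rw [e0, e1, show c * -(f.coeff (n - 1) - t) = c * t + c * (- f.coeff (n - 1)) by ring,
        AddChar.map_add_eq_mul]
      ring
  have : (1 - ψ (c * t)) * LL (ww χ ψ c) n = 0 := by linear_combination key
  rcases mul_eq_zero.1 this with h | h
  · exact absurd (by linear_combination -h) ht
  · exact h

lemma vanish2 (χ : MulChar F ℂ) (ψ : AddChar F ℂ) (c : F) (hχ : χ ≠ 1)
    (n : ℕ) (hn : 2 ≤ n) : LL (ww χ ψ c) n = 0 := by
  obtain ⟨t, ht⟩ : ∃ t : Fˣ, χ t ≠ 1 := by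
    by_contra! h
    exact hχ (by ext t; simpa using h t)
  have hdeg : ∀ t : F, (C t : F[X]).degree < n := by
    intro t
    refine degree_C_le.trans_lt ?_
    exact_mod_cast (by omega : 0 < n)
  have key : LL (ww χ ψ c) n = χ t * LL (ww χ ψ c) n := by
    conv_lhs => rw [LL]
    rw [LL, Finset.mul_sum]
    symm
    refine Finset.sum_bij' (fun f _ => f + C ((t - 1) * f.coeff 0))
      (fun f _ => f + C (((t⁻¹ : Fˣ) - 1) * f.coeff 0)) ?_ ?_ ?_ ?_ ?_
    · intro f hf; exact MM_add hf (hdeg _)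
    · intro f hf; exact MM_add hf (hdeg _)
    · intro f hf
      rw [add_assoc, ← C_add]
      simp only [coeff_add, coeff_C_zero]
      have : ((t : F) - 1) * f.coeff 0 +
        (((t⁻¹ : Fˣ) : F) - 1) * (f.coeff 0 + ((t : F) - 1) * f.coeff 0) = 0 := by
        have := t.inv_mul
        linear_combination f.coeff 0 * this
      rw [this]; simp
    · intro f hf
      rw [add_assoc, ← C_add]
      simp only [coeff_add, coeff_C_zero]
      have : (((t⁻¹ : Fˣ) : F) - 1) * f.coeff 0 +
        ((t : F) - 1) * (f.coeff 0 + (((t⁻¹ : Fˣ) : F) - 1) * f.coeff 0) = 0 := by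
        have := t.inv_mul
        linear_combination f.coeff 0 * this
      rw [this]; simp
    · intro f hf
      have hf2 := MM_add hf (hdeg ((t - 1) * f.coeff 0))
      simp only [ww]
      rw [nextCoeff_MM (by omega) hf2, nextCoeff_MM (by omega) hf, (mem_MM.1 hf).2,
        (mem_MM.1 hf2).2]
      have e0 : (f + C ((t - 1) * f.coeff 0)).coeff 0 = t * f.coeff 0 := by
        simp; ring
      have e1 : (f + C ((t - 1) * f.coeff 0)).coeff (n - 1) = f.coeff (n - 1) := by
        rw [coeff_add, coeff_C_of_ne_zero (by omega), add_zero]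
      rw [e0, e1, show (-1) ^ n * (t * f.coeff 0) = t * ((-1) ^ n * f.coeff 0) by ring,
        map_mul χ (t : F)]
      ring
  have : (1 - χ t) * LL (ww χ ψ c) n = 0 := by linear_combination key
  rcases mul_eq_zero.1 this with h | h
  · exact absurd (by linear_combination -h) ht
  · exact h

def AA (m : ℕ) (a : F) (χ : MulChar F ℂ) : ℂ :=
  ∑ P ∈ Irr F m with -P.nextCoeff = a, χ ((-1) ^ m * P.coeff 0)

lemma q_AA (m : ℕ) (a : F) (χ : MulChar F ℂ) (ψ : AddChar F ℂ) (hψ : ψ.IsPrimitive) :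
    (Fintype.card F : ℂ) * AA m a χ = ∑ c : F, ψ (-(c * a)) * ∑ P ∈ Irr F m, ww χ ψ c P := by
  simp only [Finset.mul_sum, AA]
  rw [Finset.sum_comm, Finset.sum_filter]
  refine Finset.sum_congr rfl fun P hP => ?_
  have h1 : ∀ c, ψ (-(c * a)) * ww χ ψ c P = χ ((-1) ^ m * P.coeff 0) *
      ψ (c * (-P.nextCoeff - a)) := by
    intro c
    rw [ww, (mem_Irr.1 hP).2.1, show c * (-P.nextCoeff - a) = -(c * a) + c * (-P.nextCoeff) by ring,
      AddChar.map_add_eq_mul]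
    ring
  simp only [h1]
  rw [← Finset.mul_sum, AddChar.sum_mulShift _ hψ]
  simp only [sub_eq_zero]
  split_ifs <;> simp [mul_comm]

def SS (m : ℕ) (a : F) (φ : F → ℂ) : ℂ := ∑ x : F with m * x = a, φ x

lemma lin_sum (m : ℕ) (a : F) (χ : MulChar F ℂ) (ψ : AddChar F ℂ) (hψ : ψ.IsPrimitive) :
    ∑ c : F, ψ (-(c * a)) * ∑ x : F, ww χ ψ c (X - C x) ^ m =
      (Fintype.card F : ℂ) * SS m a (fun x => χ x ^ m) := by
  simp only [SS, Finset.mul_sum, ww_lin]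
  rw [Finset.sum_comm, Finset.sum_filter]
  refine Finset.sum_congr rfl fun x _ => ?_
  have h1 : ∀ c, ψ (-(c * a)) * (χ x * ψ (c * x)) ^ m = χ x ^ m *
      ψ (c * (m * x - a)) := by
    intro c
    rw [show c * (m * x - a) = -(c * a) + m • (c * x) by rw [nsmul_eq_mul]; ring,
      AddChar.map_add_eq_mul, AddChar.map_nsmul_eq_pow]
    ring
  simp only [h1]
  rw [← Finset.mul_sum, AddChar.sum_mulShift _ hψ]
  simp only [sub_eq_zero]
  split_ifs <;> simp [mul_comm]

lemma gsum_zero (χ : MulChar F ℂ) (ψ : AddChar F ℂ) (hχ : χ ≠ 1) : 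
    ∑ x : F, χ x * ψ (0 * x) = 0 := by
  simp [MulChar.sum_eq_zero_of_ne_one hχ]

lemma gsum_unit (χ : MulChar F ℂ) (ψ : AddChar F ℂ) (c : F) (hc : c ≠ 0) : 
    ∑ x : F, χ x * ψ (c * x) = χ⁻¹ c * gaussSum χ ψ := by
  have := gaussSum_mulShift χ ψ (Units.mk0 c hc)
  rw [← this, gaussSum, Units.val_mk0, ← mul_assoc, ← MulChar.mul_apply, inv_mul_cancel,
    MulChar.one_apply (isUnit_iff_ne_zero.2 hc), one_mul]
  simp only [AddChar.mulShift_apply]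

lemma gsum_all (χ : MulChar F ℂ) (ψ : AddChar F ℂ) (hχ : χ ≠ 1) (c : F) :
    ∑ x : F, χ x * ψ (c * x) = χ⁻¹ c * gaussSum χ ψ := by
  by_cases hc : c = 0
  · subst hc
    rw [gsum_zero _ _ hχ, MulChar.map_zero, zero_mul]
  · exact gsum_unit χ ψ c hc

lemma main_nontriv (m : ℕ) (hm : m.Prime) (hm2 : 2 < m) (a : F) (χ : MulChar F ℂ)
    (ψ : AddChar F ℂ) (hψ : ψ.IsPrimitive) (hχ : χ ^ m ≠ 1) :
    (Fintype.card F : ℂ) * m * AA m a χ =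
      (χ ^ m) (-a) * gaussSum ((χ ^ m)⁻¹) ψ * gaussSum χ ψ ^ m
        - (Fintype.card F : ℂ) * SS m a (fun x => χ x ^ m) := by
  have hχ1 : χ ≠ 1 := by rintro rfl; simp at hχ
  have hodd : Even (m - 1) := by
    have := hm.odd_of_ne_two (by omega)
    exact (Nat.Odd.sub_odd this odd_one)
  have hS : ∀ c : F, (m : ℂ) * ∑ P ∈ Irr F m, ww χ ψ c P =
      (χ ^ m)⁻¹ c * gaussSum χ ψ ^ m - ∑ x : F, ww χ ψ c (X - C x) ^ m := by
    intro c
    have h1 := Lam_prime (ww χ ψ c) m hm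
    have h2 := Lam_of_vanish (ww_mulW χ ψ c) (vanish2 χ ψ c hχ1) (m - 1)
    rw [Nat.sub_add_cancel hm.one_le, hodd.neg_one_pow, one_mul, LL_one] at h2
    simp only [ww_lin, gsum_all χ ψ hχ1] at h2
    rw [h2, mul_pow] at h1
    have h3 : (χ ^ m)⁻¹ c = χ⁻¹ c ^ m := by
      rw [← inv_pow, MulChar.pow_apply' _ hm.ne_zero]
    rw [h3]
    linear_combination -h1
  have h1 := q_AA m a χ ψ hψ
  have h2 : (Fintype.card F : ℂ) * m * AA m a χ =
    ∑ c : F, ψ (-(c * a)) * ((m : ℂ) * ∑ P ∈ Irr F m, ww χ ψ c P) := by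
    rw [mul_right_comm, h1, mul_comm, Finset.mul_sum]
    exact Finset.sum_congr rfl fun c _ => by ring
  rw [h2]
  simp only [hS, mul_sub, Finset.sum_sub_distrib]
  rw [lin_sum m a χ ψ hψ]
  congr 1
  have h3 := gsum_all ((χ ^ m)⁻¹) ψ (by simpa using hχ) (-a)
  rw [inv_inv] at h3
  rw [← h3, Finset.sum_mul]
  refine Finset.sum_congr rfl fun c _ => ?_
  rw [show -a * c = -(c * a) by ring]
  ring

lemma main_triv (m : ℕ) (hm : m.Prime) (hm2 : 2 < m) (a : F)
    (ψ : AddChar F ℂ) (hψ : ψ.IsPrimitive) :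
    (Fintype.card F : ℂ) * m * AA m a 1 =
      (Fintype.card F : ℂ) ^ m - (if a = 0 then (Fintype.card F : ℂ) else 0)
        - (Fintype.card F : ℂ) * SS m a (fun x => (1 : MulChar F ℂ) x ^ m) := by
  have hodd : Even (m - 1) := by
    have := hm.odd_of_ne_two (by omega)
    exact (Nat.Odd.sub_odd this odd_one)
  have hmodd : Odd m := hm.odd_of_ne_two (by omega)
  have hsum1 : ∑ x : F, (1 : MulChar F ℂ) x = (Fintype.card F : ℂ) - 1 := by
    rw [MulChar.sum_one_eq_card_units, Fintype.card_eq_card_units_add_one (α := F)]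
    push_cast; ring
  have hS : ∀ c : F, (m : ℂ) * ∑ P ∈ Irr F m, ww 1 ψ c P =
      ((if c = 0 then (Fintype.card F : ℂ) ^ m else 0) - 1)
       - ∑ x : F, ww 1 ψ c (X - C x) ^ m := by
    intro c
    have h1 := Lam_prime (ww 1 ψ c) m hm
    by_cases hc : c = 0
    · subst hc
      have h2 := Lam_triv (F := F) m hm.one_le
      rw [Lam_prime _ m hm] at h2
      have h3 : ∑ P ∈ Irr F m, ww 1 ψ 0 P = ∑ P ∈ Irr F m, (1 : ℂ) := by
        refine Finset.sum_congr rfl fun P hP => ?_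
        rw [mem_Irr] at hP
        have h0 : P.coeff 0 ≠ 0 := by
          intro h
          have hd := degree_eq_one_of_irreducible_of_root hP.2.2 (x := 0) (by
            simpa [coeff_zero_eq_eval_zero] using h)
          have := natDegree_eq_of_degree_eq_some (n := 1) hd
          omega
        have h4 : IsUnit ((-1) ^ P.natDegree * P.coeff 0) := by
          rw [isUnit_iff_ne_zero]
          exact mul_ne_zero (pow_ne_zero _ (by simp)) h0
        rw [ww, zero_mul, AddChar.map_zero_eq_one, MulChar.one_apply h4, mul_one]
      have h5 : ∑ x : F, ww 1 ψ 0 (X - C x) ^ m = ∑ x : F, (1 : MulChar F ℂ) x := by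
        refine Finset.sum_congr rfl fun x _ => ?_
        rw [ww_lin, zero_mul, AddChar.map_zero_eq_one, mul_one, ← MulChar.pow_apply' _ hm.ne_zero,
          one_pow]
      rw [h3, h5, hsum1, if_pos rfl]
      simp at h2 ⊢
      linear_combination h2
    · have h2 := Lam_of_vanish (ww_mulW 1 ψ c) (vanish1 1 ψ hψ c hc) (m - 1)
      rw [Nat.sub_add_cancel hm.one_le, hodd.neg_one_pow, one_mul, LL_one] at h2
      simp only [ww_lin, gsum_unit 1 ψ c hc] at h2
      have h4 : ψ ≠ 1 := by
        have := hψ one_ne_zero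
        intro h
        apply this
        rw [h]; ext; simp
      rw [gaussSum_one_left h4, inv_one, MulChar.one_apply (isUnit_iff_ne_zero.2 hc), one_mul,
        hmodd.neg_one_pow] at h2
      rw [if_neg hc]
      linear_combination h2 - h1
  have h1 := q_AA m a 1 ψ hψ
  have h2 : (Fintype.card F : ℂ) * m * AA m a 1 =
    ∑ c : F, ψ (-(c * a)) * ((m : ℂ) * ∑ P ∈ Irr F m, ww 1 ψ c P) := by
    rw [mul_right_comm, h1, mul_comm, Finset.mul_sum]
    exact Finset.sum_congr rfl fun c _ => by ring
  rw [h2]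
  simp only [hS, mul_sub, Finset.sum_sub_distrib]
  rw [lin_sum m a 1 ψ hψ]
  congr 1
  have h3 := AddChar.sum_mulShift (-a) hψ
  simp only [mul_neg, neg_eq_zero] at h3
  simp only [mul_one, h3]
  simp
end Part2

section Part3

lemma int_arg (p A B a b : ℤ) (hp : p % 2 = 1) (hp0 : p ≠ 0) (hab : a ^ 2 + b ^ 2 = p)
    (hAB : A ^ 2 + B ^ 2 = p) (ha : a % 2 = 1) (hA : A % 2 = 1)
    (h1 : p ∣ A * a + B * b) (h2 : p ∣ B * a - A * b) :
    (A = a ∧ B = b) ∨ (A = -a ∧ B = -b) := by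
  obtain ⟨u, hu⟩ := h1
  obtain ⟨v, hv⟩ := h2
  have hA' : A = a * u - b * v := by
    apply mul_left_cancel₀ hp0
    linear_combination -A * hab + a * hu - b * hv
  have hB' : B = b * u + a * v := by
    apply mul_left_cancel₀ hp0
    linear_combination -B * hab + b * hu + a * hv
  have huv : u ^ 2 + v ^ 2 = 1 := by
    apply mul_left_cancel₀ hp0
    have : p = (a ^ 2 + b ^ 2) * (u ^ 2 + v ^ 2) := by rw [← hAB, hA', hB']; ring
    rw [hab] at this
    linarith
  have hb : b % 2 = 0 := by
    by_contra h
    have hb1 : b % 2 = 1 := by omega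
    have : (a ^ 2 + b ^ 2) % 2 = 0 := by
      simp [pow_two, Int.add_emod, Int.mul_emod, ha, hb1]
    omega
  have hu' : u = -1 ∨ u = 0 ∨ u = 1 := by
    have : -1 ≤ u := by nlinarith
    have : u ≤ 1 := by nlinarith
    omega
  rcases hu' with h | h | h
  · have hv0 : v = 0 := by
      have : v ^ 2 = 0 := by rw [h] at huv; linarith
      simpa using this
    right; rw [hA', hB', h, hv0]; constructor <;> ring
  · exfalso
    rw [h] at hA'
    have : A % 2 = 0 := by
      rw [hA']; simp [Int.sub_emod, Int.mul_emod, hb]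
    omega
  · have hv0 : v = 0 := by
      have : v ^ 2 = 0 := by rw [h] at huv; linarith
      simpa using this
    left; rw [hA', hB', h, hv0]; constructor <;> ring

lemma poly_sum_zero {F : Type*} [Field F] [Fintype F] (P : F[X])
    (h : P.natDegree < Fintype.card F - 1) : ∑ x : F, P.eval x = 0 := by
  simp only [eval_eq_sum_range]
  rw [Finset.sum_comm]
  refine Finset.sum_eq_zero fun i hi => ?_
  rw [← Finset.mul_sum, FiniteField.sum_pow_lt_card_sub_one F i, mul_zero]
  simp at hi
  omega

def iu : GaussianIntˣ := ⟨⟨0, 1⟩, ⟨0, -1⟩, by decide, by decide⟩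

lemma iu_prim : IsPrimitiveRoot (iu : GaussianInt) 4 := by
  rw [IsPrimitiveRoot.iff (by norm_num)]
  refine ⟨by decide, ?_⟩
  intro l h0 h4
  interval_cases l <;> decide

lemma jac (p f : ℕ) [Fact p.Prime]
    (hp : p = 4 * f + 1)
    (g : (ZMod p)ˣ) (hg : ∀ u : (ZMod p)ˣ, u ∈ Subgroup.zpowers g)
    (χ4 : MulChar (ZMod p) ℂ) (hχ4o : orderOf χ4 = 4) (hχ4g : χ4 (g : ZMod p) = Complex.I)
    (a4 b4 : ℤ) (hab : a4 ^ 2 + b4 ^ 2 = (p : ℤ))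
    (ha4 : a4 % 2 = 1)
    (hb4 : (b4 : ZMod p) = (a4 : ZMod p) * (g : ZMod p) ^ f) :
    jacobiSum χ4 χ4 = (a4 + Complex.I * b4) ∨ jacobiSum χ4 χ4 = -(a4 + Complex.I * b4) := by
  have hpp : p.Prime := Fact.out
  have hf : 0 < f := by
    rcases Nat.eq_zero_or_pos f with rfl | h
    · exfalso; rw [hp] at hpp; exact Nat.not_prime_one hpp
    · exact h
  have hcu : Fintype.card (ZMod p)ˣ = 4 * f := by
    rw [ZMod.card_units]; omega
  have hiu : iu ∈ rootsOfUnity (Fintype.card (ZMod p)ˣ) GaussianInt := by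
    rw [_root_.mem_rootsOfUnity, hcu, pow_mul]
    have : iu ^ 4 = 1 := by ext1; exact iu_prim.pow_eq_one
    rw [this, one_pow]
  let χ' : MulChar (ZMod p) GaussianInt := MulChar.ofRootOfUnity hiu hg
  have hχ'g : χ' g = iu := MulChar.ofRootOfUnity_spec hiu hg
  have hχC : χ'.ringHomComp GaussianInt.toComplex = χ4 := by
    rw [MulChar.eq_iff hg, hχ4g, MulChar.ringHomComp_apply, hχ'g]
    simp [iu, GaussianInt.toComplex_def]
  have hord : orderOf g = 4 * f := by
    rw [orderOf_eq_card_of_forall_mem_zpowers hg, Nat.card_eq_fintype_card, hcu]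
  set ω : ZMod p := (g : ZMod p) ^ f with hω
  have hω2 : ω * ω = ((-1 : ℤ) : ZMod p) := by
    have h1 : (ω * ω) * (ω * ω) = 1 := by
      have : g ^ (4 * f) = 1 := by rw [← hord]; exact pow_orderOf_eq_one g
      have h2 := congrArg (Units.val) this
      push_cast at h2
      rw [← h2, hω]; ring
    have h3 : ω * ω ≠ 1 := by
      intro h
      have : g ^ (2 * f) = 1 := by
        ext; push_cast; rw [← h, hω]; ring
      have := orderOf_dvd_of_pow_eq_one this
      rw [hord] at this
      have := Nat.le_of_dvd (by omega) this
      omega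
    have := mul_self_eq_one_iff.1 h1
    rcases this with h | h
    · exact absurd h h3
    · rw [h]; simp
  let φ : GaussianInt →+* ZMod p := Zsqrtd.lift ⟨ω, hω2⟩
  have hφ : ∀ z : GaussianInt, φ z = (z.re : ZMod p) + z.im * ω := fun z => rfl
  have hχφ : ∀ x : ZMod p, (χ'.ringHomComp φ) x = x ^ f := by
    intro x
    by_cases hx : x = 0
    · subst hx
      rw [MulChar.map_zero, zero_pow hf.ne']
    · obtain ⟨k, hk⟩ := Subgroup.mem_zpowers_iff.1 (hg (Units.mk0 x hx))
      obtain ⟨k, hk⟩ : ∃ k : ℕ, g ^ k = Units.mk0 x hx := by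
        have := (mem_powers_iff_mem_zpowers (x := g) (y := Units.mk0 x hx)).2 (hg _)
        exact this
      have hk2 := congrArg Units.val hk
      simp only [Units.val_pow_eq_pow_val, Units.val_mk0] at hk2
      rw [← hk2, map_pow, MulChar.ringHomComp_apply, hχ'g, hφ]
      simp only [iu]
      push_cast
      rw [hω]
      ring
  set J := jacobiSum χ' χ' with hJ
  have hJφ : φ J = 0 := by
    rw [hJ, ← jacobiSum_ringHomComp, jacobiSum]
    simp only [hχφ]
    have := poly_sum_zero ((X * (1 - X)) ^ f : (ZMod p)[X]) (by
      rw [ZMod.card]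
      have h1 : ((X * (1 - X)) ^ f : (ZMod p)[X]).natDegree ≤ f * 2 := by
        refine natDegree_pow_le_of_le f ?_
        compute_degree
      omega)
    simpa [mul_pow] using this
  have hJC : GaussianInt.toComplex J = jacobiSum χ4 χ4 := by
    rw [hJ, ← jacobiSum_ringHomComp, hχC]
  have hne : ∀ k, 0 < k → k < 4 → χ4 ^ k ≠ 1 := by
    intro k h0 h4 h
    have := Nat.le_of_dvd h0 (orderOf_dvd_of_pow_eq_one h)
    omega
  have hnorm : J.re ^ 2 + J.im ^ 2 = (p : ℤ) := by
    have h1 : χ4 ≠ 1 := by simpa using hne 1 (by norm_num) (by norm_num)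
    have h2 : χ4 * χ4 ≠ 1 := by simpa [pow_two] using hne 2 (by norm_num) (by norm_num)
    have h3 := jacobiSum_mul_jacobiSum_inv (F := ZMod p) (F' := ℂ) (by
      rw [ZMod.ringChar_zmod_n, ringChar.eq_zero]; exact hpp.ne_zero.symm) h1 h1 h2
    have h4 : jacobiSum χ4⁻¹ χ4⁻¹ = (starRingEnd ℂ) (jacobiSum χ4 χ4) := by
      simp only [jacobiSum, map_sum, map_mul]
      refine Finset.sum_congr rfl fun x _ => ?_
      rw [← MulChar.star_apply', ← MulChar.star_apply']
      rfl
    rw [h4, ← hJC, Complex.mul_conj, ZMod.card] at h3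
    have h5 : ((J.re ^ 2 + J.im ^ 2 : ℤ) : ℂ) = ((p : ℤ) : ℂ) := by
      push_cast
      rw [← h3, ← GaussianInt.intCast_real_norm, Zsqrtd.norm]
      push_cast
      ring
    exact_mod_cast h5
  have hodd : J.re % 2 = 1 := by
    have hχ'4 : χ' ^ 4 = 1 := by
      rw [MulChar.eq_iff hg, MulChar.pow_apply' _ (by norm_num), hχ'g, iu_prim.pow_eq_one,
        MulChar.one_apply g.isUnit]
    obtain ⟨z, _, hz⟩ := exists_jacobiSum_eq_neg_one_add (n := 4) (by norm_num) hχ'4 hχ'4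
      (by rw [ZMod.card, hp]; exact ⟨f, by omega⟩) iu_prim
    have h2 : ((iu : GaussianInt) - 1) ^ 2 = ⟨0, -2⟩ := by decide
    rw [← hJ, h2] at hz
    have := congrArg Zsqrtd.re hz
    simp at this
    omega
  have hrel : (J.re : ZMod p) + J.im * ω = 0 := by rw [← hφ, hJφ]
  push_cast at hω2
  have hd1 : (p : ℤ) ∣ J.re * a4 + J.im * b4 := by
    rw [← ZMod.intCast_zmod_eq_zero_iff_dvd]
    push_cast
    rw [hb4]
    linear_combination (a4 : ZMod p) * hrel
  have hd2 : (p : ℤ) ∣ J.im * a4 - J.re * b4 := by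
    rw [← ZMod.intCast_zmod_eq_zero_iff_dvd]
    push_cast
    rw [hb4]
    linear_combination (-ω * (a4 : ZMod p)) * hrel + (a4 : ZMod p) * J.im * hω2
  have := int_arg p J.re J.im a4 b4 (by omega) (by have := hpp.pos; omega) hab hnorm ha4 hodd hd1 hd2
  rw [← hJC, GaussianInt.toComplex_def]
  rcases this with ⟨h1, h2⟩ | ⟨h1, h2⟩
  · left; rw [h1, h2]; ring
  · right; rw [h1, h2]; push_cast; ring
end Part3

section Part4
variable {F : Type*} [Field F] [Fintype F]

lemma gauss_inv (χ : MulChar F ℂ) (hχ : χ ≠ 1) (ψ : AddChar F ℂ) (hψ : ψ.IsPrimitive) :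
    gaussSum χ ψ * gaussSum χ⁻¹ ψ = χ (-1) * (Fintype.card F : ℂ) := by
  have h1 := gaussSum_mul_gaussSum_eq_card hχ hψ
  have h2 := mul_gaussSum_inv_eq_gaussSum χ⁻¹ ψ
  have h3 : χ⁻¹ (-1) = χ (-1) := by
    rw [MulChar.inv_apply']; norm_num
  rw [← h1, ← h2, h3]
  ring

lemma chi_neg_one_sq (χ : MulChar F ℂ) : χ (-1) * χ (-1) = 1 := by
  rw [← map_mul]; simp

lemma gauss4 (χ : MulChar F ℂ) (hχ : orderOf χ = 4) (ψ : AddChar F ℂ) (hψ : ψ.IsPrimitive) :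
    gaussSum (χ ^ 2) ψ ^ 2 = (Fintype.card F : ℂ) ∧
    gaussSum χ ψ ^ 4 = (Fintype.card F : ℂ) * jacobiSum χ χ ^ 2 := by
  have h2 : χ ^ 2 ≠ 1 := by
    intro h
    have := Nat.le_of_dvd (by norm_num) (orderOf_dvd_of_pow_eq_one h)
    omega
  have h4 : χ ^ 4 = 1 := by rw [← hχ]; exact pow_orderOf_eq_one χ
  have hinv : (χ ^ 2)⁻¹ = χ ^ 2 := by
    rw [inv_eq_iff_mul_eq_one, ← pow_add]; exact h4
  have h1 : gaussSum (χ ^ 2) ψ ^ 2 = (Fintype.card F : ℂ) := by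
    have := gauss_inv (χ ^ 2) h2 ψ hψ
    rw [hinv, MulChar.pow_apply' _ (by norm_num), pow_two (χ (-1)), chi_neg_one_sq, one_mul] at this
    rw [pow_two, this]
  refine ⟨h1, ?_⟩
  have h3 := jacobiSum_mul_nontrivial (χ := χ) (φ := χ) (by rwa [← pow_two]) ψ
  rw [← pow_two] at h3
  rw [← h1]
  calc gaussSum χ ψ ^ 4 = (gaussSum χ ψ * gaussSum χ ψ) ^ 2 := by ring
    _ = _ := by rw [← h3]; ring

lemma sol_zero (m : ℕ) (hm : (m : F) = 0) (a : F) (φ : F → ℂ) :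
    SS m a φ = if a = 0 then ∑ x : F, φ x else 0 := by
  rw [SS, Finset.sum_filter, hm]
  split_ifs with h
  · subst h; simp
  · simp [Ne.symm h]

lemma sol_ne (m : ℕ) (hm : (m : F) ≠ 0) (a : F) (φ : F → ℂ) :
    SS m a φ = φ (a / m) := by
  have : (Finset.univ.filter fun x : F => m * x = a) = {a / m} := by
    ext x
    simp only [Finset.mem_filter, Finset.mem_univ, true_and, Finset.mem_singleton]
    rw [eq_div_iff hm, mul_comm]
  rw [SS, this, Finset.sum_singleton]

lemma ind4 (h : ℕ) (hh : h < 4) (n : ℕ) :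
    1 + (-1 : ℂ) ^ h * ((I ^ n) ^ 2 + (I ^ h * I ^ n + (starRingEnd ℂ) (I ^ h * I ^ n))) =
      if I ^ n = I ^ h then 4 else 0 := by
  have hn : I ^ n = I ^ (n % 4) := by
    conv_lhs => rw [← Nat.div_add_mod n 4, pow_add, pow_mul, I_pow_four, one_pow, one_mul]
  rw [hn]
  have h4 : n % 4 < 4 := Nat.mod_lt _ (by norm_num)
  generalize n % 4 = r at h4
  have e1 : (I : ℂ) ≠ 1 := fun h => by simpa using congrArg Complex.re h
  have e2 : (I : ℂ) ≠ -1 := fun h => by simpa using congrArg Complex.re h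
  have e3 : (-I : ℂ) ≠ 1 := fun h => by simpa using congrArg Complex.re h
  have e4 : (-I : ℂ) ≠ -1 := fun h => by simpa using congrArg Complex.re h
  have e5 : (I : ℂ) ≠ -I := fun h => by
    have := congrArg Complex.im h; norm_num at this
  have e6 : (-1 : ℂ) ≠ 1 := by norm_num
  have e7 : (1 : ℂ) ≠ -1 := by norm_num
  have e3' : I ^ 3 = -I := by rw [pow_succ, I_sq]; ring
  interval_cases h <;> interval_cases r <;>
    simp only [pow_zero, pow_one, I_sq, e3', map_mul, map_neg, map_one, conj_I, if_true,
      if_neg e1, if_neg e2, if_neg e3, if_neg e4, if_neg e5, if_neg e6, if_neg e7,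
      if_neg e1.symm, if_neg e2.symm, if_neg e3.symm, if_neg e4.symm, if_neg e5.symm] <;>
    ring_nf <;> simp only [I_sq, e3', I_pow_four] <;> norm_num

lemma primI : IsPrimitiveRoot I 4 := by
  rw [IsPrimitiveRoot.iff (by norm_num)]
  refine ⟨I_pow_four, ?_⟩
  intro l h0 h4 h
  interval_cases l
  · simpa using congrArg Complex.re h
  · rw [I_sq] at h; norm_num at h
  · rw [pow_succ, I_sq] at h
    simpa using congrArg Complex.re h

lemma count4 (p m h f : ℕ) [Fact p.Prime] (hm2 : 2 < m)
    (hp : p = 4 * f + 1)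
    (g : (ZMod p)ˣ) (hg : ∀ u : (ZMod p)ˣ, u ∈ Subgroup.zpowers g)
    (hh : h < 4)
    (χ4 : MulChar (ZMod p) ℂ) (hχ4g : χ4 (g : ZMod p) = Complex.I) (a : ZMod p) :
    4 * (PP (ZMod p) (g : ZMod p) m 4 h a : ℂ) = AA m a 1 + (-1) ^ h *
      (AA m a (χ4 ^ 2) + 2 * ((I ^ h * AA m a χ4).re : ℂ)) := by
  have hpp : p.Prime := Fact.out
  have hN : ∀ P : (ZMod p)[X], P.Monic ∧ P.natDegree = m ∧ Irreducible P →
      ∃ n : ℕ, (-1) ^ m * P.coeff 0 = (g : ZMod p) ^ n := by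
    rintro P ⟨h1, h2, h3⟩
    have h0 : P.coeff 0 ≠ 0 := by
      intro h
      have hd := degree_eq_one_of_irreducible_of_root h3 (x := 0) (by
        simpa [coeff_zero_eq_eval_zero] using h)
      have := natDegree_eq_of_degree_eq_some (n := 1) hd
      omega
    have h4 : (-1) ^ m * P.coeff 0 ≠ 0 := mul_ne_zero (pow_ne_zero _ (by simp)) h0
    obtain ⟨k, hk⟩ : ∃ k : ℕ, g ^ k = Units.mk0 _ h4 :=
      (mem_powers_iff_mem_zpowers (x := g) (y := Units.mk0 _ h4)).2 (hg _)
    refine ⟨k, ?_⟩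
    have hk2 := congrArg Units.val hk
    simp only [Units.val_pow_eq_pow_val, Units.val_mk0] at hk2
    exact hk2.symm
  have h1 : PP (ZMod p) (g : ZMod p) m 4 h a =
      (((Irr (ZMod p) m).filter (fun P => -P.nextCoeff = a)).filter
        (fun P => χ4 ((-1) ^ m * P.coeff 0) = I ^ h)).card := by
    rw [PP]
    refine Nat.subtype_card _ ?_
    intro P
    simp only [Finset.mem_filter, mem_Irr]
    constructor
    · rintro ⟨⟨⟨h1, h2, h3⟩, h4⟩, h5⟩
      have hM : P ∈ MM (ZMod p) m := mem_MM.2 ⟨h1, h2⟩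
      rw [nextCoeff_MM (by omega) hM] at h4
      refine ⟨h1, h2, h3, by rw [← h4, neg_neg], ?_⟩
      obtain ⟨n, hn⟩ := hN P ⟨h1, h2, h3⟩
      rw [hn, map_pow, hχ4g] at h5
      have hmod : n % 4 = h := by
        have hn4 : I ^ n = I ^ (n % 4) := by
          conv_lhs => rw [← Nat.div_add_mod n 4, pow_add, pow_mul, I_pow_four, one_pow, one_mul]
        rw [hn4] at h5
        exact primI.pow_inj (Nat.mod_lt _ (by norm_num)) hh h5
      refine ⟨n / 4, ?_⟩
      rw [hn]
      congr 1
      omega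
    · rintro ⟨h1, h2, h3, h4, k, h5⟩
      have hM : P ∈ MM (ZMod p) m := mem_MM.2 ⟨h1, h2⟩
      rw [nextCoeff_MM (by omega) hM]
      refine ⟨⟨⟨h1, h2, h3⟩, by rw [h4, neg_neg]⟩, ?_⟩
      rw [h5, map_pow, hχ4g, pow_add, pow_mul, I_pow_four, one_pow, mul_one]
  have h2 : ∀ z : ℂ, 2 * (z.re : ℂ) = z + (starRingEnd ℂ) z := by
    intro z; rw [Complex.add_conj]; push_cast; rfl
  rw [h1, h2, Finset.card_filter]
  push_cast
  simp only [AA, Finset.mul_sum, map_sum]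
  rw [← Finset.sum_add_distrib, ← Finset.sum_add_distrib, Finset.mul_sum, ← Finset.sum_add_distrib]
  refine Finset.sum_congr (by ext; simp) fun P hP => ?_
  simp only [Finset.mem_filter, mem_Irr] at hP
  obtain ⟨n, hn⟩ := hN P hP.1
  have := ind4 h hh n
  rw [hn, MulChar.pow_apply' _ (by norm_num), MulChar.one_apply ((g.isUnit).pow n), map_pow, hχ4g,
    this]
  split_ifs <;> simp
end Part4

section Part5

lemma final_eq (p m h f : ℕ) [Fact p.Prime] (hm2 : 2 < m)
    (hp : p = 4 * f + 1)
    (g : (ZMod p)ˣ) (hg : ∀ u : (ZMod p)ˣ, u ∈ Subgroup.zpowers g)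
    (hh : h < 4)
    (χ4 : MulChar (ZMod p) ℂ) (hχ4g : χ4 (g : ZMod p) = Complex.I) (a : ZMod p)
    (E1 E2 E4 : ℂ) (h1 : (p : ℂ) * m * AA m a 1 = p * E1)
    (h2 : (p : ℂ) * m * AA m a (χ4 ^ 2) = p * E2) (h4 : (p : ℂ) * m * AA m a χ4 = p * E4) :
    (PP (ZMod p) (g : ZMod p) m 4 h a : ℂ) = (1 / (4 * (m : ℂ))) *
      (E1 + (-1) ^ h * (E2 + 2 * ((I ^ h * E4).re : ℂ))) := by
  have hm0 : (m : ℂ) ≠ 0 := by exact_mod_cast (by omega : m ≠ 0)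
  have hp0 : (p : ℂ) ≠ 0 := by exact_mod_cast (by omega : p ≠ 0)
  have h1 : m * AA m a 1 = E1 := mul_left_cancel₀ hp0 (by rw [← h1]; ring)
  have h2 : m * AA m a (χ4 ^ 2) = E2 := mul_left_cancel₀ hp0 (by rw [← h2]; ring)
  have h4 : m * AA m a χ4 = E4 := mul_left_cancel₀ hp0 (by rw [← h4]; ring)
  have hc := count4 p m h f hm2 hp g hg hh χ4 hχ4g a
  have hre : ((I ^ h * E4).re : ℂ) = m * ((I ^ h * AA m a χ4).re : ℂ) := by
    rw [← h4, show I ^ h * (m * AA m a χ4) = ((m : ℝ) : ℂ) * (I ^ h * AA m a χ4) by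
      push_cast; ring, re_ofReal_mul]
    push_cast; rfl
  rw [hre, ← h1, ← h2]
  field_simp
  linear_combination hc

lemma re_pow_mul (p k : ℕ) (z : ℂ) : (((p : ℂ) ^ k * z).re : ℂ) = (p : ℂ) ^ k * (z.re : ℂ) := by
  rw [show (p : ℂ) ^ k = (((p : ℝ) ^ k : ℝ) : ℂ) by push_cast; rfl, re_ofReal_mul]
  push_cast; rfl

lemma quad_eq (p f : ℕ) [Fact p.Prime]
    (hp : p = 4 * f + 1)
    (g : (ZMod p)ˣ) (hg : ∀ u : (ZMod p)ˣ, u ∈ Subgroup.zpowers g)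
    (χ4 : MulChar (ZMod p) ℂ) (hχ4g : χ4 (g : ZMod p) = Complex.I) (x : ZMod p) :
    (quadraticChar (ZMod p) x : ℂ) = χ4 x ^ 2 := by
  have hq : quadraticChar (ZMod p) (g : ZMod p) = -1 := by
    rcases quadraticChar_dichotomy (F := ZMod p) (a := g) g.ne_zero with h | h
    · exfalso
      have hne := quadraticChar_ne_one (F := ZMod p) (by rw [ZMod.ringChar_zmod_n]; omega)
      apply hne
      rw [MulChar.eq_iff hg, h, MulChar.one_apply g.isUnit]
    · exact h
  have : (quadraticChar (ZMod p)).ringHomComp (Int.castRingHom ℂ) = χ4 ^ 2 := by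
    rw [MulChar.eq_iff hg, MulChar.ringHomComp_apply, hq, MulChar.pow_apply' _ (by norm_num), hχ4g,
      I_sq]
    simp
  have := congrArg (fun χ : MulChar (ZMod p) ℂ => χ x) this
  simp only [MulChar.ringHomComp_apply] at this
  rw [MulChar.pow_apply' _ (by norm_num)] at this
  simpa using this

lemma chi_neg_one (p f : ℕ) [Fact p.Prime]
    (hp : p = 4 * f + 1)
    (g : (ZMod p)ˣ) (hg : ∀ u : (ZMod p)ˣ, u ∈ Subgroup.zpowers g)
    (χ4 : MulChar (ZMod p) ℂ) (hχ4g : χ4 (g : ZMod p) = Complex.I) :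
    χ4 (-1) = (-1) ^ f := by
  have hpp : p.Prime := Fact.out
  have hf : 0 < f := by
    have := hpp.one_lt
    omega
  have hord : orderOf g = 4 * f := by
    rw [orderOf_eq_card_of_forall_mem_zpowers hg, Nat.card_eq_fintype_card, ZMod.card_units]
    omega
  have h1 : ((g : ZMod p) ^ (2 * f)) * ((g : ZMod p) ^ (2 * f)) = 1 := by
    have : g ^ (4 * f) = 1 := by rw [← hord]; exact pow_orderOf_eq_one g
    have h2 := congrArg (Units.val) this
    push_cast at h2
    rw [← h2]; ring
  have h3 : (g : ZMod p) ^ (2 * f) ≠ 1 := by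
    intro h
    have : g ^ (2 * f) = 1 := by
      ext; push_cast; exact h
    have := orderOf_dvd_of_pow_eq_one this
    rw [hord] at this
    have := Nat.le_of_dvd (by omega) this
    omega
  rcases mul_self_eq_one_iff.1 h1 with h | h
  · exact absurd h h3
  · rw [← h, map_pow, hχ4g, pow_mul, I_sq]

lemma chi_pow_four (p : ℕ) [Fact p.Prime] (χ4 : MulChar (ZMod p) ℂ) (hχ4o : orderOf χ4 = 4)
    (x : ZMod p) (hx : x ≠ 0) : χ4 x ^ 4 = 1 := by
  rw [← MulChar.pow_apply' _ (by norm_num), ← hχ4o, pow_orderOf_eq_one,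
    MulChar.one_apply (isUnit_iff_ne_zero.2 hx)]
end Part5

/-- The values of `P_m(a,4,h)` for a prime `m > 2`, `s = 4` and `q = p ≡ 1 (mod 4)`,
in terms of `π_4 = (−1)^f·(a_4 + i·b_4)`, the quadratic character `ρ` of `F_p`, the
quartic character `χ_4`, and `R_m`. -/
theorem stmt13 (p m h f : ℕ) [Fact p.Prime] (hm : m.Prime) (hm2 : 2 < m)
    (hp : p = 4 * f + 1)
    (g : (ZMod p)ˣ) (hg : ∀ u : (ZMod p)ˣ, u ∈ Subgroup.zpowers g)
    (hh : h < 4)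
    (χ4 : MulChar (ZMod p) ℂ) (hχ4o : orderOf χ4 = 4) (hχ4g : χ4 (g : ZMod p) = Complex.I)
    (a4 b4 : ℤ) (hab : a4 ^ 2 + b4 ^ 2 = (p : ℤ))
    (ha4 : a4 ≡ -legendreSym p 2 [ZMOD 4])
    (hb4 : (b4 : ZMod p) = (a4 : ZMod p) * (g : ZMod p) ^ ((p - 1) / 4))
    (π4 : ℂ) (hπ4 : π4 = (-1 : ℂ) ^ f * ((a4 : ℂ) + Complex.I * (b4 : ℂ)))
    (a : ZMod p) :
    (a = 0 → m = p →
      (PP (ZMod p) (g : ZMod p) m 4 h a : ℂ) = (1 / 4) * ((p : ℂ) ^ (p - 2) - 1)) ∧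
    (a = 0 → m ≠ p →
      (PP (ZMod p) (g : ZMod p) m 4 h a : ℂ) =
        (1 / (4 * (m : ℂ))) * ((p : ℂ) ^ (m - 1) - 1)) ∧
    (a ≠ 0 → m = p →
      (PP (ZMod p) (g : ZMod p) m 4 h a : ℂ) =
        (1 / (4 * (p : ℂ))) * ((p : ℂ) ^ (p - 1) +
          (-1 : ℂ) ^ h * ((p : ℂ) ^ ((p - 1) / 2) * (quadraticChar (ZMod p) a : ℂ) +
            2 * (p : ℂ) ^ ((p - 1) / 4) *
              ((π4 ^ ((p - 1) / 2) * χ4 a * Complex.I ^ h).re : ℂ)))) ∧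
    (a ≠ 0 → m ≠ p → m % 4 = 1 →
      (PP (ZMod p) (g : ZMod p) m 4 h a : ℂ) =
        (1 / (4 * (m : ℂ))) * ((p : ℂ) ^ (m - 1) - 1 +
          (-1 : ℂ) ^ h * ((quadraticChar (ZMod p) a : ℂ) *
              ((p : ℂ) ^ ((m - 1) / 2) - (quadraticChar (ZMod p) (m : ZMod p) : ℂ)) +
            2 * (((p : ℂ) ^ ((m - 1) / 4) * π4 ^ ((m - 1) / 2) * χ4 a * Complex.I ^ h -
              χ4 ((m : ZMod p) ^ 3 * a) * Complex.I ^ h).re : ℂ)))) ∧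
    (a ≠ 0 → m ≠ p → m % 4 = 3 →
      (PP (ZMod p) (g : ZMod p) m 4 h a : ℂ) =
        (1 / (4 * (m : ℂ))) * ((p : ℂ) ^ (m - 1) - 1 +
          (-1 : ℂ) ^ h * ((quadraticChar (ZMod p) a : ℂ) *
              ((p : ℂ) ^ ((m - 1) / 2) - (quadraticChar (ZMod p) (m : ZMod p) : ℂ)) +
            2 * (((-1 : ℂ) ^ f * (p : ℂ) ^ ((m - 3) / 4) * π4 ^ ((m + 1) / 2) * χ4⁻¹ a *
              Complex.I ^ h -
              χ4 ((m : ZMod p) ^ 3 * a) * Complex.I ^ (3 * h)).re : ℂ)))) := by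
  have hpp : p.Prime := Fact.out
  have hf : 0 < f := by
    have := hpp.one_lt
    omega
  have hp0 : (p : ℂ) ≠ 0 := by exact_mod_cast hpp.ne_zero
  have hdiv : (p - 1) / 4 = f := by omega
  rw [hdiv] at hb4
  have ha2 : a4 % 2 = 1 := by
    have h2 : ((2 : ℤ) : ZMod p) ≠ 0 := by
      rw [Ne, ZMod.intCast_zmod_eq_zero_iff_dvd]
      intro h
      have := Int.le_of_dvd (by norm_num) h
      omega
    rcases legendreSym.eq_one_or_neg_one p h2 with h | h <;> rw [h] at ha4 <;>
      have := ha4.eq <;> omega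
  have hJ : jacobiSum χ4 χ4 ^ 2 = π4 ^ 2 := by
    have e : π4 ^ 2 = (a4 + I * b4) ^ 2 := by
      rw [hπ4, mul_pow, ← pow_mul, mul_comm f 2, pow_mul]; norm_num
    rw [e]
    rcases jac p f hp g hg χ4 hχ4o hχ4g a4 b4 hab ha2 hb4 with h | h <;> rw [h]
    ring
  set ψ : AddChar (ZMod p) ℂ := ZMod.stdAddChar with hψdef
  have hψ : ψ.IsPrimitive := ZMod.isPrimitive_stdAddChar p
  obtain ⟨hG2, hG4⟩ := gauss4 χ4 hχ4o ψ hψ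
  rw [hJ, ZMod.card] at hG4
  rw [ZMod.card] at hG2
  set G := gaussSum χ4 ψ with hG
  set G2 := gaussSum (χ4 ^ 2) ψ with hG2d
  have hne : ∀ k, ¬ (4 ∣ k) → χ4 ^ k ≠ 1 := by
    intro k hk h
    have := orderOf_dvd_of_pow_eq_one h
    rw [hχ4o] at this
    exact hk this
  have hmodd : m % 2 = 1 := Nat.odd_iff.1 (hm.odd_of_ne_two (by omega))
  have h1ne : χ4 ≠ 1 := by simpa using hne 1 (by norm_num)
  have hmne : χ4 ^ m ≠ 1 := hne m (by omega)
  have hmne2 : (χ4 ^ 2) ^ m ≠ 1 := by rw [← pow_mul]; exact hne _ (by omega)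
  have hχ4p : χ4 ^ 4 = 1 := by rw [← hχ4o]; exact pow_orderOf_eq_one χ4
  have T1 := main_triv m hm hm2 a ψ hψ
  have T2 := main_nontriv m hm hm2 a (χ4 ^ 2) ψ hψ hmne2
  have T4 := main_nontriv m hm hm2 a χ4 ψ hψ hmne
  have hρm : (χ4 ^ 2) ^ m = χ4 ^ 2 := by
    obtain ⟨k, hk⟩ : ∃ k, m = 2 * k + 1 := ⟨m / 2, by omega⟩
    rw [← pow_mul, hk, show 2 * (2 * k + 1) = 4 * k + 2 by ring, pow_add, pow_mul, hχ4p, one_pow,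
      one_mul]
  have hρinv : (χ4 ^ 2)⁻¹ = χ4 ^ 2 := by
    rw [inv_eq_iff_mul_eq_one, ← pow_add]; exact hχ4p
  have hρ2 : ∀ x, (χ4 ^ 2) x = χ4 x ^ 2 := fun x => MulChar.pow_apply' _ (by norm_num) x
  have hneg : χ4 (-a) = (-1) ^ f * χ4 a := by
    rw [neg_eq_neg_one_mul, map_mul, chi_neg_one p f hp g hg χ4 hχ4g]
  have hsgn : ((-1 : ℂ) ^ f) * (-1) ^ f = 1 := by
    rw [← mul_pow]; norm_num
  rw [hρm, hρinv, ← hG2d, ZMod.card, hρ2, hneg] at T2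
  rw [ZMod.card] at T1 T4
  have hquad := quad_eq p f hp g hg χ4 hχ4g
  have hGG : G * gaussSum χ4⁻¹ ψ = (-1) ^ f * p := by
    rw [hG, gauss_inv χ4 h1ne ψ hψ, ZMod.card, chi_neg_one p f hp g hg χ4 hχ4g]
  have hp1 : (p : ℂ) ^ m = p * (p : ℂ) ^ (m - 1) := by
    rw [← pow_succ', Nat.sub_add_cancel hm.one_le]
  have T2' : (p : ℂ) * m * AA m a (χ4 ^ 2) = p * (χ4 a ^ 2 * (p : ℂ) ^ ((m - 1) / 2)) -
      (p : ℂ) * SS m a (fun x => (χ4 ^ 2) x ^ m) := by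
    rw [T2]
    congr 1
    obtain ⟨k, hk⟩ : ∃ k, m = 2 * k + 1 := ⟨m / 2, by omega⟩
    have : (m - 1) / 2 = k := by omega
    rw [this, hk]
    calc ((-1) ^ f * χ4 a) ^ 2 * G2 * G2 ^ (2 * k + 1)
        = ((-1) ^ f * (-1) ^ f) * χ4 a ^ 2 * (G2 ^ 2) * (G2 ^ 2) ^ k := by ring
      _ = _ := by rw [hsgn, hG2]; ring
  have T4a : m % 4 = 1 → (p : ℂ) * m * AA m a χ4 =
      p * ((p : ℂ) ^ ((m - 1) / 4) * π4 ^ ((m - 1) / 2) * χ4 a) -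
      (p : ℂ) * SS m a (fun x => χ4 x ^ m) := by
    intro h4
    rw [T4]
    congr 1
    obtain ⟨k, hk⟩ : ∃ k, m = 4 * k + 1 := ⟨m / 4, by omega⟩
    have e1 : (m - 1) / 4 = k := by omega
    have e2 : (m - 1) / 2 = 2 * k := by omega
    have e3 : χ4 ^ m = χ4 := by rw [hk, pow_add, pow_mul, hχ4p, one_pow, one_mul, pow_one]
    rw [e1, e2, e3, hk, hneg]
    calc ((-1) ^ f * χ4 a) * gaussSum χ4⁻¹ ψ * G ^ (4 * k + 1)
        = (-1) ^ f * χ4 a * (G * gaussSum χ4⁻¹ ψ) * (G ^ 4) ^ k := by ring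
      _ = ((-1) ^ f * (-1) ^ f) * χ4 a * p * (p * π4 ^ 2) ^ k := by rw [hGG, hG4]; ring
      _ = _ := by rw [hsgn, mul_pow, ← pow_mul]; ring
  have T4b : m % 4 = 3 → (p : ℂ) * m * AA m a χ4 =
      p * ((-1) ^ f * (p : ℂ) ^ ((m - 3) / 4) * π4 ^ ((m + 1) / 2) * χ4⁻¹ a) -
      (p : ℂ) * SS m a (fun x => χ4 x ^ m) := by
    intro h4
    rw [T4]
    congr 1
    obtain ⟨k, hk⟩ : ∃ k, m = 4 * k + 3 := ⟨m / 4, by omega⟩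
    have e1 : (m - 3) / 4 = k := by omega
    have e2 : (m + 1) / 2 = 2 * (k + 1) := by omega
    have e4 : (χ4 ^ m)⁻¹ = χ4 := by
      rw [inv_eq_iff_mul_eq_one, ← pow_succ, hk, show 4 * k + 3 + 1 = 4 * (k + 1) by ring, pow_mul,
        hχ4p, one_pow]
    have e3 : χ4 ^ m = χ4⁻¹ := by rw [← e4, inv_inv, e4]
    have e5 : χ4⁻¹ (-a) = (-1) ^ f * χ4⁻¹ a := by
      rw [← MulChar.star_apply', hneg, ← MulChar.star_apply']
      simp
    rw [e1, e2, e4, e3, hk, e5]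
    calc ((-1) ^ f * χ4⁻¹ a) * G * G ^ (4 * k + 3)
        = (-1) ^ f * χ4⁻¹ a * (G ^ 4) ^ (k + 1) := by ring
      _ = _ := by rw [hG4, mul_pow, ← pow_mul]; ring
  have hfin := final_eq p m h f hm2 hp g hg hh χ4 hχ4g a
  have hρne : χ4 ^ 2 ≠ 1 := hne 2 (by norm_num)
  have hsumtriv : ∑ x : ZMod p, (1 : MulChar (ZMod p) ℂ) x ^ m = (p : ℂ) - 1 := by
    have : ∑ x : ZMod p, (1 : MulChar (ZMod p) ℂ) x ^ m = ∑ x : ZMod p, (1 : MulChar (ZMod p) ℂ) x :=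
      Finset.sum_congr rfl fun x _ => by rw [← MulChar.pow_apply' _ hm.ne_zero, one_pow]
    rw [this, MulChar.sum_one_eq_card_units, ZMod.card_units, Nat.cast_sub hpp.one_le]
    simp
  have hsum : ∀ χ : MulChar (ZMod p) ℂ, χ ^ m ≠ 1 → ∑ x : ZMod p, χ x ^ m = 0 := by
    intro χ hχ
    rw [← MulChar.sum_eq_zero_of_ne_one hχ]
    exact Finset.sum_congr rfl fun x _ => by rw [MulChar.pow_apply' _ hm.ne_zero]
  have hcast : m ≠ p → (m : ZMod p) ≠ 0 := by
    intro hmp h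
    rw [ZMod.natCast_eq_zero_iff] at h
    exact hmp ((Nat.prime_dvd_prime_iff_eq hpp hm).1 h).symm
  have hdiv4 : a ≠ 0 → m ≠ p → χ4 (a / m) ^ 4 = 1 ∧
      (χ4 ^ 2) (a / m) ^ m = χ4 a ^ 2 * χ4 m ^ 2 ∧
      (1 : MulChar (ZMod p) ℂ) (a / m) ^ m = 1 ∧ χ4 (a / m) = χ4 ((m : ZMod p) ^ 3 * a) := by
    intro ha hmp
    have hm0 := hcast hmp
    have hm4 := chi_pow_four p χ4 hχ4o m hm0
    have hd0 : a / m ≠ 0 := div_ne_zero ha hm0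
    have hc : χ4 (a / m) = χ4 ((m : ZMod p) ^ 3 * a) := by
      have e : (m : ZMod p) ^ 3 * a = (m : ZMod p) ^ 4 * (a / m) := by field_simp
      rw [e, map_mul, map_pow, hm4, one_mul]
    refine ⟨chi_pow_four p χ4 hχ4o _ hd0, ?_, ?_, hc⟩
    · rw [← MulChar.pow_apply' _ hm.ne_zero, hρm, hρ2, hc, map_mul, map_pow]
      linear_combination χ4 a ^ 2 * χ4 m ^ 2 * hm4
    · rw [MulChar.one_apply (isUnit_iff_ne_zero.2 hd0), one_pow]
  refine ⟨?_, ?_, ?_, ?_, ?_⟩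
  · intro ha hmp
    have hm0 : (m : ZMod p) = 0 := by rw [hmp]; simp
    have T4c := T4a (by omega)
    rw [sol_zero m hm0, if_pos ha] at T1 T2' T4c
    rw [hsumtriv, if_pos ha] at T1
    rw [hsum _ hmne2, ha, MulChar.map_zero] at T2'
    rw [hsum _ hmne, ha, MulChar.map_zero] at T4c
    rw [ha] at T1 hfin ⊢
    have := hfin ((p : ℂ) ^ (m - 1) - p) 0 0 (by rw [T1, hp1]; ring) (by rw [T2']; ring)
      (by rw [T4c]; ring)
    rw [this, hmp]
    have e : (p : ℂ) ^ (p - 1) = p * p ^ (p - 2) := by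
      rw [← pow_succ']; congr 1; omega
    rw [e]
    field_simp
    simp
  · intro ha hmp
    rw [sol_ne m (hcast hmp), ha, zero_div, MulChar.map_zero] at T1 T2'
    rw [zero_pow hm.ne_zero] at T1
    rw [MulChar.map_zero, zero_pow hm.ne_zero] at T2'
    rw [if_pos rfl] at T1
    have T4c : (p : ℂ) * m * AA m a χ4 = p * 0 := by
      rw [T4, sol_ne m (hcast hmp), ha, neg_zero, zero_div, MulChar.map_zero, MulChar.map_zero,
        zero_pow hm.ne_zero]
      ring
    rw [ha] at T4c hfin ⊢
    have := hfin ((p : ℂ) ^ (m - 1) - 1) 0 0 (by rw [T1, hp1]; ring) (by rw [T2']; ring) T4c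
    rw [this]
    simp
  · intro ha hmp
    have hm0 : (m : ZMod p) = 0 := by rw [hmp]; simp
    have T4c := T4a (by omega)
    rw [sol_zero m hm0, if_neg ha] at T1 T2' T4c
    rw [if_neg ha] at T1
    have := hfin ((p : ℂ) ^ (m - 1)) (χ4 a ^ 2 * (p : ℂ) ^ ((m - 1) / 2))
      ((p : ℂ) ^ ((m - 1) / 4) * π4 ^ ((m - 1) / 2) * χ4 a) (by rw [T1, hp1]; ring)
      (by rw [T2']; ring) (by rw [T4c]; ring)
    rw [this, hquad, show I ^ h * ((p : ℂ) ^ ((m - 1) / 4) * π4 ^ ((m - 1) / 2) * χ4 a) =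
      (p : ℂ) ^ ((m - 1) / 4) * (π4 ^ ((m - 1) / 2) * χ4 a * I ^ h) by ring, re_pow_mul, hmp]
    ring
  · intro ha hmp h4
    obtain ⟨hd, hd2, hd1, hc⟩ := hdiv4 ha hmp
    obtain ⟨k, hk⟩ : ∃ k, m = 4 * k + 1 := ⟨m / 4, by omega⟩
    have hz : χ4 (a / m) ^ m = χ4 ((m : ZMod p) ^ 3 * a) := by
      rw [← hc]
      generalize χ4 (a / m) = z at hd
      rw [hk, pow_add, pow_mul, hd, one_pow, one_mul, pow_one]
    have T4c := T4a h4
    rw [sol_ne m (hcast hmp)] at T1 T2' T4c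
    rw [if_neg ha, hd1] at T1
    rw [hd2] at T2'
    rw [hz] at T4c
    have := hfin ((p : ℂ) ^ (m - 1) - 1) (χ4 a ^ 2 * ((p : ℂ) ^ ((m - 1) / 2) - χ4 m ^ 2))
      ((p : ℂ) ^ ((m - 1) / 4) * π4 ^ ((m - 1) / 2) * χ4 a - χ4 ((m : ZMod p) ^ 3 * a))
      (by rw [T1, hp1]; ring)
      (by rw [T2']; ring) (by rw [T4c]; ring)
    rw [this, hquad, hquad, mul_comm (I ^ h), sub_mul]
  · intro ha hmp h4
    obtain ⟨hd, hd2, hd1, hc⟩ := hdiv4 ha hmp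
    obtain ⟨k, hk⟩ : ∃ k, m = 4 * k + 3 := ⟨m / 4, by omega⟩
    have hz : χ4 (a / m) ^ m = χ4⁻¹ ((m : ZMod p) ^ 3 * a) := by
      have e : χ4⁻¹ = χ4 ^ 3 := by
        rw [inv_eq_iff_mul_eq_one, ← pow_succ']; exact hχ4p
      rw [e, MulChar.pow_apply' _ (by norm_num), ← hc]
      generalize χ4 (a / m) = z at hd
      rw [hk, pow_add, pow_mul, hd, one_pow, one_mul]
    have T4c := T4b h4
    rw [sol_ne m (hcast hmp)] at T1 T2' T4c
    rw [if_neg ha, hd1] at T1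
    rw [hd2] at T2'
    rw [hz] at T4c
    have := hfin ((p : ℂ) ^ (m - 1) - 1) (χ4 a ^ 2 * ((p : ℂ) ^ ((m - 1) / 2) - χ4 m ^ 2))
      ((-1) ^ f * (p : ℂ) ^ ((m - 3) / 4) * π4 ^ ((m + 1) / 2) * χ4⁻¹ a -
        χ4⁻¹ ((m : ZMod p) ^ 3 * a))
      (by rw [T1, hp1]; ring)
      (by rw [T2']; ring) (by rw [T4c]; ring)
    have hre : (χ4⁻¹ ((m : ZMod p) ^ 3 * a) * I ^ h).re =
        (χ4 ((m : ZMod p) ^ 3 * a) * I ^ (3 * h)).re := by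
      rw [← MulChar.star_apply', ← Complex.conj_re]
      congr 1
      rw [map_mul, map_pow, Complex.conj_I, pow_mul, I_pow_three]
      simp
    rw [this, hquad, hquad, mul_comm (I ^ h), sub_mul, sub_re, sub_re, hre]

end
end

section
/- Assume s = 3, q = p, p ∤ (m/t), d | h, and a = 0. Then: if (d,l) = (1,1) then N_t = (p^{t−1} − 1)/3; if (d,l) = (1,3) then N_t = (1/3)·( p^{t−1} − 1 − 2·(−1)^t·p^{(t−3)/3}·(p−1)·Re(π_3^{t/3}·ζ^{2·i_0}) ); if (d,l) = (3,1) then N_t = p^{t−1} − 1. Here the possible values of (d,l) are: (1,1) when 3 ∤ m/t and 3 ∤ t, (1,3) when 3 ∤ m/t and 3 | t, (3,1) when 3 | m/t. -/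
noncomputable section

open Complex Polynomial Classical
/-- `N_t(a,s,h)`: the number of elements `x` of the subfield `F_{q^t}` of `K = F_{q^m}`
with `Tr_{K/F}(x) = a` and `N_{K/F}(x) ∈ g^h·⟨g^s⟩`. -/
def NN (F K : Type*) [Field F] [Fintype F] [Field K] [Fintype K] [Algebra F K]
    (g : F) (s h t : ℕ) (a : F) : ℕ :=
  Nat.card {x : K // x ^ (Fintype.card F) ^ t = x ∧ Algebra.trace F K x = a ∧
    ∃ k : ℕ, Algebra.norm F x = g ^ (h + s * k)}


section HD

set_option linter.unusedSectionVars false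

variable {F : Type*} [Field F] [Fintype F]

lemma hd_finite_monic (n : ℕ) : {f : F[X] | f.Monic ∧ f.natDegree = n}.Finite := by
  have e : {f : F[X] // f.Monic ∧ f.natDegree = n} ≃ (Fin n → F) :=
    (monicEquivDegreeLT n).trans (degreeLTEquiv F n).toEquiv
  exact Set.finite_coe_iff.mp (Finite.of_equiv _ e.symm)

/-- monic polynomials of degree n -/
def hdMon (F : Type*) [Field F] [Fintype F] (n : ℕ) : Finset F[X] :=
  (hd_finite_monic (F := F) n).toFinset

lemma mem_hdMon {n : ℕ} {f : F[X]} : f ∈ hdMon F n ↔ f.Monic ∧ f.natDegree = n := by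
  simp [hdMon]

/-- monic irreducible polynomials of degree at most N -/
def hdIrr (F : Type*) [Field F] [Fintype F] (N : ℕ) : Finset F[X] :=
  ((Finset.range (N + 1)).biUnion (fun n => hdMon F n)).filter Irreducible

lemma mem_hdIrr {N : ℕ} {f : F[X]} :
    f ∈ hdIrr F N ↔ f.Monic ∧ f.natDegree ≤ N ∧ Irreducible f := by
  simp [hdIrr, mem_hdMon]
  tauto

/-- the multiplicative function -/
def hdL (χ : MulChar F ℂ) (ψ : AddChar F ℂ) (f : F[X]) : ℂ :=
  χ ((-1) ^ f.natDegree * f.coeff 0) * ψ (-f.nextCoeff)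

lemma hdL_mul (χ : MulChar F ℂ) (ψ : AddChar F ℂ) {f g : F[X]} (hf : f.Monic) (hg : g.Monic) :
    hdL χ ψ (f * g) = hdL χ ψ f * hdL χ ψ g := by
  unfold hdL
  rw [hf.natDegree_mul hg, hf.nextCoeff_mul hg, mul_coeff_zero, neg_add, AddChar.map_add_eq_mul]
  have : ((-1 : F)) ^ (f.natDegree + g.natDegree) * (f.coeff 0 * g.coeff 0)
    = ((-1) ^ f.natDegree * f.coeff 0) * ((-1) ^ g.natDegree * g.coeff 0) := by ring
  rw [this, map_mul]
  ring

lemma hdL_one (χ : MulChar F ℂ) (ψ : AddChar F ℂ) : hdL χ ψ 1 = 1 := by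
  simp [hdL, nextCoeff]

lemma hdL_pow (χ : MulChar F ℂ) (ψ : AddChar F ℂ) {f : F[X]} (hf : f.Monic) (j : ℕ) :
    hdL χ ψ (f ^ j) = hdL χ ψ f ^ j := by
  induction j with
  | zero => simp [hdL_one]
  | succ j ih => rw [pow_succ, hdL_mul χ ψ (hf.pow j) hf, ih, pow_succ]

def hdA (χ : MulChar F ℂ) (ψ : AddChar F ℂ) (n : ℕ) : ℂ := ∑ f ∈ hdMon F n, hdL χ ψ f

lemma hdA_zero (χ : MulChar F ℂ) (ψ : AddChar F ℂ) : hdA χ ψ 0 = 1 := by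
  have : hdMon F 0 = {1} := by
    ext f
    simp only [mem_hdMon, Finset.mem_singleton]
    constructor
    · rintro ⟨h1, h2⟩
      exact eq_one_of_monic_natDegree_zero h1 h2
    · rintro rfl
      simp
  rw [hdA, this, Finset.sum_singleton, hdL_one]

lemma hdA_one (χ : MulChar F ℂ) (ψ : AddChar F ℂ) : hdA χ ψ 1 = gaussSum χ ψ := by
  rw [hdA, gaussSum]
  symm
  refine Finset.sum_bij (fun (c : F) _ => X - C c) ?_ ?_ ?_ ?_
  · intro c _
    simp [mem_hdMon, monic_X_sub_C]
  · intro a _ b _ h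
    simpa using h
  · intro f hf
    rw [mem_hdMon] at hf
    refine ⟨- f.coeff 0, Finset.mem_univ _, ?_⟩
    rw [map_neg, sub_neg_eq_add, ← hf.1.eq_X_add_C hf.2]
  · intro c _
    simp [hdL, nextCoeff_X_sub_C]

lemma hdA_ge_two (χ : MulChar F ℂ) (ψ : AddChar F ℂ) (hψ : ψ ≠ 1) {n : ℕ} (hn : 2 ≤ n) :
    hdA χ ψ n = 0 := by
  obtain ⟨c, hc⟩ := AddChar.ne_one_iff.mp hψ
  have hdeg : ∀ (c : F) (f : F[X]), f ∈ hdMon F n →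
      (f + C c * X ^ (n - 1)) ∈ hdMon F n := by
    intro c f hf
    rw [mem_hdMon] at hf ⊢
    have hlt : (C c * X ^ (n - 1)).degree < f.degree := by
      refine lt_of_le_of_lt (degree_C_mul_X_pow_le _ _) ?_
      rw [degree_eq_natDegree hf.1.ne_zero, hf.2]
      exact_mod_cast (by omega : n - 1 < n)
    refine ⟨hf.1.add_of_left hlt, ?_⟩
    rw [natDegree_add_eq_left_of_degree_lt hlt, hf.2]
  have key : hdA χ ψ n = ψ c * hdA χ ψ n := by
    unfold hdA
    rw [Finset.mul_sum]
    refine Finset.sum_bij' (fun f _ => f + C c * X ^ (n - 1)) (fun f _ => f + C (-c) * X ^ (n - 1))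
      (hdeg c) (hdeg (-c)) ?_ ?_ ?_
    · intro f _; simp
    · intro f _; simp
    · intro f hf
      have h2 := mem_hdMon.mp (hdeg c f hf)
      rw [mem_hdMon] at hf
      unfold hdL
      rw [h2.2, hf.2, nextCoeff_of_natDegree_pos (by omega), nextCoeff_of_natDegree_pos (by omega),
        h2.2, hf.2]
      have h0 : ¬ (0 = n - 1) := by omega
      simp only [coeff_add, coeff_C_mul, coeff_X_pow, if_neg h0, if_true, mul_one, mul_zero,
        add_zero, neg_add, AddChar.map_add_eq_mul]
      have : ψ c * ψ (-c) = 1 := by rw [← AddChar.map_add_eq_mul]; simp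
      linear_combination (-χ ((-1) ^ n * f.coeff 0) * ψ (-f.coeff (n-1))) * this
  have : (1 - ψ c) * hdA χ ψ n = 0 := by linear_combination key
  rcases mul_eq_zero.mp this with h | h
  · exact absurd (sub_eq_zero.mp h).symm hc
  · exact h

def hdS (χ : MulChar F ℂ) (ψ : AddChar F ℂ) (N k : ℕ) : ℂ :=
  ∑ P ∈ hdIrr F N, if P.natDegree ∣ k then (P.natDegree : ℂ) * hdL χ ψ P ^ (k / P.natDegree) else 0

lemma hd_deg {n N : ℕ} (hN : n ≤ N) {f : F[X]} (hf : f ∈ hdMon F n) :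
    (n : ℂ) = ∑ P ∈ hdIrr F N, ∑ j ∈ Finset.Icc 1 n, if P ^ j ∣ f then (P.natDegree : ℂ) else 0 := by
  rw [mem_hdMon] at hf
  obtain ⟨hm, hd⟩ := hf
  have h0 := hm.ne_zero
  have hprod : (UniqueFactorizationMonoid.normalizedFactors f).prod = f := by
    rw [UniqueFactorizationMonoid.prod_normalizedFactors_eq h0, hm.normalize_eq_self]
  have hsub : (UniqueFactorizationMonoid.normalizedFactors f).toFinset ⊆ hdIrr F N := by
    intro P hP
    rw [Multiset.mem_toFinset] at hP
    rw [mem_hdIrr]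
    have hi := UniqueFactorizationMonoid.irreducible_of_normalized_factor P hP
    refine ⟨?_, ?_, hi⟩
    · rw [← UniqueFactorizationMonoid.normalize_normalized_factor P hP]
      exact monic_normalize hi.ne_zero
    · exact (natDegree_le_of_dvd (UniqueFactorizationMonoid.dvd_of_mem_normalizedFactors hP) h0).trans
        (by omega)
  have hdeg : n = ∑ P ∈ hdIrr F N,
      (UniqueFactorizationMonoid.normalizedFactors f).count P * P.natDegree := by
    rw [← Finset.sum_subset hsub]
    · rw [← hd]
      conv_lhs => rw [← hprod]
      rw [natDegree_multiset_prod _ (UniqueFactorizationMonoid.zero_notMem_normalizedFactors f),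
        Finset.sum_multiset_map_count]
      simp
    · intro P _ hP
      rw [Multiset.mem_toFinset] at hP
      rw [Multiset.count_eq_zero_of_notMem hP, zero_mul]
  have hcount : ∀ P ∈ hdIrr F N, ∀ j, P ^ j ∣ f ↔
      j ≤ (UniqueFactorizationMonoid.normalizedFactors f).count P := by
    intro P hP j
    rw [mem_hdIrr] at hP
    rw [pow_dvd_iff_le_emultiplicity,
      UniqueFactorizationMonoid.emultiplicity_eq_count_normalizedFactors hP.2.2 h0,
      hP.1.normalize_eq_self, Nat.cast_le]
  conv_lhs => rw [hdeg]
  rw [Nat.cast_sum]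
  refine Finset.sum_congr rfl fun P hP => ?_
  have hle : (UniqueFactorizationMonoid.normalizedFactors f).count P ≤ n := by
    have h1 := Finset.single_le_sum (f := fun P =>
      (UniqueFactorizationMonoid.normalizedFactors f).count P * P.natDegree)
      (fun _ _ => Nat.zero_le _) hP
    rw [← hdeg] at h1
    refine le_trans (Nat.le_mul_of_pos_right _ ?_) h1
    exact (mem_hdIrr.mp hP).2.2.natDegree_pos
  simp_rw [hcount P hP]
  rw [← Finset.sum_filter, Finset.sum_const]
  have : (Finset.Icc 1 n).filter
      (fun j => j ≤ (UniqueFactorizationMonoid.normalizedFactors f).count P)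
      = Finset.Icc 1 ((UniqueFactorizationMonoid.normalizedFactors f).count P) := by
    ext j
    simp only [Finset.mem_filter, Finset.mem_Icc]
    omega
  rw [this]
  simp

lemma hd_inner (χ : MulChar F ℂ) (ψ : AddChar F ℂ) {n : ℕ} {Q : F[X]} (hQ : Q.Monic) :
    (∑ f ∈ hdMon F n, if Q ∣ f then hdL χ ψ f else 0) =
      if Q.natDegree ≤ n then hdL χ ψ Q * hdA χ ψ (n - Q.natDegree) else 0 := by
  split_ifs with h
  · rw [hdA, Finset.mul_sum, ← Finset.sum_filter]
    symm
    refine Finset.sum_bij (fun f _ => Q * f) ?_ ?_ ?_ ?_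
    · intro f hf
      rw [mem_hdMon] at hf
      rw [Finset.mem_filter, mem_hdMon]
      refine ⟨⟨hQ.mul hf.1, ?_⟩, dvd_mul_right _ _⟩
      rw [hQ.natDegree_mul hf.1, hf.2]; omega
    · intro a _ b _ hab
      exact mul_left_cancel₀ hQ.ne_zero hab
    · intro f hf
      rw [Finset.mem_filter, mem_hdMon] at hf
      obtain ⟨⟨h1, h2⟩, f', rfl⟩ := hf
      have h3 := hQ.of_mul_monic_left h1
      refine ⟨f', ?_, rfl⟩
      rw [mem_hdMon]
      refine ⟨h3, ?_⟩
      rw [hQ.natDegree_mul h3] at h2; omega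
    · intro f hf
      rw [mem_hdMon] at hf
      rw [hdL_mul χ ψ hQ hf.1]
  · refine Finset.sum_eq_zero fun f hf => ?_
    rw [mem_hdMon] at hf
    rw [if_neg]
    intro hdvd
    exact h (hf.2 ▸ natDegree_le_of_dvd hdvd hf.1.ne_zero)

lemma hd_rec (χ : MulChar F ℂ) (ψ : AddChar F ℂ) {n N : ℕ} (hN : n ≤ N) :
    (n : ℂ) * hdA χ ψ n = ∑ k ∈ Finset.Icc 1 n, hdS χ ψ N k * hdA χ ψ (n - k) := by
  have h1 : (n : ℂ) * hdA χ ψ n = ∑ P ∈ hdIrr F N, ∑ j ∈ Finset.Icc 1 n, (P.natDegree : ℂ) *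
      ∑ f ∈ hdMon F n, if P ^ j ∣ f then hdL χ ψ f else 0 := by
    unfold hdA
    rw [Finset.mul_sum]
    have : ∀ f ∈ hdMon F n, (n : ℂ) * hdL χ ψ f =
        ∑ P ∈ hdIrr F N, ∑ j ∈ Finset.Icc 1 n,
          if P ^ j ∣ f then (P.natDegree : ℂ) * hdL χ ψ f else 0 := by
      intro f hf
      conv_lhs => rw [hd_deg hN hf]
      rw [Finset.sum_mul]
      refine Finset.sum_congr rfl fun P _ => ?_
      rw [Finset.sum_mul]
      refine Finset.sum_congr rfl fun j _ => ?_
      split_ifs <;> simp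
    rw [Finset.sum_congr rfl this, Finset.sum_comm]
    refine Finset.sum_congr rfl fun P _ => ?_
    rw [Finset.sum_comm]
    refine Finset.sum_congr rfl fun j _ => ?_
    rw [Finset.mul_sum]
    refine Finset.sum_congr rfl fun f _ => ?_
    split_ifs <;> simp
  rw [h1]
  unfold hdS
  simp_rw [Finset.sum_mul]
  conv_rhs => rw [Finset.sum_comm]
  refine Finset.sum_congr rfl fun P hP => ?_
  rw [mem_hdIrr] at hP
  have hpos := hP.2.2.natDegree_pos
  have h2 : ∀ j ∈ Finset.Icc 1 n, ((P.natDegree : ℂ) *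
      ∑ f ∈ hdMon F n, if P ^ j ∣ f then hdL χ ψ f else 0) =
      if j * P.natDegree ≤ n then
        (P.natDegree : ℂ) * hdL χ ψ P ^ j * hdA χ ψ (n - j * P.natDegree) else 0 := by
    intro j _
    rw [hd_inner χ ψ (hP.1.pow j), hdL_pow χ ψ hP.1, hP.1.natDegree_pow]
    split_ifs
    · ring
    · simp
  rw [Finset.sum_congr rfl h2, ← Finset.sum_filter]
  simp_rw [ite_mul, zero_mul]
  rw [← Finset.sum_filter]
  refine Finset.sum_bij (fun j _ => j * P.natDegree) ?_ ?_ ?_ ?_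
  · intro j hj
    simp only [Finset.mem_filter, Finset.mem_Icc] at hj ⊢
    exact ⟨⟨Nat.mul_pos (by omega) hpos, hj.2⟩, dvd_mul_left _ _⟩
  · intro a _ b _ hab
    exact Nat.eq_of_mul_eq_mul_right hpos hab
  · intro k hk
    simp only [Finset.mem_filter, Finset.mem_Icc] at hk
    obtain ⟨⟨hk1, hk2⟩, j, rfl⟩ := hk
    refine ⟨j, ?_, mul_comm _ _⟩
    simp only [Finset.mem_filter, Finset.mem_Icc]
    refine ⟨⟨Nat.pos_of_mul_pos_left hk1, ?_⟩, by rw [mul_comm]; exact hk2⟩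
    exact le_trans (Nat.le_mul_of_pos_left _ hpos) hk2
  · intro j _
    rw [Nat.mul_div_cancel _ hpos]

lemma hdS_eq (χ : MulChar F ℂ) (ψ : AddChar F ℂ) (hψ : ψ ≠ 1) {N : ℕ} (k : ℕ) (hk : k + 1 ≤ N) :
    hdS χ ψ N (k + 1) = (-1) ^ k * gaussSum χ ψ ^ (k + 1) := by
  induction k with
  | zero =>
    have := hd_rec χ ψ hk
    simp [hdA_zero, hdA_one] at this
    simp [← this]
  | succ k ih =>
    have := hd_rec χ ψ hk
    rw [hdA_ge_two χ ψ hψ (by omega), mul_zero, Finset.sum_Icc_succ_top (by omega),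
      Finset.sum_Icc_succ_top (by omega), Finset.sum_eq_zero, ih (by omega)] at this
    · have e1 : k + 1 + 1 - (k + 1) = 1 := by omega
      rw [e1, Nat.sub_self, hdA_zero, hdA_one] at this
      linear_combination -this
    · intro j hj
      rw [Finset.mem_Icc] at hj
      rw [hdA_ge_two χ ψ hψ (by omega), mul_zero]

variable {E : Type*} [Field E] [Fintype E] [Algebra F E]

lemma hd_value (χ : MulChar F ℂ) (ψ : AddChar F ℂ) (y : E) :
    (minpoly F y).natDegree ∣ Module.finrank F E ∧
    χ (Algebra.norm F y) * ψ (Algebra.trace F E y) =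
      hdL χ ψ (minpoly F y) ^ (Module.finrank F E / (minpoly F y).natDegree) := by
  have hy : IsIntegral F y := IsIntegral.of_finite F y
  have hfr := IntermediateField.adjoin.finrank hy
  have hmul := Module.finrank_mul_finrank F (IntermediateField.adjoin F {y}) E
  rw [hfr] at hmul
  have hpos : 0 < (minpoly F y).natDegree := minpoly.natDegree_pos hy
  refine ⟨⟨_, hmul.symm⟩, ?_⟩
  rw [← hmul, Nat.mul_div_cancel_left _ hpos, trace_eq_finrank_mul_minpoly_nextCoeff,
    Algebra.norm_eq_norm_adjoin, ← IntermediateField.adjoin.powerBasis_gen hy,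
    Algebra.PowerBasis.norm_gen_eq_coeff_zero_minpoly, IntermediateField.adjoin.powerBasis_gen hy,
    IntermediateField.minpoly_gen, IntermediateField.adjoin.powerBasis_dim hy, hdL, map_pow,
    ← nsmul_eq_mul, AddChar.map_nsmul_eq_pow, mul_pow]

lemma hd_count {P : F[X]} (hP : Irreducible P) (hm : P.Monic)
    (hd : P.natDegree ∣ Module.finrank F E) :
    (Finset.univ.filter (fun y : E => minpoly F y = P)).card = P.natDegree := by
  have hcard : Nat.card F ^ Module.finrank F E = Fintype.card E := by
    rw [Nat.card_eq_fintype_card]; exact (Module.card_eq_pow_finrank (K := F) (V := E)).symm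
  have h1 := hP.natDegree_dvd_iff_dvd_X_pow_card_pow_sub_X.mp hd
  rw [hcard] at h1
  have hs : Splits (P.map (algebraMap F E)) := by
    have h2 : Splits (map (algebraMap F E) (X ^ Fintype.card E - X)) :=
      (FiniteField.isSplittingField_sub E F).splits
    refine h2.of_dvd ?_ (Polynomial.map_dvd _ h1)
    rw [Polynomial.map_ne_zero_iff (algebraMap F E).injective]
    exact FiniteField.X_pow_card_sub_X_ne_zero F Fintype.one_lt_card
  have hsep : P.Separable := PerfectField.separable_of_irreducible hP
  rw [← card_rootSet_eq_natDegree hsep hs, ← Set.toFinset_card]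
  congr 1
  ext y
  simp only [Finset.mem_filter, Finset.mem_univ, true_and, Set.mem_toFinset, mem_rootSet]
  constructor
  · rintro rfl
    exact ⟨hP.ne_zero, minpoly.aeval F y⟩
  · rintro ⟨_, h⟩
    exact (minpoly.eq_of_irreducible_of_monic hP h hm).symm

theorem hasse_davenport (χ : MulChar F ℂ) (ψ : AddChar F ℂ) (hψ : ψ ≠ 1) :
    ∑ y : E, χ (Algebra.norm F y) * ψ (Algebra.trace F E y) =
      (-1) ^ (Module.finrank F E - 1) * gaussSum χ ψ ^ (Module.finrank F E) := by
  have hpos : 0 < Module.finrank F E := Module.finrank_pos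
  have h1 := hdS_eq χ ψ hψ (N := Module.finrank F E) (Module.finrank F E - 1) (by omega)
  rw [Nat.sub_add_cancel hpos] at h1
  rw [← h1, hdS]
  rw [← Finset.sum_fiberwise_of_maps_to (s := Finset.univ) (t := hdIrr F (Module.finrank F E))
    (g := fun y : E => minpoly F y)]
  · refine Finset.sum_congr rfl fun P hP => ?_
    rw [mem_hdIrr] at hP
    split_ifs with hd
    · rw [Finset.sum_congr rfl (g := fun _ => hdL χ ψ P ^ (Module.finrank F E / P.natDegree)),
        Finset.sum_const, hd_count hP.2.2 hP.1 hd, nsmul_eq_mul]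
      intro y hy
      rw [Finset.mem_filter] at hy
      rw [(hd_value χ ψ y).2, hy.2]
    · refine Finset.sum_eq_zero fun y hy => ?_
      rw [Finset.mem_filter] at hy
      exact absurd (hy.2 ▸ (hd_value χ ψ y).1) hd
  · intro y _
    have hy : IsIntegral F y := IsIntegral.of_finite F y
    rw [mem_hdIrr]
    exact ⟨minpoly.monic hy, Nat.le_of_dvd hpos (hd_value χ ψ y).1, minpoly.irreducible hy⟩

end HD

section Jac

/-- Eisenstein integers -/
abbrev EisR : Type := QuadraticAlgebra ℤ (-1) (-1)

def eisHom {S : Type*} [CommRing S] (u : S) (hu : u * u + u + 1 = 0) : EisR →+* S :=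
  ((QuadraticAlgebra.lift (R := ℤ) (a := -1) (b := -1) (A := S)
    ⟨u, by simp only [neg_smul, one_smul]; linear_combination hu⟩ : EisR →ₐ[ℤ] S) : EisR →+* S)

lemma eisHom_apply {S : Type*} [CommRing S] (u : S) (hu : u * u + u + 1 = 0) (z : EisR) :
    eisHom u hu z = (z.re : S) + (z.im : S) * u := by
  simp [eisHom, QuadraticAlgebra.lift]

def eisOm : EisRˣ where
  val := ⟨0, 1⟩
  inv := ⟨-1, -1⟩
  val_inv := by ext <;> simp [QuadraticAlgebra.re_one, QuadraticAlgebra.im_one]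
  inv_val := by ext <;> simp [QuadraticAlgebra.re_one, QuadraticAlgebra.im_one]

lemma eisOm_pow : eisOm ^ 3 = 1 := by
  ext <;> simp [eisOm, pow_succ, QuadraticAlgebra.re_one, QuadraticAlgebra.im_one]

lemma eisHom_om {S : Type*} [CommRing S] (u : S) (hu : u * u + u + 1 = 0) :
    eisHom u hu (eisOm : EisR) = u := by
  simp [eisHom_apply, eisOm]

variable {p : ℕ} [Fact p.Prime]

lemma exists_eisChar (hp : p % 3 = 1)
    (g : (ZMod p)ˣ) (hg : ∀ u : (ZMod p)ˣ, u ∈ Subgroup.zpowers g) :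
    ∃ χ : MulChar (ZMod p) EisR, χ (g : ZMod p) = (eisOm : EisR) := by
  have h : eisOm ∈ rootsOfUnity (Fintype.card (ZMod p)ˣ) EisR := by
    rw [_root_.mem_rootsOfUnity, ZMod.card_units]
    obtain ⟨k, hk⟩ : 3 ∣ p - 1 := by omega
    rw [hk, pow_mul, eisOm_pow, one_pow]
  exact ⟨MulChar.ofRootOfUnity h hg, MulChar.ofRootOfUnity_spec h hg⟩

lemma sum_pow_mul_pow (k : ℕ) (hk : 3 * k = p - 1) (hk0 : 0 < k) :
    ∑ x : ZMod p, x ^ k * (1 - x) ^ k = 0 := by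
  have h1 : ∀ x : ZMod p, x ^ k * (1 - x) ^ k =
      ∑ i ∈ Finset.range (k + 1), ((-1) ^ i * (k.choose i : ZMod p)) * x ^ (k + i) := by
    intro x
    rw [sub_eq_add_neg, add_comm, add_pow, Finset.mul_sum]
    refine Finset.sum_congr rfl fun i _ => ?_
    rw [neg_pow, pow_add]
    simp
    ring
  simp_rw [h1]
  rw [Finset.sum_comm]
  refine Finset.sum_eq_zero fun i hi => ?_
  rw [Finset.mem_range] at hi
  rw [← Finset.mul_sum, FiniteField.sum_pow_lt_card_sub_one, mul_zero]
  rw [ZMod.card]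
  omega

lemma cube_root_facts (hp : p % 3 = 1)
    (g : (ZMod p)ˣ) (hg : ∀ u : (ZMod p)ˣ, u ∈ Subgroup.zpowers g) :
    (g : ZMod p) ^ ((p - 1) / 3) * (g : ZMod p) ^ ((p - 1) / 3) +
      (g : ZMod p) ^ ((p - 1) / 3) + 1 = 0 := by
  have ho : orderOf g = p - 1 := by
    rw [orderOf_eq_card_of_forall_mem_zpowers hg, Nat.card_eq_fintype_card, ZMod.card_units]
  have hp2 := (Fact.out : p.Prime).two_le
  set w : ZMod p := (g : ZMod p) ^ ((p - 1) / 3) with hw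
  have h3 : w ^ 3 = 1 := by
    rw [hw, ← pow_mul, Nat.div_mul_cancel (by omega), ← ho]
    rw [← Units.val_pow_eq_pow_val, pow_orderOf_eq_one, Units.val_one]
  have h1 : w ≠ 1 := by
    intro h
    have : g ^ ((p - 1) / 3) = 1 := by ext; simpa [hw] using h
    have := Nat.le_of_dvd (by omega) (orderOf_dvd_of_pow_eq_one this)
    omega
  have : (w - 1) * (w * w + w + 1) = 0 := by linear_combination h3
  rcases mul_eq_zero.mp this with h | h
  · exact absurd (sub_eq_zero.mp h) h1
  · exact h

lemma jac_mod_p (hp : p % 3 = 1)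
    (g : (ZMod p)ˣ) (hg : ∀ u : (ZMod p)ˣ, u ∈ Subgroup.zpowers g)
    (χ : MulChar (ZMod p) (ZMod p)) (hχ : χ g = (g : ZMod p) ^ ((p - 1) / 3)) :
    jacobiSum χ χ = 0 := by
  have hp2 := (Fact.out : p.Prime).two_le
  have h : ∀ x, χ x = x ^ ((p - 1) / 3) := by
    intro x
    by_cases hx : x = 0
    · rw [hx, MulChar.map_zero, zero_pow (by omega)]
    · obtain ⟨k, hk⟩ := mem_powers_iff_mem_zpowers.mpr (hg (Units.mk0 x hx))
      have hx' : x = (g : ZMod p) ^ k := by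
        have := congrArg Units.val hk
        simpa using this.symm
      rw [hx', map_pow, hχ, ← pow_mul, ← pow_mul, mul_comm]
  unfold jacobiSum
  simp_rw [h]
  exact sum_pow_mul_pow _ (by omega) (by omega)

lemma jac_mod_two {S : Type*} [CommRing S] [CharP S 2] (hodd : p ≠ 2)
    (χ : MulChar (ZMod p) S) :
    χ 4 * jacobiSum χ χ = 1 := by
  have h2 : (2 : ZMod p) ≠ 0 := by
    intro h
    have h' : ((2 : ℕ) : ZMod p) = 0 := by exact_mod_cast h
    rw [ZMod.natCast_eq_zero_iff] at h'
    exact hodd ((Nat.prime_dvd_prime_iff_eq Fact.out Nat.prime_two).mp h')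
  have : jacobiSum χ χ = χ 2⁻¹ * χ 2⁻¹ := by
    unfold jacobiSum
    rw [← Finset.add_sum_erase _ _ (Finset.mem_univ (2⁻¹ : ZMod p))]
    have e : (1 - 2⁻¹ : ZMod p) = 2⁻¹ := by field_simp; norm_num
    rw [e, add_eq_left]
    refine Finset.sum_involution (fun x _ => 1 - x) ?_ ?_ ?_ ?_
    · intro x _
      rw [sub_sub_cancel, mul_comm (χ (1 - x))]
      exact CharTwo.add_self_eq_zero _
    · intro x hx _ hxx
      rw [Finset.mem_erase] at hx
      apply hx.1
      apply eq_inv_of_mul_eq_one_left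
      linear_combination -hxx
    · intro x hx
      rw [Finset.mem_erase] at hx ⊢
      refine ⟨fun h => hx.1 ?_, Finset.mem_univ _⟩
      rw [← e, ← h]; ring
    · intro x _
      ring
  rw [this, ← map_mul, ← map_mul]
  have : (4 * (2⁻¹ * 2⁻¹) : ZMod p) = 1 := by field_simp; norm_num
  rw [this, map_one]

instance : CharP (QuadraticAlgebra (ZMod 2) (-1) (-1)) 2 := by
  refine CharTwo.of_one_ne_zero_of_two_eq_zero ?_ ?_
  · intro h
    have := congrArg QuadraticAlgebra.re h
    simp [QuadraticAlgebra.re_one] at this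
  · have : (2 : QuadraticAlgebra (ZMod 2) (-1) (-1)) = 1 + 1 := by norm_num
    rw [this]
    ext
    · simp [QuadraticAlgebra.re_one]; decide
    · simp [QuadraticAlgebra.im_one]

lemma quad_unique (p a b a3 b3 : ℤ) (hp : 0 < p) (h : a ^ 2 + 3 * b ^ 2 = p)
    (h3 : a3 ^ 2 + 3 * b3 ^ 2 = p) (hd : p ∣ a * b3 - a3 * b)
    (ha : a ≡ -1 [ZMOD 3]) (ha3 : a3 ≡ -1 [ZMOD 3]) : a = a3 ∧ b = b3 := by
  obtain ⟨k, hk⟩ := hd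
  have h1 : p ^ 2 = (a * a3 + 3 * b * b3) ^ 2 + 3 * (p * k) ^ 2 := by
    rw [← hk]
    linear_combination (-p) * h - (a ^ 2 + 3 * b ^ 2) * h3
  have hk0 : k = 0 := by
    by_contra hne
    have : 1 ≤ k ^ 2 := by have := sq_pos_of_ne_zero hne; linarith
    have hp2 : 0 < p ^ 2 := by positivity
    nlinarith [sq_nonneg (a * a3 + 3 * b * b3)]
  subst hk0
  have h2 : a * b3 = a3 * b := by linarith
  have h4 : a ^ 2 = a3 ^ 2 := by
    have : p * (a ^ 2 - a3 ^ 2) = 0 := by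
      have e : p * (a ^ 2 - a3 ^ 2) = a ^ 2 * (a3 ^ 2 + 3 * b3 ^ 2) - a3 ^ 2 * (a ^ 2 + 3 * b ^ 2) := by
        rw [h, h3]; ring
      rw [e]
      linear_combination 3 * (a * b3 + a3 * b) * h2
    rcases mul_eq_zero.mp this with h | h
    · omega
    · linarith
  have h5 : a = a3 := by
    rcases sq_eq_sq_iff_eq_or_eq_neg.mp h4 with h | h
    · exact h
    · exfalso
      rw [h] at ha
      unfold Int.ModEq at ha ha3
      omega
  refine ⟨h5, ?_⟩
  subst h5
  have ha0 : a ≠ 0 := by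
    rintro rfl
    unfold Int.ModEq at ha
    omega
  exact (mul_left_cancel₀ ha0 h2).symm

theorem jac_eq (hp : p % 3 = 1)
    (g : (ZMod p)ˣ) (hg : ∀ u : (ZMod p)ˣ, u ∈ Subgroup.zpowers g)
    (ζ : ℂ) (hζ : ζ * ζ + ζ + 1 = 0)
    (χ3 : MulChar (ZMod p) ℂ) (hχ3o : orderOf χ3 = 3) (hχ3g : χ3 (g : ZMod p) = ζ)
    (a3 b3 : ℤ) (hab : a3 ^ 2 + 3 * b3 ^ 2 = (p : ℤ))
    (ha3 : a3 ≡ -1 [ZMOD 3])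
    (hb3 : ((3 * b3 : ℤ) : ZMod p) = (2 * (g : ZMod p) ^ ((p - 1) / 3) + 1) * (a3 : ZMod p)) :
    jacobiSum χ3 χ3 = χ3 2 * (a3 + b3 * (2 * ζ + 1)) := by
  have hprime : p.Prime := Fact.out
  have hp2 := hprime.two_le
  have hodd : p ≠ 2 := by omega
  obtain ⟨χ, hχ⟩ := exists_eisChar hp g hg
  set w : ZMod p := (g : ZMod p) ^ ((p - 1) / 3) with hw
  have hww := cube_root_facts hp g hg
  rw [← hw] at hww
  set Z : EisR := χ 4 * jacobiSum χ χ with hZ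
  have hmap : ∀ {S : Type} [CommRing S] (u : S) (hu : u * u + u + 1 = 0) (φ : MulChar (ZMod p) S),
      φ g = u → (Z.re : S) + (Z.im : S) * u = φ 4 * jacobiSum φ φ := by
    intro S _ u hu φ hφ
    have : φ = χ.ringHomComp (eisHom u hu) := by
      rw [MulChar.eq_iff hg, hφ, MulChar.ringHomComp_apply, hχ, eisHom_om]
    rw [← eisHom_apply u hu, hZ, map_mul, this, jacobiSum_ringHomComp, MulChar.ringHomComp_apply]
  have hmap' : ∀ {S : Type} [CommRing S] (u : S) (hu : u * u + u + 1 = 0),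
      ∃ φ : MulChar (ZMod p) S, φ g = u := by
    intro S _ u hu
    exact ⟨χ.ringHomComp (eisHom u hu), by rw [MulChar.ringHomComp_apply, hχ, eisHom_om]⟩
  -- complex
  have hC := hmap ζ hζ χ3 hχ3g
  have hζ3 : ζ ^ 3 = 1 := by linear_combination (ζ - 1) * hζ
  have hζ0 : ζ ≠ 0 := by rintro rfl; simp at hζ
  have hC' := hmap (ζ ^ 2) (by linear_combination (ζ ^ 2 - ζ + 1) * hζ) χ3⁻¹ (by
    rw [MulChar.inv_apply_eq_inv', hχ3g]; field_simp; exact hζ3.symm)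
  have hχ1 : χ3 ≠ 1 := by rintro rfl; simp at hχ3o
  have hχ2 : χ3 * χ3 ≠ 1 := by
    intro h
    have : orderOf χ3 ∣ 2 := orderOf_dvd_of_pow_eq_one (by rw [sq, h])
    rw [hχ3o] at this; omega
  have hn2 : (2 : ZMod p) ≠ 0 := by
    intro h
    have h' : ((2 : ℕ) : ZMod p) = 0 := by exact_mod_cast h
    rw [ZMod.natCast_eq_zero_iff] at h'
    exact hodd ((Nat.prime_dvd_prime_iff_eq Fact.out Nat.prime_two).mp h')
  have hn3 : (3 : ZMod p) ≠ 0 := by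
    intro h
    have h' : ((3 : ℕ) : ZMod p) = 0 := by exact_mod_cast h
    rw [ZMod.natCast_eq_zero_iff] at h'
    have := ((Nat.prime_dvd_prime_iff_eq Fact.out Nat.prime_three).mp h')
    omega
  have hn4 : (4 : ZMod p) ≠ 0 := by
    have : (4 : ZMod p) = 2 * 2 := by norm_num
    rw [this]; exact mul_ne_zero hn2 hn2
  have h4ne : χ3 4 ≠ 0 := by
    exact ((Ne.isUnit hn4).map χ3).ne_zero
  have hnorm := jacobiSum_mul_jacobiSum_inv (χ := χ3) (φ := χ3) (by
    rw [ringChar.eq_zero, ZMod.ringChar_zmod_n]; omega) hχ1 hχ1 hχ2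
  have hN : (Z.re : ℂ) ^ 2 - Z.re * Z.im + (Z.im : ℂ) ^ 2 = p := by
    rw [ZMod.card] at hnorm
    rw [MulChar.inv_apply_eq_inv'] at hC'
    have : ((Z.re : ℂ) + Z.im * ζ) * ((Z.re : ℂ) + Z.im * ζ ^ 2) = p := by
      rw [hC, hC', ← hnorm]; field_simp
    rw [← this]
    linear_combination (-(Z.re : ℂ) * Z.im) * hζ - (Z.im : ℂ) ^ 2 * hζ3
  have hNZ : Z.re ^ 2 - Z.re * Z.im + Z.im ^ 2 = (p : ℤ) := by exact_mod_cast hN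
  -- mod 3
  have h3 := hmap (S := ZMod 3) 1 (by decide) 1 (by simp)
  rw [jacobiSum_one_one, ZMod.card, MulChar.one_apply (Ne.isUnit hn4)] at h3
  -- mod p
  have hpp : (Z.re : ZMod p) + Z.im * w = 0 := by
    obtain ⟨φ, hφ⟩ := hmap' w hww
    rw [hmap w hww φ hφ, jac_mod_p hp g hg φ hφ, mul_zero]
  -- mod 2
  have h2 : (Z.re : ZMod 2) = 1 ∧ (Z.im : ZMod 2) = 0 := by
    have hu : (⟨0, 1⟩ : QuadraticAlgebra (ZMod 2) (-1) (-1)) * ⟨0, 1⟩ + ⟨0, 1⟩ + 1 = 0 := by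
      ext <;> simp [QuadraticAlgebra.re_one, QuadraticAlgebra.im_one] <;> rfl
    obtain ⟨φ, hφ⟩ := hmap' _ hu
    have := hmap _ hu φ hφ
    rw [jac_mod_two hodd φ] at this
    have e1 := congrArg QuadraticAlgebra.re this
    have e2 := congrArg QuadraticAlgebra.im this
    simp [QuadraticAlgebra.re_one, QuadraticAlgebra.im_one] at e1 e2
    exact ⟨e1, e2⟩
  obtain ⟨b, hb⟩ : (2 : ℤ) ∣ Z.im := (ZMod.intCast_zmod_eq_zero_iff_dvd _ 2).mp h2.2
  obtain ⟨a, ha⟩ : ∃ a, Z.re = a + b := ⟨Z.re - b, by ring⟩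
  rw [ha, hb] at h3 hNZ hpp hC
  push_cast at h3 hpp hC
  have ham : a ≡ -1 [ZMOD 3] := by
    refine (ZMod.intCast_eq_intCast_iff a (-1) 3).mp ?_
    have : (p : ZMod 3) = 1 := by
      have := (ZMod.natCast_eq_natCast_iff p 1 3).mpr (by unfold Nat.ModEq; omega)
      simpa using this
    rw [this] at h3
    have h33 : (3 : ZMod 3) = 0 := by decide
    push_cast
    linear_combination h3 - (b : ZMod 3) * h33
  have hd : (p : ℤ) ∣ a * b3 - a3 * b := by
    rw [← ZMod.intCast_zmod_eq_zero_iff_dvd]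
    push_cast at hb3 ⊢
    have : (3 : ZMod p) * (a * b3 - a3 * b) = 0 := by
      linear_combination a * hb3 + (a3 * (2 * w + 1)) * hpp - (4 * a3 * b : ZMod p) * hww
    exact (mul_eq_zero.mp this).resolve_left hn3
  obtain ⟨rfl, rfl⟩ := quad_unique p a b a3 b3 (by omega) (by linarith) hab hd ham ha3
  have h24 : χ3 2 * χ3 4 = 1 := by
    have e : (4 : ZMod p) = 2 * 2 := by norm_num
    rw [e, map_mul]
    have : χ3 ^ 3 = 1 := by rw [← hχ3o, pow_orderOf_eq_one]
    have h8 : (χ3 ^ 3) 2 = 1 := by rw [this, MulChar.one_apply (Ne.isUnit hn2)]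
    rw [MulChar.pow_apply' _ (by norm_num)] at h8
    linear_combination h8
  linear_combination (-jacobiSum χ3 χ3) * h24 - χ3 2 * hC

end Jac

section Fin

variable {p : ℕ} [Fact p.Prime] {E : Type*} [Field E] [Fintype E] [Algebra (ZMod p) E]

lemma card_trace_zero :
    (Finset.univ.filter (fun y : E => Algebra.trace (ZMod p) E y = 0)).card =
      p ^ (Module.finrank (ZMod p) E - 1) := by
  have h1 := LinearMap.finrank_range_add_finrank_ker (Algebra.trace (ZMod p) E)
  rw [LinearMap.range_eq_top.mpr (Algebra.trace_surjective (ZMod p) E), finrank_top,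
    Module.finrank_self] at h1
  have h2 := Module.card_eq_pow_finrank (K := ZMod p) (V := LinearMap.ker (Algebra.trace (ZMod p) E))
  rw [ZMod.card] at h2
  rw [← h1, Nat.add_sub_cancel_left, ← h2, Fintype.card_subtype]
  congr 1
  ext y
  simp [LinearMap.mem_ker]

def trS (E : Type*) [Field E] [Fintype E] [Algebra (ZMod p) E] (χ : MulChar (ZMod p) ℂ) : ℂ :=
  ∑ y ∈ Finset.univ.filter (fun y : E => Algebra.trace (ZMod p) E y = 0),
    χ (Algebra.norm (ZMod p) y)

lemma norm_smul' (c : ZMod p) (y : E) : Algebra.norm (ZMod p) (c • y) =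
    c ^ Module.finrank (ZMod p) E * Algebra.norm (ZMod p) y := by
  rw [Algebra.smul_def, map_mul, Algebra.norm_algebraMap]

lemma trS_eq_zero (χ : MulChar (ZMod p) ℂ) (c : ZMod p) (hc : c ≠ 0)
    (h : χ c ^ Module.finrank (ZMod p) E ≠ 1) : trS E χ = 0 := by
  have key : trS E χ = χ c ^ Module.finrank (ZMod p) E * trS E χ := by
    unfold trS
    rw [Finset.mul_sum]
    symm
    refine Finset.sum_bij' (fun y _ => c • y) (fun y _ => c⁻¹ • y) ?_ ?_ ?_ ?_ ?_
    · intro y hy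
      simp only [Finset.mem_filter, Finset.mem_univ, true_and] at hy ⊢
      rw [map_smul, hy, smul_zero]
    · intro y hy
      simp only [Finset.mem_filter, Finset.mem_univ, true_and] at hy ⊢
      rw [map_smul, hy, smul_zero]
    · intro y _; exact inv_smul_smul₀ hc y
    · intro y _; exact smul_inv_smul₀ hc y
    · intro y _
      rw [norm_smul', map_mul, map_pow]
  have : (1 - χ c ^ Module.finrank (ZMod p) E) * trS E χ = 0 := by linear_combination key
  rcases mul_eq_zero.mp this with h' | h'
  · exact absurd (sub_eq_zero.mp h').symm h
  · exact h'

lemma sum_norm_zero (χ : MulChar (ZMod p) ℂ) (hχ : χ ≠ 1) :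
    ∑ y : E, χ (Algebra.norm (ZMod p) y) = 0 := by
  obtain ⟨u, hu⟩ := MulChar.ne_one_iff.mp hχ
  obtain ⟨z, hz⟩ := FiniteField.norm_surjective (ZMod p) E (u : ZMod p)
  have hz0 : z ≠ 0 := by
    rintro rfl
    rw [Algebra.norm_zero] at hz
    exact u.ne_zero hz.symm
  have key : ∑ y : E, χ (Algebra.norm (ZMod p) y) = χ u * ∑ y : E, χ (Algebra.norm (ZMod p) y) := by
    rw [Finset.mul_sum]
    refine (Fintype.sum_equiv (Equiv.mulLeft₀ z hz0) (fun y => χ u * χ (Algebra.norm (ZMod p) y))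
      (fun y => χ (Algebra.norm (ZMod p) y)) fun y => ?_).symm
    change _ = χ (Algebra.norm (ZMod p) (z * y))
    rw [map_mul, map_mul, hz]
  have : (1 - χ u) * ∑ y : E, χ (Algebra.norm (ZMod p) y) = 0 := by linear_combination key
  rcases mul_eq_zero.mp this with h' | h'
  · exact absurd (sub_eq_zero.mp h').symm hu
  · exact h'

lemma trS_gauss (χ : MulChar (ZMod p) ℂ) (hχ : χ ≠ 1) (ψ : AddChar (ZMod p) ℂ)
    (hψ : ψ.IsPrimitive) (h : χ ^ Module.finrank (ZMod p) E = 1) :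
    (p : ℂ) * trS E χ = (p - 1) * ((-1) ^ (Module.finrank (ZMod p) E - 1) *
      gaussSum χ ψ ^ Module.finrank (ZMod p) E) := by
  have hψ1 : ψ ≠ 1 := by
    have := hψ (one_ne_zero)
    rwa [AddChar.mulShift_one] at this
  have ht : Module.finrank (ZMod p) E ≠ 0 := Module.finrank_pos.ne'
  rw [← hasse_davenport χ ψ hψ1]
  have h1 : (p : ℂ) * trS E χ = ∑ c : ZMod p, ∑ y : E,
      χ (Algebra.norm (ZMod p) y) * ψ (c * Algebra.trace (ZMod p) E y) := by
    rw [Finset.sum_comm, trS, Finset.mul_sum, Finset.sum_filter]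
    refine Finset.sum_congr rfl fun y _ => ?_
    rw [← Finset.mul_sum, AddChar.sum_mulShift _ hψ, ZMod.card]
    split_ifs <;> simp [mul_comm]
  rw [h1, ← Finset.add_sum_erase _ _ (Finset.mem_univ (0 : ZMod p))]
  simp only [zero_mul, AddChar.map_zero_eq_one, mul_one]
  rw [sum_norm_zero χ hχ, zero_add,
    Finset.sum_congr rfl (g := fun _ => ∑ y : E,
      χ (Algebra.norm (ZMod p) y) * ψ (Algebra.trace (ZMod p) E y)), Finset.sum_const,
    Finset.card_erase_of_mem (Finset.mem_univ _), Finset.card_univ, ZMod.card, nsmul_eq_mul,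
    Nat.cast_sub (Fact.out : p.Prime).one_le, Nat.cast_one]
  intro c hc
  rw [Finset.mem_erase] at hc
  have hcc : χ c ^ Module.finrank (ZMod p) E = 1 := by
    rw [← MulChar.pow_apply' _ ht, h, MulChar.one_apply (Ne.isUnit hc.1)]
  refine Finset.sum_bij' (fun y _ => c • y) (fun y _ => c⁻¹ • y) ?_ ?_ ?_ ?_ ?_
  · intro y _; exact Finset.mem_univ _
  · intro y _; exact Finset.mem_univ _
  · intro y _; exact inv_smul_smul₀ hc.1 y
  · intro y _; exact smul_inv_smul₀ hc.1 y
  · intro y _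
    have e : χ (c ^ Module.finrank (ZMod p) E * Algebra.norm (ZMod p) y) =
        χ (Algebra.norm (ZMod p) y) := by rw [map_mul, map_pow, hcc, one_mul]
    rw [norm_smul', e, map_smul, smul_eq_mul]

lemma trS_jac (χ : MulChar (ZMod p) ℂ) (hχ : orderOf χ = 3)
    (h : 3 ∣ Module.finrank (ZMod p) E) :
    trS E χ = - ((-1) ^ (Module.finrank (ZMod p) E) * (p : ℂ) ^ ((Module.finrank (ZMod p) E - 3) / 3)
      * (p - 1) * jacobiSum χ χ ^ (Module.finrank (ZMod p) E / 3)) := by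
  have hp := (Fact.out : p.Prime)
  have hχ1 : χ ≠ 1 := by rintro rfl; simp at hχ
  have h3 : χ ^ 3 = 1 := by rw [← hχ, pow_orderOf_eq_one]
  have hpos : 0 < Module.finrank (ZMod p) E := Module.finrank_pos
  have hψ := ZMod.isPrimitive_stdAddChar p
  obtain ⟨j, hj⟩ := h
  obtain ⟨i, rfl⟩ : ∃ i, j = i + 1 := ⟨j - 1, by omega⟩
  have hG := gaussSum_pow_eq_prod_jacobiSum (χ := χ) (by omega) hψ
  have hm1 : χ (-1) = 1 := by
    have e1 : χ (-1) ^ 2 = 1 := by rw [← map_pow]; simp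
    have e2 : χ (-1) ^ 3 = 1 := by
      rw [← map_pow, Odd.neg_one_pow (by decide)]
      have : (χ ^ 3) (-1) = 1 := by rw [h3, MulChar.one_apply (isUnit_one.neg)]
      rw [MulChar.pow_apply' _ (by norm_num), ← map_pow, Odd.neg_one_pow (by decide)] at this
      exact this
    calc χ (-1) = χ (-1) * χ (-1) ^ 2 := by rw [e1, mul_one]
      _ = χ (-1) ^ 3 := by ring
      _ = 1 := e2
  rw [hχ, hm1, ZMod.card] at hG
  simp at hG
  have hS := trS_gauss (E := E) χ hχ1 _ hψ (by rw [hj, pow_mul, h3, one_pow])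
  have e1 : (3 * (i + 1) - 3) / 3 = i := by omega
  have e2 : 3 * (i + 1) / 3 = i + 1 := by omega
  have e3 : (-1 : ℂ) ^ (3 * (i + 1) - 1) = - (-1) ^ (3 * (i + 1)) := by
    rw [show 3 * (i + 1) = (3 * (i + 1) - 1) + 1 by omega, pow_succ]; simp
  rw [hj, pow_mul _ 3 (i + 1), hG, e3] at hS
  rw [hj, e1, e2]
  have hp0 : (p : ℂ) ≠ 0 := by exact_mod_cast hp.ne_zero
  apply mul_left_cancel₀ hp0
  rw [hS]
  ring

lemma cube_ind (z : ℂ) (hz : z ^ 3 = 1) :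
    (if z = 1 then 3 else 0 : ℂ) = 1 + ((2 * z.re : ℝ) : ℂ) := by
  have hn : ‖z‖ = 1 := by
    have : ‖z‖ ^ 3 = 1 := by rw [← norm_pow, hz, norm_one]
    exact (pow_eq_one_iff_of_nonneg (norm_nonneg z) (by norm_num)).mp this
  have hc : z * (starRingEnd ℂ) z = 1 := by
    rw [Complex.mul_conj, Complex.normSq_eq_norm_sq, hn]; simp
  have hc2 : (starRingEnd ℂ) z = z ^ 2 := by
    calc (starRingEnd ℂ) z = z ^ 3 * (starRingEnd ℂ) z := by rw [hz, one_mul]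
      _ = z ^ 2 * (z * (starRingEnd ℂ) z) := by ring
      _ = z ^ 2 := by rw [hc, mul_one]
  have h2 : ((2 * z.re : ℝ) : ℂ) = z + z ^ 2 := by
    rw [← Complex.add_conj, hc2]
  rw [h2]
  split_ifs with h
  · rw [h]; norm_num
  · have : (z - 1) * (1 + (z + z ^ 2)) = 0 := by linear_combination hz
    rcases mul_eq_zero.mp this with h' | h'
    · exact absurd (sub_eq_zero.mp h') h
    · exact h'.symm

lemma mulChar_cube (χ : MulChar (ZMod p) ℂ) (hχ : orderOf χ = 3) {u : ZMod p} (hu : u ≠ 0) :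
    χ u ^ 3 = 1 := by
  have h3 : χ ^ 3 = 1 := by rw [← hχ, pow_orderOf_eq_one]
  rw [← MulChar.pow_apply' _ (by norm_num), h3, MulChar.one_apply (Ne.isUnit hu)]

lemma card_trace_zero_ne :
    ((Finset.univ.filter (fun y : E => Algebra.trace (ZMod p) E y = 0 ∧ y ≠ 0)).card : ℂ) =
      (p : ℂ) ^ (Module.finrank (ZMod p) E - 1) - 1 := by
  have : Finset.univ.filter (fun y : E => Algebra.trace (ZMod p) E y = 0 ∧ y ≠ 0) =
    (Finset.univ.filter (fun y : E => Algebra.trace (ZMod p) E y = 0)).erase 0 := by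
    ext y
    simp [and_comm]
  rw [this, Finset.card_erase_of_mem (by simp), card_trace_zero,
    Nat.cast_sub (Nat.one_le_pow _ _ (Fact.out : p.Prime).pos)]
  simp

lemma count_eq (χ : MulChar (ZMod p) ℂ) (hχ : orderOf χ = 3) (ζ : ℂ) (hζ : ζ ^ 3 = 1) (i : ℕ) :
    ((Finset.univ.filter (fun y : E => (Algebra.trace (ZMod p) E y = 0 ∧ y ≠ 0) ∧
      χ (Algebra.norm (ZMod p) y) = ζ ^ i)).card : ℂ) =
    (1 / 3) * ((p : ℂ) ^ (Module.finrank (ZMod p) E - 1) - 1 +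
      2 * ((trS E χ * ζ ^ (2 * i)).re : ℂ)) := by
  have hζi : (ζ ^ i) ^ 3 = 1 := by rw [← pow_mul, mul_comm, pow_mul, hζ, one_pow]
  have h1 : trS E χ = ∑ y ∈ Finset.univ.filter
      (fun y : E => Algebra.trace (ZMod p) E y = 0 ∧ y ≠ 0), χ (Algebra.norm (ZMod p) y) := by
    unfold trS
    symm
    refine Finset.sum_subset (fun y hy => ?_) (fun y hy hy' => ?_)
    · simp only [Finset.mem_filter, Finset.mem_univ, true_and] at hy ⊢
      exact hy.1
    · simp only [Finset.mem_filter, Finset.mem_univ, true_and] at hy hy'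
      have : y = 0 := by
        by_contra h
        exact hy' ⟨hy, h⟩
      rw [this, Algebra.norm_zero, MulChar.map_zero]
  rw [h1, ← card_trace_zero_ne (E := E), Finset.sum_mul, Complex.re_sum, ← Finset.filter_filter,
    Finset.card_filter, Finset.card_eq_sum_ones]
  push_cast
  rw [Finset.mul_sum, ← Finset.sum_add_distrib, Finset.mul_sum]
  refine Finset.sum_congr rfl fun y hy => ?_
  simp only [Finset.mem_filter, Finset.mem_univ, true_and] at hy
  have hN : Algebra.norm (ZMod p) y ≠ 0 := Algebra.norm_ne_zero_iff.mpr hy.2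
  have hv := mulChar_cube χ hχ hN
  set v := χ (Algebra.norm (ZMod p) y)
  have hz : (v * ζ ^ (2 * i)) ^ 3 = 1 := by
    rw [mul_pow, hv, one_mul, ← pow_mul, mul_comm, pow_mul, hζ, one_pow]
  have := cube_ind _ hz
  have hiff : v * ζ ^ (2 * i) = 1 ↔ v = ζ ^ i := by
    rw [mul_comm 2 i, pow_mul]
    constructor
    · intro h
      calc v = v * (ζ ^ i) ^ 3 := by rw [hζi, mul_one]
        _ = (v * (ζ ^ i) ^ 2) * ζ ^ i := by ring
        _ = ζ ^ i := by rw [h, one_mul]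
    · rintro h
      rw [h, ← hζi]; ring
  simp only [hiff] at this
  push_cast at this
  rw [← this]
  split_ifs <;> norm_num

lemma exists_pow_iff (hp : p % 3 = 1)
    (g : (ZMod p)ˣ) (hg : ∀ u : (ZMod p)ˣ, u ∈ Subgroup.zpowers g)
    (ζ : ℂ) (hζ : IsPrimitiveRoot ζ 3)
    (χ : MulChar (ZMod p) ℂ) (hχg : χ (g : ZMod p) = ζ) (h : ℕ) (u : ZMod p) :
    (∃ k : ℕ, u = (g : ZMod p) ^ (h + 3 * k)) ↔ u ≠ 0 ∧ χ u = ζ ^ h := by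
  constructor
  · rintro ⟨k, rfl⟩
    refine ⟨pow_ne_zero _ g.ne_zero, ?_⟩
    rw [map_pow, hχg, pow_add, pow_mul, hζ.pow_eq_one, one_pow, mul_one]
  · rintro ⟨hu, hχ⟩
    obtain ⟨n, hn⟩ := mem_powers_iff_mem_zpowers.mpr (hg (Units.mk0 u hu))
    have hx : u = (g : ZMod p) ^ n := by
      have := congrArg Units.val hn
      simpa using this.symm
    rw [hx, map_pow, hχg] at hχ
    have hmod : n ≡ h [MOD 3] := by
      rw [pow_eq_pow_mod n hζ.pow_eq_one, pow_eq_pow_mod h hζ.pow_eq_one] at hχ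
      exact hζ.pow_inj (Nat.mod_lt _ (by norm_num)) (Nat.mod_lt _ (by norm_num)) hχ
    have hp2 := (Fact.out : p.Prime).two_le
    have h1 : (g : ZMod p) ^ (p - 1) = 1 := ZMod.pow_card_sub_one_eq_one g.ne_zero
    obtain ⟨j, hj⟩ : 3 ∣ p - 1 := by omega
    have hle : h ≤ n + (p - 1) * h := by
      have : 1 * h ≤ (p - 1) * h := Nat.mul_le_mul_right _ (by omega)
      omega
    have hmod2 : h ≡ n + (p - 1) * h [MOD 3] := by
      rw [hj, mul_assoc]
      unfold Nat.ModEq at hmod ⊢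
      omega
    obtain ⟨k, hk⟩ := (Nat.modEq_iff_dvd' hle).mp hmod2
    refine ⟨k, ?_⟩
    rw [← hk, Nat.add_sub_cancel' hle, pow_add, pow_mul, h1, one_pow, mul_one, hx]

lemma NN_reduce (m t : ℕ) (ht : t ∣ m) (ht0 : 0 < t) (hm : 0 < m)
    (K : Type*) [Field K] [Fintype K] [Algebra (ZMod p) K]
    (hK : Fintype.card K = p ^ m) (hE : Module.finrank (ZMod p) E = t)
    (hpmt : ¬ p ∣ m / t) (g : ZMod p) (s h : ℕ) :
    NN (ZMod p) K g s h t 0 =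
      (Finset.univ.filter (fun y : E => Algebra.trace (ZMod p) E y = 0 ∧
        ∃ k : ℕ, (Algebra.norm (ZMod p) y) ^ (m / t) = g ^ (h + s * k))).card := by
  have hp := (Fact.out : p.Prime)
  have hKr : Module.finrank (ZMod p) K = m := by
    have := Module.card_eq_pow_finrank (K := ZMod p) (V := K)
    rw [hK, ZMod.card] at this
    exact (Nat.pow_right_injective hp.two_le this).symm
  obtain ⟨f⟩ := FiniteField.nonempty_algHom_of_finrank_dvd (F := ZMod p) (K := E) (L := K)
    (by rw [hE, hKr]; exact ht)
  letI : Algebra E K := f.toRingHom.toAlgebra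
  haveI : IsScalarTower (ZMod p) E K := IsScalarTower.of_algebraMap_eq (fun x => (f.commutes x).symm)
  have hfr : Module.finrank E K = m / t := by
    have := Module.finrank_mul_finrank (ZMod p) E K
    rw [hE, hKr] at this
    rw [← this, Nat.mul_div_cancel_left _ ht0]
  have hEc : Fintype.card E = p ^ t := by
    rw [Module.card_eq_pow_finrank (K := ZMod p) (V := E), ZMod.card, hE]
  have htr : ∀ y : E, Algebra.trace (ZMod p) K (algebraMap E K y) =
      ((m / t : ℕ) : ZMod p) * Algebra.trace (ZMod p) E y := by
    intro y
    rw [← Algebra.trace_trace (S := E), Algebra.trace_algebraMap, hfr, map_nsmul, nsmul_eq_mul]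
  have hno : ∀ y : E, Algebra.norm (ZMod p) (algebraMap E K y) =
      (Algebra.norm (ZMod p) y) ^ (m / t) := by
    intro y
    rw [← Algebra.norm_norm (S := E), Algebra.norm_algebraMap, hfr, map_pow]
  have hM : ((m / t : ℕ) : ZMod p) ≠ 0 := by
    rwa [Ne, ZMod.natCast_eq_zero_iff]
  have hinj : Function.Injective (algebraMap E K) := (algebraMap E K).injective
  have hlt : 1 < p ^ t := Nat.one_lt_pow ht0.ne' hp.one_lt
  have hsurj : ∀ x : K, x ^ p ^ t = x → ∃ y : E, algebraMap E K y = x := by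
    have hq : (X ^ p ^ t - X : K[X]) ≠ 0 := FiniteField.X_pow_card_sub_X_ne_zero K hlt
    have hsub : Finset.univ.image (algebraMap E K) ⊆ (X ^ p ^ t - X : K[X]).roots.toFinset := by
      intro x hx
      obtain ⟨y, _, rfl⟩ := Finset.mem_image.mp hx
      rw [Multiset.mem_toFinset, mem_roots hq]
      simp only [IsRoot.def, eval_sub, eval_pow, eval_X]
      rw [← map_pow, ← hEc, FiniteField.pow_card, sub_self]
    have heq := Finset.eq_of_subset_of_card_le hsub (by
      rw [Finset.card_image_of_injective _ hinj, Finset.card_univ, hEc]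
      refine (Multiset.toFinset_card_le _).trans ((card_roots' _).trans ?_)
      rw [FiniteField.X_pow_card_sub_X_natDegree_eq K hlt])
    intro x hx
    have : x ∈ (X ^ p ^ t - X : K[X]).roots.toFinset := by
      rw [Multiset.mem_toFinset, mem_roots hq]
      simp [hx]
    rw [← heq] at this
    obtain ⟨y, _, hy⟩ := Finset.mem_image.mp this
    exact ⟨y, hy⟩
  unfold NN
  rw [Nat.card_eq_fintype_card, Fintype.card_subtype]
  symm
  refine Finset.card_bij (fun y _ => algebraMap E K y) ?_ ?_ ?_
  · intro y hy
    simp only [Finset.mem_filter, Finset.mem_univ, true_and] at hy ⊢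
    refine ⟨?_, ?_, ?_⟩
    · rw [ZMod.card, ← map_pow, ← hEc, FiniteField.pow_card]
    · rw [htr, hy.1, mul_zero]
    · rw [hno]; exact hy.2
  · intro a _ b _ hab
    exact hinj hab
  · intro x hx
    simp only [Finset.mem_filter, Finset.mem_univ, true_and] at hx
    rw [ZMod.card] at hx
    obtain ⟨y, rfl⟩ := hsurj x hx.1
    refine ⟨y, ?_, rfl⟩
    simp only [Finset.mem_filter, Finset.mem_univ, true_and]
    rw [htr, hno] at hx
    exact ⟨(mul_eq_zero.mp hx.2.1).resolve_left hM, hx.2.2⟩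

end Fin
/-- The values of `N_t` for `s = 3`, `q = p ≡ 1 (mod 3)` and `a = 0`, assuming
`p ∤ m/t` and `d ∣ h`, in terms of `π_3 = χ_3(2)·(a_3 + i·b_3·√3)` and `ζ = e^{2πi/3}`. -/
theorem stmt14 (p m h t d l i0 : ℕ) [Fact p.Prime] (hm : 2 ≤ m)
    (ht : t ∣ m) (ht0 : 0 < t)
    (K : Type*) [Field K] [Fintype K] [Algebra (ZMod p) K]
    (hK : Fintype.card K = p ^ m)
    (hp : p % 3 = 1)
    (g : (ZMod p)ˣ) (hg : ∀ u : (ZMod p)ˣ, u ∈ Subgroup.zpowers g)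
    (hh : h < 3)
    (ζ : ℂ) (hζ : ζ = Complex.exp (2 * Real.pi * Complex.I / 3))
    (χ3 : MulChar (ZMod p) ℂ) (hχ3o : orderOf χ3 = 3) (hχ3g : χ3 (g : ZMod p) = ζ)
    (a3 b3 : ℤ) (hab : a3 ^ 2 + 3 * b3 ^ 2 = (p : ℤ))
    (ha3 : a3 ≡ -1 [ZMOD 3])
    (hb3 : ((3 * b3 : ℤ) : ZMod p) = (2 * (g : ZMod p) ^ ((p - 1) / 3) + 1) * (a3 : ZMod p))
    (π3 : ℂ) (hπ3 : π3 = χ3 (2 : ZMod p) * ((a3 : ℂ) + Complex.I * (b3 : ℂ) * (Real.sqrt 3 : ℂ)))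
    (hd : d = Nat.gcd (m / t) 3) (hl : l = Nat.gcd t (3 / d))
    (hpmt : ¬ p ∣ m / t) (hdh : d ∣ h)
    (hi0 : i0 < 3 / d ∧ (m / (d * t)) * i0 ≡ h / d [MOD 3 / d]) :
    (d = 1 ∧ l = 1 →
      (NN (ZMod p) K (g : ZMod p) 3 h t 0 : ℂ) = ((p : ℂ) ^ (t - 1) - 1) / 3) ∧
    (d = 1 ∧ l = 3 →
      (NN (ZMod p) K (g : ZMod p) 3 h t 0 : ℂ) =
        (1 / 3) * ((p : ℂ) ^ (t - 1) - 1 -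
          2 * (-1 : ℂ) ^ t * (p : ℂ) ^ ((t - 3) / 3) * ((p : ℂ) - 1) *
            ((π3 ^ (t / 3) * ζ ^ (2 * i0)).re : ℂ))) ∧
    (d = 3 ∧ l = 1 →
      (NN (ZMod p) K (g : ZMod p) 3 h t 0 : ℂ) = (p : ℂ) ^ (t - 1) - 1) := by
  have hprime := (Fact.out : p.Prime)
  have hprim : IsPrimitiveRoot ζ 3 := by
    have := Complex.isPrimitiveRoot_exp 3 (by norm_num)
    rw [hζ]; exact_mod_cast this
  have hζ3 : ζ ^ 3 = 1 := hprim.pow_eq_one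
  have hζeq : 2 * ζ + 1 = Complex.I * (Real.sqrt 3 : ℂ) := by
    have : ζ = Complex.exp (((2 * Real.pi / 3 : ℝ) : ℂ) * Complex.I) := by
      rw [hζ]; congr 1; push_cast; ring
    rw [this, Complex.exp_mul_I, ← Complex.ofReal_cos, ← Complex.ofReal_sin,
      show 2 * Real.pi / 3 = Real.pi - Real.pi / 3 by ring, Real.cos_pi_sub, Real.sin_pi_sub,
      Real.cos_pi_div_three, Real.sin_pi_div_three]
    push_cast
    ring
  have hζ2 : ζ * ζ + ζ + 1 = 0 := by
    have : (ζ - 1) * (ζ * ζ + ζ + 1) = 0 := by linear_combination hζ3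
    rcases mul_eq_zero.mp this with h | h
    · exact absurd (sub_eq_zero.mp h) (hprim.ne_one (by norm_num))
    · exact h
  have hJ : jacobiSum χ3 χ3 = π3 := by
    rw [jac_eq hp g hg ζ hζ2 χ3 hχ3o hχ3g a3 b3 hab ha3 hb3, hπ3, hζeq]
    ring
  letI : Fintype (GaloisField p t) := Fintype.ofFinite _
  have hE : Module.finrank (ZMod p) (GaloisField p t) = t := GaloisField.finrank p ht0.ne'
  rw [NN_reduce (E := GaloisField p t) m t ht ht0 (by omega) K hK hE hpmt]
  simp only [exists_pow_iff hp g hg ζ hprim χ3 hχ3g]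
  set M := m / t with hMdef
  have hM0 : M ≠ 0 := by
    intro h0
    exact hpmt (h0 ▸ dvd_zero p)
  have hset1 : ∀ i : ℕ, Nat.Coprime M 3 → M * i ≡ h [MOD 3] →
      (Finset.univ.filter (fun y : GaloisField p t => Algebra.trace (ZMod p) (GaloisField p t) y = 0 ∧
        Algebra.norm (ZMod p) y ^ M ≠ 0 ∧ χ3 (Algebra.norm (ZMod p) y ^ M) = ζ ^ h)) =
      (Finset.univ.filter (fun y : GaloisField p t =>
        (Algebra.trace (ZMod p) (GaloisField p t) y = 0 ∧ y ≠ 0) ∧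
        χ3 (Algebra.norm (ZMod p) y) = ζ ^ i)) := by
    intro i hcop hi
    ext y
    simp only [Finset.mem_filter, Finset.mem_univ, true_and]
    rw [Ne, pow_eq_zero_iff hM0, Algebra.norm_eq_zero_iff, and_assoc]
    refine and_congr_right fun _ => and_congr_right fun hy => ?_
    have hv := mulChar_cube χ3 hχ3o (Algebra.norm_ne_zero_iff.mpr hy)
    rw [map_pow]
    set v := χ3 (Algebra.norm (ZMod p) y)
    have hzh : ζ ^ h = (ζ ^ i) ^ M := by
      rw [← pow_mul, mul_comm i M, pow_eq_pow_mod h hζ3, pow_eq_pow_mod (M * i) hζ3, hi]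
    rw [hzh]
    constructor
    · intro hvv
      have hne : ζ ^ i ≠ 0 := pow_ne_zero _ (hprim.ne_zero (by norm_num))
      have e1 : (v / ζ ^ i) ^ M = 1 := by
        rw [div_pow, hvv, div_self (pow_ne_zero _ hne)]
      have e2 : (v / ζ ^ i) ^ 3 = 1 := by
        rw [div_pow, hv, ← pow_mul, mul_comm, pow_mul, hζ3, one_pow, div_one]
      have e3 : v / ζ ^ i = 1 := by
        have := pow_gcd_eq_one.mpr ⟨e1, e2⟩
        rwa [Nat.Coprime.gcd_eq_one hcop, pow_one] at this
      rwa [div_eq_one_iff_eq hne] at e3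
    · intro h; rw [h]
  refine ⟨?_, ?_, ?_⟩
  · rintro ⟨hd1, hl1⟩
    rw [hd1] at hd hl hi0
    simp only [one_mul, Nat.div_one] at hl hi0
    rw [hset1 i0 hd.symm hi0.2, count_eq χ3 hχ3o ζ hζ3 i0, hE,
      trS_eq_zero χ3 g g.ne_zero, zero_mul, Complex.zero_re]
    · simp; ring
    · rw [hE, hχ3g]
      intro h1
      have h2 := (hprim.pow_eq_one_iff_dvd t).mp h1
      rw [hl1, Nat.gcd_eq_right h2] at hl
      omega
  · rintro ⟨hd1, hl1⟩
    rw [hd1] at hd hl hi0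
    simp only [one_mul, Nat.div_one] at hl hi0
    have h3t : 3 ∣ t := by
      rw [hl1] at hl
      rw [hl]; exact Nat.gcd_dvd_left _ _
    rw [hset1 i0 hd.symm hi0.2, count_eq χ3 hχ3o ζ hζ3 i0, hE,
      trS_jac χ3 hχ3o (by rw [hE]; exact h3t), hE, hJ]
    have e : -((-1 : ℂ) ^ t * (p : ℂ) ^ ((t - 3) / 3) * ((p : ℂ) - 1) * π3 ^ (t / 3)) * ζ ^ (2 * i0)
        = ((-((-1) ^ t * (p : ℝ) ^ ((t - 3) / 3) * ((p : ℝ) - 1)) : ℝ) : ℂ) *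
          (π3 ^ (t / 3) * ζ ^ (2 * i0)) := by
      push_cast; ring
    rw [e, Complex.re_ofReal_mul]
    push_cast
    ring
  · rintro ⟨hd1, _⟩
    rw [hd1] at hd hdh
    have hh0 : h = 0 := Nat.eq_zero_of_dvd_of_lt hdh hh
    have h3M : 3 ∣ M := by rw [hd]; exact Nat.gcd_dvd_left _ _
    have : (Finset.univ.filter (fun y : GaloisField p t => Algebra.trace (ZMod p) (GaloisField p t) y = 0 ∧
        Algebra.norm (ZMod p) y ^ M ≠ 0 ∧ χ3 (Algebra.norm (ZMod p) y ^ M) = ζ ^ h)) =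
      (Finset.univ.filter (fun y : GaloisField p t =>
        Algebra.trace (ZMod p) (GaloisField p t) y = 0 ∧ y ≠ 0)) := by
      ext y
      simp only [Finset.mem_filter, Finset.mem_univ, true_and]
      rw [Ne, pow_eq_zero_iff hM0, Algebra.norm_eq_zero_iff]
      refine and_congr_right fun _ => ?_
      refine ⟨fun h => h.1, fun hy => ⟨hy, ?_⟩⟩
      have hv := mulChar_cube χ3 hχ3o (Algebra.norm_ne_zero_iff.mpr hy)
      obtain ⟨j, hj⟩ := h3M
      rw [hh0, map_pow, hj, pow_mul, hv, one_pow, pow_zero]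
    rw [this, card_trace_zero_ne, hE]

end
end

section
/- Assume s = 3, q = p, p ∤ (m/t), d | h, and a ≠ 0. Set a_0 = −(m/t)·a^{−1} ∈ F_p^*, and Q_{t,3} = p^{(t−1)/3}·π_3^{(t−1)/3}·χ̄_3(a_0)·ζ^{2·i_0} if t ≡ 1 (mod 3), Q_{t,3} = p^{(t−2)/3}·π_3^{(t+1)/3}·χ_3(a_0)·ζ^{2·i_0} if t ≡ 2 (mod 3). Then: if (d,l) = (1,1) then N_t = (1/3)·( p^{t−1} − 2·(−1)^t·Re Q_{t,3} ); if (d,l) = (1,3) then N_t = (1/3)·( p^{t−1} + 2·(−1)^t·p^{(t−3)/3}·Re(π_3^{t/3}·ζ^{2·i_0}) ); if (d,l) = (3,1) then N_t = p^{t−1}. Here the possible values of (d,l) are: (1,1) when 3 ∤ m/t and 3 ∤ t, (1,3) when 3 ∤ m/t and 3 | t, (3,1) when 3 | m/t. -/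
noncomputable section

open Complex Polynomial Classical

namespace HD
variable {p : ℕ} [Fact p.Prime]

instance instFT (k : ℕ) : Fintype (GaloisField p k) := Fintype.ofFinite _

/-- charpoly-like -/
def cp {k : ℕ} (x : GaloisField p k) : (ZMod p)[X] :=
  (minpoly (ZMod p) x) ^ (k / (minpoly (ZMod p) x).natDegree)

def lam (χ : MulChar (ZMod p) ℂ) (ψ : AddChar (ZMod p) ℂ) (f : (ZMod p)[X]) : ℂ :=
  χ ((-1) ^ f.natDegree * f.coeff 0) * ψ (-f.nextCoeff)

lemma isInt {k : ℕ} (x : GaloisField p k) : IsIntegral (ZMod p) x :=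
  Algebra.IsIntegral.isIntegral x

lemma cp_monic {k : ℕ} (x : GaloisField p k) : (cp x).Monic :=
  (minpoly.monic (isInt x)).pow _

lemma deg_mul {k : ℕ} (hk : k ≠ 0) (x : GaloisField p k) :
    (minpoly (ZMod p) x).natDegree * Module.finrank (IntermediateField.adjoin (ZMod p) {x}) (GaloisField p k) = k := by
  rw [← IntermediateField.adjoin.finrank (isInt x), Module.finrank_mul_finrank, GaloisField.finrank p hk]

lemma deg_pos {k : ℕ} (x : GaloisField p k) : 0 < (minpoly (ZMod p) x).natDegree :=
  minpoly.natDegree_pos (isInt x)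

lemma div_eq {k : ℕ} (hk : k ≠ 0) (x : GaloisField p k) :
    k / (minpoly (ZMod p) x).natDegree = Module.finrank (IntermediateField.adjoin (ZMod p) {x}) (GaloisField p k) := by
  exact Nat.div_eq_of_eq_mul_right (deg_pos x) (deg_mul hk x).symm

lemma cp_deg {k : ℕ} (hk : k ≠ 0) (x : GaloisField p k) : (cp x).natDegree = k := by
  rw [cp, natDegree_pow, div_eq hk, mul_comm, deg_mul hk]

lemma lam_cp (χ : MulChar (ZMod p) ℂ) (ψ : AddChar (ZMod p) ℂ) {k : ℕ} (hk : k ≠ 0)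
    (x : GaloisField p k) :
    lam χ ψ (cp x) = χ (Algebra.norm (ZMod p) x) * ψ (Algebra.trace (ZMod p) _ x) := by
  rw [lam, cp_deg hk]
  congr 2
  · rw [Algebra.norm_eq_norm_adjoin]
    have := Algebra.PowerBasis.norm_gen_eq_coeff_zero_minpoly
      (IntermediateField.adjoin.powerBasis (isInt x))
    rw [IntermediateField.adjoin.powerBasis_gen, IntermediateField.minpoly_gen,
      IntermediateField.adjoin.powerBasis_dim] at this
    rw [this, mul_pow, ← pow_mul, deg_mul hk, cp, div_eq hk, coeff_zero_eq_eval_zero, coeff_zero_eq_eval_zero, eval_pow]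
  · rw [trace_eq_finrank_mul_minpoly_nextCoeff, cp, div_eq hk, (minpoly.monic (isInt x)).nextCoeff_pow]
    simp

lemma lam_mul (χ : MulChar (ZMod p) ℂ) (ψ : AddChar (ZMod p) ℂ) {f g : (ZMod p)[X]}
    (hf : f.Monic) (hg : g.Monic) : lam χ ψ (f * g) = lam χ ψ f * lam χ ψ g := by
  rw [lam, lam, lam, hf.natDegree_mul hg, hf.nextCoeff_mul hg, mul_coeff_zero, pow_add, neg_add,
    AddChar.map_add_eq_mul]
  have : ((-1:ZMod p) ^ f.natDegree * (-1) ^ g.natDegree * (f.coeff 0 * g.coeff 0)) =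
    ((-1) ^ f.natDegree * f.coeff 0) * ((-1) ^ g.natDegree * g.coeff 0) := by ring
  rw [this, map_mul]
  ring

/-- count -/
def cnt (N : ℕ) (f : (ZMod p)[X]) : ℕ :=
  ∑ k ∈ Finset.Icc 1 N, (Finset.univ.filter (fun x : GaloisField p k => cp x ∣ f)).card

lemma root_card {k : ℕ} (hk : k ≠ 0) {P : (ZMod p)[X]} (hP : Irreducible P) :
    (Finset.univ.filter (fun x : GaloisField p k => aeval x P = 0)).card =
      if P.natDegree ∣ k then P.natDegree else 0 := by
  split_ifs with h
  · rw [hP.natDegree_dvd_iff_dvd_X_pow_card_pow_sub_X] at h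
    have hs : (P.map (algebraMap (ZMod p) (GaloisField p k))).Splits := by
      refine Splits.of_dvd ?_ ?_ (map_dvd (mapRingHom (algebraMap (ZMod p) (GaloisField p k))) h)
      · rw [Nat.card_zmod]
        have := FiniteField.isSplittingField_of_nat_card_eq p k (GaloisField.card p k hk)
        exact IsSplittingField.splits (GaloisField p k) (X ^ p ^ k - X : (ZMod p)[X])
      · rw [coe_mapRingHom]
        exact map_ne_zero (FiniteField.X_pow_card_pow_sub_X_ne_zero _ hk Finite.one_lt_card)
    rw [← card_rootSet_eq_natDegree (K := GaloisField p k) (PerfectField.separable_of_irreducible hP) hs,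
      ← Set.toFinset_card]
    congr 1
    ext x
    simp [mem_rootSet, hP.ne_zero]
  · rw [Finset.card_eq_zero, Finset.filter_eq_empty_iff]
    intro x _ hx
    apply h
    have h1 : Associated (minpoly (ZMod p) x) P :=
      (minpoly.irreducible (isInt x)).associated_of_dvd hP (minpoly.dvd _ _ hx)
    rw [← natDegree_eq_of_degree_eq (degree_eq_degree_of_associated h1)]
    exact ⟨_, (deg_mul hk x).symm⟩

lemma cp_dvd_pow {k : ℕ} (hk : k ≠ 0) {P : (ZMod p)[X]} (hP : Irreducible P) (i : ℕ)
    (x : GaloisField p k) : cp x ∣ P ^ i ↔ aeval x P = 0 ∧ k / P.natDegree ≤ i := by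
  have key : aeval x P = 0 → (cp x ∣ P ^ i ↔ k / P.natDegree ≤ i) := by
    intro hx
    have h1 : Associated (minpoly (ZMod p) x) P :=
      (minpoly.irreducible (isInt x)).associated_of_dvd hP (minpoly.dvd _ _ hx)
    rw [cp, natDegree_eq_of_degree_eq (degree_eq_degree_of_associated h1),
      (h1.pow_pow).dvd_iff_dvd_left, pow_dvd_pow_iff hP.ne_zero hP.not_isUnit]
  constructor
  · intro h
    have hx : aeval x P = 0 := by
      have h2 : minpoly (ZMod p) x ∣ P ^ i := by
        refine (dvd_pow_self _ ?_).trans h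
        rw [div_eq hk]
        intro h0
        have := deg_mul hk x
        rw [h0] at this; omega
      have h3 := (minpoly.irreducible (isInt x)).prime.dvd_of_dvd_pow h2
      exact (minpoly.dvd_iff).1 h3
    exact ⟨hx, (key hx).1 h⟩
  · rintro ⟨hx, h⟩
    exact (key hx).2 h

lemma cnt_eq (f : (ZMod p)[X]) : f ≠ 0 → ∀ N, f.natDegree ≤ N → cnt N f = f.natDegree := by
  refine UniqueFactorizationMonoid.induction_on_coprime
    (P := fun f : (ZMod p)[X] => f ≠ 0 → ∀ N, f.natDegree ≤ N → cnt N f = f.natDegree) f ?_ ?_ ?_ ?_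
  · intro h; exact absurd rfl h
  · intro u hu _ N _
    rw [natDegree_eq_zero_of_isUnit hu, cnt, Finset.sum_eq_zero]
    intro k hk
    rw [Finset.mem_Icc] at hk
    rw [Finset.card_eq_zero, Finset.filter_eq_empty_iff]
    intro x _ hx
    have h1 := natDegree_eq_zero_of_isUnit (isUnit_of_dvd_unit hx hu)
    rw [cp_deg (by omega)] at h1
    omega
  · intro P i hP _ N hN
    have hP' := hP.irreducible
    have hd := hP'.natDegree_pos
    rw [natDegree_pow] at hN ⊢
    have : ∀ k ∈ Finset.Icc 1 N, (Finset.univ.filter (fun x : GaloisField p k => cp x ∣ P ^ i)).card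
        = if (P.natDegree ∣ k ∧ k / P.natDegree ≤ i) then P.natDegree else 0 := by
      intro k hk
      rw [Finset.mem_Icc] at hk
      have hk0 : k ≠ 0 := by omega
      simp_rw [cp_dvd_pow hk0 hP' i]
      by_cases h : k / P.natDegree ≤ i
      · simp only [h, and_true]
        exact root_card hk0 hP'
      · simp [h]
    rw [cnt, Finset.sum_congr rfl this, ← Finset.sum_filter, Finset.sum_const, smul_eq_mul]
    congr 1
    have : (Finset.Icc 1 N).filter (fun k => P.natDegree ∣ k ∧ k / P.natDegree ≤ i) =
        (Finset.Icc 1 i).image (fun j => P.natDegree * j) := by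
      ext k
      simp only [Finset.mem_filter, Finset.mem_Icc, Finset.mem_image]
      constructor
      · rintro ⟨⟨h1, h2⟩, ⟨j, rfl⟩, h4⟩
        rw [Nat.mul_div_cancel_left _ hd] at h4
        refine ⟨j, ⟨?_, h4⟩, rfl⟩
        rcases Nat.eq_zero_or_pos j with h | h
        · subst h; simp at h1
        · exact h
      · rintro ⟨j, ⟨h1, h2⟩, rfl⟩
        rw [Nat.mul_div_cancel_left _ hd]
        refine ⟨⟨Nat.mul_pos hd h1, ?_⟩, dvd_mul_right _ _, h2⟩
        calc P.natDegree * j ≤ P.natDegree * i := Nat.mul_le_mul_left _ h2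
          _ ≤ N := by rw [mul_comm]; exact hN
    rw [this, Finset.card_image_of_injective, Nat.card_Icc]
    · omega
    · intro a b hab
      exact Nat.eq_of_mul_eq_mul_left hd hab
  · intro f g hfg hf hg h0 N hN
    have hf0 := left_ne_zero_of_mul h0
    have hg0 := right_ne_zero_of_mul h0
    rw [natDegree_mul hf0 hg0] at hN ⊢
    rw [← hf hf0 N (by omega), ← hg hg0 N (by omega), cnt, cnt, cnt, ← Finset.sum_add_distrib]
    apply Finset.sum_congr rfl
    intro k hk
    rw [Finset.mem_Icc] at hk
    have hk0 : k ≠ 0 := by omega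
    rw [← Finset.card_union_of_disjoint]
    · congr 1
      ext x
      simp only [Finset.mem_filter, Finset.mem_univ, true_and, Finset.mem_union]
      constructor
      · intro h
        by_cases hm : minpoly (ZMod p) x ∣ f
        · left
          have hm2 : ¬ minpoly (ZMod p) x ∣ g := fun h2 =>
            (minpoly.irreducible (isInt x)).not_isUnit (hfg hm h2)
          exact (minpoly.irreducible (isInt x)).prime.pow_dvd_of_dvd_mul_right _ hm2 h
        · right
          exact (minpoly.irreducible (isInt x)).prime.pow_dvd_of_dvd_mul_left _ hm h
      · rintro (h | h)
        · exact h.mul_right _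
        · exact h.mul_left _
    · rw [Finset.disjoint_filter]
      intro x _ h1 h2
      have := natDegree_eq_zero_of_isUnit (hfg h1 h2)
      rw [cp_deg hk0] at this
      omega

end HD

namespace HD
variable {p : ℕ} [Fact p.Prime]

lemma Mfin (p : ℕ) [Fact p.Prime] (n : ℕ) : {f : (ZMod p)[X] | f.Monic ∧ f.natDegree = n}.Finite := by
  apply Set.Finite.of_injOn (f := fun (f : (ZMod p)[X]) (i : Fin (n+1)) => f.coeff i)
    (t := Set.univ) (fun _ _ => Set.mem_univ _) _ Set.finite_univ
  rintro f ⟨_, hf⟩ g ⟨_, hg⟩ h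
  ext i
  by_cases hi : i < n + 1
  · exact congrFun h ⟨i, hi⟩
  · rw [coeff_eq_zero_of_natDegree_lt (by omega), coeff_eq_zero_of_natDegree_lt (by omega)]

def M (p : ℕ) [Fact p.Prime] (n : ℕ) : Finset (ZMod p)[X] := (Mfin p n).toFinset

lemma mem_M {n : ℕ} {f : (ZMod p)[X]} : f ∈ M p n ↔ f.Monic ∧ f.natDegree = n := by
  simp [M]

def ee (χ : MulChar (ZMod p) ℂ) (ψ : AddChar (ZMod p) ℂ) (n : ℕ) : ℂ := ∑ f ∈ M p n, lam χ ψ f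

def pk (χ : MulChar (ZMod p) ℂ) (ψ : AddChar (ZMod p) ℂ) (k : ℕ) : ℂ :=
  ∑ x : GaloisField p k, χ (Algebra.norm (ZMod p) x) * ψ (Algebra.trace (ZMod p) _ x)

variable (χ : MulChar (ZMod p) ℂ) (ψ : AddChar (ZMod p) ℂ)

lemma inner {n k : ℕ} (hk : k ≠ 0) (hkn : k ≤ n) (x : GaloisField p k) :
    ∑ f ∈ (M p n).filter (fun f => cp x ∣ f), lam χ ψ f = lam χ ψ (cp x) * ee χ ψ (n - k) := by
  rw [ee, Finset.mul_sum]
  symm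
  refine Finset.sum_bij (fun g _ => cp x * g) ?_ ?_ ?_ ?_
  · intro g hg
    rw [mem_M] at hg
    rw [Finset.mem_filter, mem_M]
    refine ⟨⟨(cp_monic x).mul hg.1, ?_⟩, dvd_mul_right _ _⟩
    rw [(cp_monic x).natDegree_mul hg.1, cp_deg hk, hg.2]; omega
  · intro g _ g' _ h
    exact mul_left_cancel₀ (cp_monic x).ne_zero h
  · intro f hf
    rw [Finset.mem_filter, mem_M] at hf
    obtain ⟨⟨hf1, hf2⟩, g, rfl⟩ := hf
    have hg := (cp_monic x).of_mul_monic_left hf1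
    refine ⟨g, ?_, rfl⟩
    rw [mem_M]
    refine ⟨hg, ?_⟩
    rw [(cp_monic x).natDegree_mul hg, cp_deg hk] at hf2; omega
  · intro g hg
    rw [mem_M] at hg
    rw [lam_mul _ _ (cp_monic x) hg.1]

lemma conv_id (n : ℕ) : (n : ℂ) * ee χ ψ n = ∑ k ∈ Finset.Icc 1 n, pk χ ψ k * ee χ ψ (n - k) := by
  have h1 : (n : ℂ) * ee χ ψ n = ∑ f ∈ M p n, ∑ k ∈ Finset.Icc 1 n,
      ∑ x : GaloisField p k, if cp x ∣ f then lam χ ψ f else 0 := by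
    rw [ee, Finset.mul_sum]
    apply Finset.sum_congr rfl
    intro f hf
    rw [mem_M] at hf
    have := cnt_eq f hf.1.ne_zero n hf.2.le
    rw [hf.2] at this
    conv_lhs => rw [← this, cnt]
    push_cast
    rw [Finset.sum_mul]
    apply Finset.sum_congr rfl
    intro k _
    rw [← Finset.sum_filter, Finset.sum_const, nsmul_eq_mul]
  rw [h1, Finset.sum_comm]
  apply Finset.sum_congr rfl
  intro k hk
  rw [Finset.mem_Icc] at hk
  rw [Finset.sum_comm, pk, Finset.sum_mul]
  apply Finset.sum_congr rfl
  intro x _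
  rw [← Finset.sum_filter, inner χ ψ (by omega) hk.2, lam_cp χ ψ (by omega)]

lemma ee_zero : ee χ ψ 0 = 1 := by
  have : M p 0 = {1} := by
    ext f
    rw [mem_M, Finset.mem_singleton]
    constructor
    · rintro ⟨h1, h2⟩
      exact h1.natDegree_eq_zero.1 h2
    · rintro rfl; simp
  rw [ee, this, Finset.sum_singleton, lam]
  simp [nextCoeff]

lemma ee_one : ee χ ψ 1 = gaussSum χ ψ := by
  rw [ee, gaussSum]
  symm
  refine Finset.sum_bij (fun a _ => X - C a) ?_ ?_ ?_ ?_
  · intro a _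
    rw [mem_M]
    exact ⟨monic_X_sub_C a, natDegree_X_sub_C a⟩
  · intro a _ b _ h
    simpa using h
  · intro f hf
    rw [mem_M] at hf
    refine ⟨-f.coeff 0, Finset.mem_univ _, ?_⟩
    have := hf.1.eq_X_add_C hf.2
    conv_rhs => rw [this]
    simp
  · intro a _
    rw [lam, natDegree_X_sub_C, nextCoeff_X_sub_C]
    simp

lemma ee_ge {ψ : AddChar (ZMod p) ℂ} (hψ : ψ ≠ 1) {n : ℕ} (hn : 2 ≤ n) : ee χ ψ n = 0 := by
  obtain ⟨b, hb⟩ := (AddChar.ne_one_iff).1 hψ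
  have key : ∀ f ∈ M p n, f + C (-b) * X ^ (n-1) ∈ M p n ∧
      lam χ ψ (f + C (-b) * X ^ (n-1)) = ψ b * lam χ ψ f := by
    intro f hf
    rw [mem_M] at hf
    have hd : (C (-b) * X ^ (n-1) : (ZMod p)[X]).degree < f.degree := by
      refine (degree_C_mul_X_pow_le _ _).trans_lt ?_
      rw [degree_eq_natDegree hf.1.ne_zero, hf.2]
      exact_mod_cast (by omega : n - 1 < n)
    have h1 : (f + C (-b) * X ^ (n-1)).Monic := hf.1.add_of_left hd
    have h2 : (f + C (-b) * X ^ (n-1)).natDegree = n := by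
      rw [natDegree_eq_of_degree_eq (degree_add_eq_left_of_degree_lt hd), hf.2]
    refine ⟨mem_M.2 ⟨h1, h2⟩, ?_⟩
    rw [lam, lam, h2, hf.2, nextCoeff_of_natDegree_pos (by omega), nextCoeff_of_natDegree_pos (by omega),
      h2, hf.2, coeff_add, coeff_add, coeff_C_mul_X_pow, coeff_C_mul_X_pow, if_neg (by omega), if_pos rfl,
      add_zero, neg_add, neg_neg, AddChar.map_add_eq_mul]
    ring
  have : ψ b * ee χ ψ n = ee χ ψ n := by
    rw [ee, Finset.mul_sum]
    refine Finset.sum_bij (fun f _ => f + C (-b) * X ^ (n-1)) (fun f hf => (key f hf).1) ?_ ?_ ?_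
    · intro f _ g _ h
      exact add_right_cancel h
    · intro f hf
      rw [mem_M] at hf
      have hd : (C (-b) * X ^ (n-1) : (ZMod p)[X]).degree < f.degree := by
        refine (degree_C_mul_X_pow_le _ _).trans_lt ?_
        rw [degree_eq_natDegree hf.1.ne_zero, hf.2]
        exact_mod_cast (by omega : n - 1 < n)
      refine ⟨f - C (-b) * X ^ (n-1), mem_M.2 ⟨hf.1.sub_of_left hd, ?_⟩, by ring⟩
      rw [natDegree_eq_of_degree_eq (degree_sub_eq_left_of_degree_lt hd), hf.2]
    · intro f hf
      exact (key f hf).2.symm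
  have h2 : (ψ b - 1) * ee χ ψ n = 0 := by rw [sub_mul, this]; ring
  exact (mul_eq_zero.1 h2).resolve_left (sub_ne_zero.2 hb)

/-- Hasse-Davenport -/
lemma pk_eq {ψ : AddChar (ZMod p) ℂ} (hψ : ψ ≠ 1) (n : ℕ) :
    pk χ ψ (n + 1) = (-1) ^ n * gaussSum χ ψ ^ (n + 1) := by
  induction n with
  | zero =>
    have := conv_id χ ψ 1
    simp [ee_zero, ee_one] at this
    simp [this]
  | succ n ih =>
    have := conv_id χ ψ (n + 2)
    rw [ee_ge χ hψ (by omega), mul_zero, Finset.sum_Icc_succ_top (by omega), Finset.sum_Icc_succ_top (by omega),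
      Finset.sum_eq_zero] at this
    · rw [show n + 1 + 1 - (n + 1) = 1 by omega, Nat.sub_self, ee_zero, ee_one, ih] at this
      rw [← sub_eq_zero]
      rw [← sub_eq_zero] at this
      rw [← neg_eq_zero, ← this]
      ring
    · intro k hk
      rw [Finset.mem_Icc] at hk
      rw [ee_ge χ hψ (by omega), mul_zero]

end HD

namespace JS
variable {p : ℕ} [Fact p.Prime]

lemma sumK (χ : MulChar (ZMod p) ℂ) (h2 : (2 : ZMod p) ≠ 0) :
    χ 4 * jacobiSum χ χ = ∑ u : ZMod p, χ (1 - u ^ 2) := by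
  rw [jacobiSum, Finset.mul_sum]
  refine Fintype.sum_bijective (fun x : ZMod p => 1 - 2 * x) ?_ _ _ ?_
  · rw [← Finite.injective_iff_bijective]
    intro x y h
    have : (2 : ZMod p) * x = 2 * y := by linear_combination -h
    exact mul_left_cancel₀ h2 this
  · intro x
    rw [← map_mul, ← map_mul]
    congr 1
    ring

lemma sum_zero {e : ℕ} (he : 2 * e < p - 1) : ∑ u : ZMod p, (1 - u ^ 2) ^ e = 0 := by
  have h1 : ∀ u : ZMod p, (1 - u ^ 2) ^ e = ∑ i ∈ Finset.range (2 * e + 1),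
      ((1 - X ^ 2 : (ZMod p)[X]) ^ e).coeff i * u ^ i := by
    intro u
    rw [← eval_eq_sum_range']
    · simp
    · refine Nat.lt_succ_of_le (natDegree_pow_le.trans ?_)
      rw [mul_comm]
      apply Nat.mul_le_mul_right
      compute_degree
  simp_rw [h1]
  rw [Finset.sum_comm]
  apply Finset.sum_eq_zero
  intro i hi
  rw [Finset.mem_range] at hi
  rw [← Finset.mul_sum, FiniteField.sum_pow_lt_card_sub_one, mul_zero]
  rw [ZMod.card]; omega

lemma even_cnt (χ : MulChar (ZMod p) ℂ) (h2 : (2 : ZMod p) ≠ 0) (z : ℂ) (hz : z ≠ 1) :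
    Even (Finset.univ.filter (fun u : ZMod p => χ (1 - u ^ 2) = z)).card := by
  rw [← ZMod.natCast_eq_zero_iff_even, Finset.card_eq_sum_ones, Nat.cast_sum]
  refine Finset.sum_involution (fun u _ => -u) ?_ ?_ ?_ ?_
  · intro u _; decide
  · intro u hu _ h
    rw [Finset.mem_filter] at hu
    have : (2 : ZMod p) * u = 0 := by linear_combination -h
    have h0 := (mul_eq_zero.1 this).resolve_left h2
    subst h0
    apply hz
    rw [← hu.2]; simp
  · intro u hu
    rw [Finset.mem_filter] at hu ⊢
    simpa using hu
  · intro u _; simp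

lemma pointwise (g : (ZMod p)ˣ) (hg : ∀ u : (ZMod p)ˣ, u ∈ Subgroup.zpowers g)
    (ζ : ℂ) (hζ3 : ζ ^ 3 = 1) (χ : MulChar (ZMod p) ℂ) (hχg : χ (g : ZMod p) = ζ) (γ : ZMod p)
    (hγ : γ = (g : ZMod p) ^ ((p - 1) / 3)) (hγ3 : γ ^ 3 = 1) (y : ZMod p) :
    (y = 0 ∧ χ y = 0 ∧ χ⁻¹ y = 0) ∨ (y ≠ 0 ∧ ∃ j < 3, χ y = ζ ^ j ∧ χ⁻¹ y = ζ ^ (2 * j) ∧ y ^ ((p-1)/3) = γ ^ j) := by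
  by_cases hy : y = 0
  · left
    subst hy
    exact ⟨rfl, MulChar.map_zero _, MulChar.map_zero _⟩
  · right
    refine ⟨hy, ?_⟩
    obtain ⟨u, rfl⟩ := (Ne.isUnit hy)
    obtain ⟨k, hk⟩ := (Submonoid.mem_powers_iff _ _).1 ((mem_powers_iff_mem_zpowers).2 (hg u))
    have hmod : ∀ {M : Type} [CommMonoid M] (z : M), z ^ 3 = 1 → z ^ k = z ^ (k % 3) := by
      intro M _ z hz
      conv_lhs => rw [← Nat.div_add_mod k 3, pow_add, pow_mul, hz, one_pow, one_mul]
    have hχ : χ (u : ZMod p) = ζ ^ (k % 3) := by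
      rw [← hk, Units.val_pow_eq_pow_val, map_pow, hχg, hmod ζ hζ3]
    refine ⟨k % 3, Nat.mod_lt _ (by norm_num), hχ, ?_, ?_⟩
    · have h1 : χ (u : ZMod p) * χ⁻¹ (u : ZMod p) = 1 := by
        rw [← MulChar.mul_apply, mul_inv_cancel, MulChar.one_apply_coe]
      rw [hχ] at h1
      have h2 : ζ ^ (k % 3) * ζ ^ (2 * (k % 3)) = 1 := by
        rw [← pow_add, ← one_mul (k % 3), ← mul_assoc, ← add_mul, pow_mul]
        norm_num [hζ3]
      have h3 : ζ ^ (k % 3) ≠ 0 := left_ne_zero_of_mul_eq_one h1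
      exact mul_left_cancel₀ h3 (h1.trans h2.symm)
    · rw [← hk, Units.val_pow_eq_pow_val, ← pow_mul, mul_comm, pow_mul, ← hγ, hmod γ hγ3]

lemma int_part (A B a b p : ℤ) (hp : 0 < p) (h1 : A ^ 2 + 3 * B ^ 2 = p) (h2 : a ^ 2 + 3 * b ^ 2 = p)
    (hA : A ≡ -1 [ZMOD 3]) (ha : a ≡ -1 [ZMOD 3]) (hd : p ∣ A * b - a * B) : A = a ∧ B = b := by
  obtain ⟨c, hc⟩ := hd
  have h3 : (A * a + 3 * B * b) ^ 2 + 3 * (p * c) ^ 2 = p ^ 2 := by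
    rw [← hc]; nth_rewrite 1 [sq p, ← h1]; rw [← h2]; ring
  have hc0 : c = 0 := by
    by_contra hne
    have : 0 < c ^ 2 := by positivity
    nlinarith [sq_nonneg (A * a + 3 * B * b), sq_pos_of_pos hp]
  subst hc0
  have h4 : A * b = a * B := by linarith
  have h5 : A ^ 2 * p = a ^ 2 * p := by
    nth_rewrite 1 [← h2]; rw [← h1]; linear_combination 3 * (A * b + a * B) * h4
  have h6 : A ^ 2 = a ^ 2 := mul_right_cancel₀ hp.ne' h5
  have hAa : A = a := by
    rcases sq_eq_sq_iff_eq_or_eq_neg.1 h6 with h | h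
    · exact h
    · exfalso
      unfold Int.ModEq at hA ha
      omega
  refine ⟨hAa, ?_⟩
  subst hAa
  have : A ≠ 0 := by
    rintro rfl
    unfold Int.ModEq at hA; omega
  exact (mul_left_cancel₀ this h4).symm

lemma zeta_sq {ζ : ℂ} (hζ : ζ = Complex.exp (2 * Real.pi * Complex.I / 3)) :
    ζ ^ 3 = 1 ∧ 1 + 2 * ζ = Complex.I * (Real.sqrt 3 : ℂ) := by
  constructor
  · rw [hζ, ← Complex.exp_nat_mul, ← Complex.exp_two_pi_mul_I]
    congr 1; push_cast; ring
  · have h : (2 * Real.pi * Complex.I / 3 : ℂ) = ((Real.pi - Real.pi / 3 : ℝ) : ℂ) * Complex.I := by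
      push_cast; ring
    rw [hζ, h, Complex.exp_mul_I, ← Complex.ofReal_cos, ← Complex.ofReal_sin, Real.cos_pi_sub,
      Real.sin_pi_sub, Real.cos_pi_div_three, Real.sin_pi_div_three]
    push_cast; ring

lemma pow_sum3 {R : Type*} [CommRing R] [IsDomain R] {z : R} (h3 : z ^ 3 = 1) (h1 : z ≠ 1) :
    1 + z + z ^ 2 = 0 := by
  have : (z - 1) * (1 + z + z ^ 2) = 0 := by linear_combination h3
  exact (mul_eq_zero.1 this).resolve_left (sub_ne_zero.2 h1)

lemma jac_eq (hp : p % 3 = 1)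
    (g : (ZMod p)ˣ) (hg : ∀ u : (ZMod p)ˣ, u ∈ Subgroup.zpowers g)
    (ζ : ℂ) (hζ : ζ = Complex.exp (2 * Real.pi * Complex.I / 3))
    (χ3 : MulChar (ZMod p) ℂ) (hχ3o : orderOf χ3 = 3) (hχ3g : χ3 (g : ZMod p) = ζ)
    (a3 b3 : ℤ) (hab : a3 ^ 2 + 3 * b3 ^ 2 = (p : ℤ))
    (ha3 : a3 ≡ -1 [ZMOD 3])
    (hb3 : ((3 * b3 : ℤ) : ZMod p) = (2 * (g : ZMod p) ^ ((p - 1) / 3) + 1) * (a3 : ZMod p)) :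
    jacobiSum χ3 χ3 = χ3 (2 : ZMod p) * ((a3 : ℂ) + Complex.I * (b3 : ℂ) * (Real.sqrt 3 : ℂ)) := by
  have hpp : p.Prime := Fact.out
  have hp7 : 7 ≤ p := by
    by_contra h
    have : p = 1 ∨ p = 4 := by omega
    rcases this with rfl | rfl
    · exact absurd hpp (by norm_num)
    · exact absurd hpp (by norm_num)
  have h2 : (2 : ZMod p) ≠ 0 := by
    intro h
    have : ((2 : ℕ) : ZMod p) = 0 := by exact_mod_cast h
    rw [ZMod.natCast_eq_zero_iff] at this
    have := Nat.le_of_dvd (by norm_num) this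
    omega
  have h3 : (3 : ZMod p) ≠ 0 := by
    intro h
    have : ((3 : ℕ) : ZMod p) = 0 := by exact_mod_cast h
    rw [ZMod.natCast_eq_zero_iff] at this
    have := Nat.le_of_dvd (by norm_num) this
    omega
  obtain ⟨hζ3, hζs⟩ := zeta_sq hζ
  have hs3 : (Real.sqrt 3 : ℂ) ^ 2 = 3 := by
    rw [← Complex.ofReal_pow, Real.sq_sqrt (by norm_num)]; norm_num
  have hζ1 : ζ ≠ 1 := by
    intro h
    rw [h] at hζs
    have := congrArg Complex.re hζs
    simp at this
    norm_num at this
  have hζsum := pow_sum3 hζ3 hζ1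
  have hζ2 : ζ ^ 2 ≠ 1 := by
    intro h
    apply hζ1
    rw [← hζ3, pow_succ, h, one_mul]
  have hζ12 : ζ ≠ ζ ^ 2 := by
    intro h
    apply hζ1
    have h0 : ζ ≠ 0 := by rintro rfl; norm_num at hζ3
    have : ζ * 1 = ζ * ζ := by rw [mul_one, ← sq]; exact h
    exact (mul_left_cancel₀ h0 this).symm
  have hζ0 : ζ ≠ 0 := by rintro rfl; norm_num at hζ3
  obtain ⟨e, he⟩ : ∃ e, p - 1 = 3 * e := ⟨(p-1)/3, by omega⟩
  have he' : (p - 1) / 3 = e := by omega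
  set γ : ZMod p := (g : ZMod p) ^ ((p - 1) / 3) with hγ
  have hγ3 : γ ^ 3 = 1 := by
    rw [hγ, he', ← pow_mul, mul_comm, ← he]
    exact ZMod.pow_card_sub_one_eq_one (Units.ne_zero g)
  have hγ1 : γ ≠ 1 := by
    intro h
    have h1 : g ^ e = 1 := by
      apply Units.ext
      rw [Units.val_pow_eq_pow_val, ← he', ← hγ, h, Units.val_one]
    have h2 : orderOf g = p - 1 := by
      rw [orderOf_eq_card_of_forall_mem_zpowers hg, Nat.card_eq_fintype_card, ZMod.card_units]
    have := Nat.le_of_dvd (by omega) (orderOf_dvd_of_pow_eq_one h1)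
    omega
  have hγsum := pow_sum3 hγ3 hγ1
  have hpt := pointwise g hg ζ hζ3 χ3 hχ3g γ hγ hγ3
  set n : ℂ → ℕ := fun z => (Finset.univ.filter (fun u : ZMod p => χ3 (1 - u ^ 2) = z)).card with hn
  have hsum : ∀ {R : Type} [CommRing R] (f : ZMod p → R) (r0 r1 r2 : R)
      (h : ∀ y, (y = 0 ∧ f y = 0) ∨ (χ3 y = 1 ∧ f y = r0) ∨ (χ3 y = ζ ∧ f y = r1) ∨ (χ3 y = ζ ^ 2 ∧ f y = r2)),
      ∑ u : ZMod p, f (1 - u ^ 2) = n 1 * r0 + n ζ * r1 + n (ζ ^ 2) * r2 := by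
    intro R _ f r0 r1 r2 h
    have : ∀ u : ZMod p, f (1 - u ^ 2) = (if χ3 (1 - u ^ 2) = 1 then r0 else 0) +
        (if χ3 (1 - u ^ 2) = ζ then r1 else 0) + (if χ3 (1 - u ^ 2) = ζ ^ 2 then r2 else 0) := by
      intro u
      rcases h (1 - u ^ 2) with ⟨h1, h2⟩ | ⟨h1, h2⟩ | ⟨h1, h2⟩ | ⟨h1, h2⟩
      · rw [h2, h1, MulChar.map_zero, if_neg (by norm_num), if_neg hζ0.symm, if_neg (pow_ne_zero 2 hζ0).symm]
        ring
      · rw [h2, h1, if_pos rfl, if_neg hζ1.symm, if_neg hζ2.symm]; ring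
      · rw [h2, h1, if_neg hζ1, if_pos rfl, if_neg hζ12]; ring
      · rw [h2, h1, if_neg hζ2, if_neg hζ12.symm, if_pos rfl]; ring
    simp_rw [this, Finset.sum_add_distrib, ← Finset.sum_filter, Finset.sum_const, nsmul_eq_mul]
    rfl
  have s1 : ∑ u : ZMod p, χ3 (1 - u ^ 2) = n 1 * 1 + n ζ * ζ + n (ζ ^ 2) * ζ ^ 2 := by
    apply hsum (fun y => χ3 y)
    intro y
    rcases hpt y with ⟨h1, h2, h3⟩ | ⟨_, j, hj, h1, h2, h3⟩
    · exact Or.inl ⟨h1, h2⟩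
    · interval_cases j <;> simp_all
  have s2 : ∑ u : ZMod p, χ3⁻¹ (1 - u ^ 2) = n 1 * 1 + n ζ * ζ ^ 2 + n (ζ ^ 2) * ζ := by
    apply hsum (fun y => χ3⁻¹ y)
    intro y
    rcases hpt y with ⟨h1, h2, h3⟩ | ⟨_, j, hj, h1, h2, h3⟩
    · exact Or.inl ⟨h1, h3⟩
    · have h4 : ζ ^ 4 = ζ := by rw [pow_succ, hζ3, one_mul]
      rw [h1, h2]
      interval_cases j
      · right; left; simp
      · right; right; left; simp
      · right; right; right; simp [h4]
  have s3 : ∑ u : ZMod p, (1 - u ^ 2) ^ e = n 1 * 1 + n ζ * γ + n (ζ ^ 2) * γ ^ 2 := by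
    apply hsum (fun y : ZMod p => y ^ e)
    intro y
    rcases hpt y with ⟨h1, h2, h3⟩ | ⟨_, j, hj, h1, h2, h3⟩
    · refine Or.inl ⟨h1, ?_⟩
      rw [h1]; exact zero_pow (by omega)
    · rw [he'] at h3
      simp only [h1, h3]
      interval_cases j
      · right; left; simp
      · right; right; left; simp
      · right; right; right; simp
  have s4 : ∑ u : ZMod p, (if (1 - u ^ 2) = 0 then 0 else 1 : ℤ) = n 1 * 1 + n ζ * 1 + n (ζ ^ 2) * 1 := by
    apply hsum (fun y : ZMod p => (if y = 0 then 0 else 1 : ℤ))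
    intro y
    rcases hpt y with ⟨h1, h2, h3⟩ | ⟨hy, j, hj, h1, h2, h3⟩
    · exact Or.inl ⟨h1, if_pos h1⟩
    · rw [h1, if_neg hy]
      interval_cases j
      · right; left; simp
      · right; right; left; simp
      · right; right; right; simp
  have s4' : ∑ u : ZMod p, (if (1 - u ^ 2) = 0 then 0 else 1 : ℤ) = p - 2 := by
    have : ∀ u : ZMod p, (if (1 - u ^ 2) = 0 then 0 else 1 : ℤ) = 1 - (if u ∈ ({1, -1} : Finset (ZMod p)) then 1 else 0) := by
      intro u
      have : 1 - u ^ 2 = 0 ↔ u ∈ ({1, -1} : Finset (ZMod p)) := by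
        rw [sub_eq_zero, eq_comm, ← one_pow 2, sq_eq_sq_iff_eq_or_eq_neg]
        simp
      simp only [this]
      split_ifs <;> simp
    simp_rw [this, Finset.sum_sub_distrib, Finset.sum_boole]
    have h5 : (Finset.univ.filter (fun u => u ∈ ({1, -1} : Finset (ZMod p)))) = {1, -1} := by ext; simp
    rw [h5, Finset.card_pair]
    · simp
    · intro h
      apply h2
      linear_combination h
  obtain ⟨c1, hc1⟩ := even_cnt χ3 h2 ζ hζ1
  obtain ⟨c2, hc2⟩ := even_cnt χ3 h2 (ζ ^ 2) hζ2
  change n ζ = c1 + c1 at hc1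
  change n (ζ ^ 2) = c2 + c2 at hc2
  rw [s4'] at s4
  rw [sum_zero (by omega)] at s3
  have hne : χ3 ≠ 1 := by
    rintro rfl; simp at hχ3o
  have hsq : χ3 * χ3 ≠ 1 := by
    intro h
    have := orderOf_dvd_of_pow_eq_one (x := χ3) (n := 2) (by rw [sq, h])
    rw [hχ3o] at this
    norm_num at this
  have hJ : jacobiSum χ3 χ3 * jacobiSum χ3⁻¹ χ3⁻¹ = (p : ℂ) := by
    rw [jacobiSum_mul_jacobiSum_inv _ hne hne hsq, ZMod.card]
    rw [ringChar.eq_zero, ZMod.ringChar_zmod_n]; omega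
  have h4u : IsUnit (4 : ZMod p) := by
    have : (4 : ZMod p) = 2 * 2 := by norm_num
    rw [this]; exact (Ne.isUnit h2).mul (Ne.isUnit h2)
  have hχ4 : χ3 4 * χ3⁻¹ 4 = 1 := by
    rw [← MulChar.mul_apply, mul_inv_cancel, MulChar.one_apply h4u]
  have k1 := sumK χ3 h2
  have k2 := sumK χ3⁻¹ h2
  rw [s1] at k1
  rw [s2] at k2
  set N0 := n 1
  set N1 := n ζ
  set N2 := n (ζ ^ 2)
  have hnormC : ((N0 : ℂ) * 1 + N1 * ζ + N2 * ζ ^ 2) * (N0 * 1 + N1 * ζ ^ 2 + N2 * ζ) = p := by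
    rw [← k1, ← k2, ← hJ]
    linear_combination (jacobiSum χ3 χ3 * jacobiSum χ3⁻¹ χ3⁻¹) * hχ4
  have hnorm : ((N0 : ℤ) ^ 2 + N1 ^ 2 + N2 ^ 2 - N0 * N1 - N0 * N2 - N1 * N2) = p := by
    have : ((N0 : ℂ) ^ 2 + N1 ^ 2 + N2 ^ 2 - N0 * N1 - N0 * N2 - N1 * N2) = p := by
      rw [← hnormC]
      linear_combination (-(N0:ℂ) * N1 - N0 * N2 - N1 * N2) * hζsum -
        (N1 ^ 2 + N2 ^ 2 + N1 * N2 * ζ) * hζ3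
    exact_mod_cast this
  set B : ℤ := c1 - c2 with hB
  set A : ℤ := N0 - N2 - B with hA
  have hn1 : (N1 : ℤ) = c1 + c1 := by exact_mod_cast hc1
  have hn2 : (N2 : ℤ) = c2 + c2 := by exact_mod_cast hc2
  have hAB : A ^ 2 + 3 * B ^ 2 = p := by
    rw [← hnorm, hA, hB, hn1, hn2]; ring
  have hA3 : A ≡ -1 [ZMOD 3] := by
    unfold Int.ModEq
    omega
  have hmodp : (A : ZMod p) + B * (1 + 2 * γ) = 0 := by
    have e1 : (N1 : ZMod p) = c1 + c1 := by rw [hc1]; push_cast; ring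
    have e2 : (N2 : ZMod p) = c2 + c2 := by rw [hc2]; push_cast; ring
    rw [hA, hB]
    push_cast
    rw [e2]
    rw [e1, e2] at s3
    linear_combination -s3 - (c2 + c2) * hγsum
  have hdvd : (p : ℤ) ∣ A * b3 - a3 * B := by
    rw [← ZMod.intCast_zmod_eq_zero_iff_dvd] at *
    push_cast at hb3 ⊢
    have : (3 : ZMod p) * (A * b3 - a3 * B) = 0 := by
      linear_combination (A : ZMod p) * hb3 + (1 + 2 * γ) * (a3 : ZMod p) * hmodp - (4 * B * a3) * hγsum
    exact (mul_eq_zero.1 this).resolve_left h3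
  obtain ⟨rA, rB⟩ := int_part A B a3 b3 p (by omega) hAB hab hA3 ha3 hdvd
  have hχ2 : χ3 2 * χ3 4 = 1 := by
    have : (χ3 ^ 3) 2 = 1 := by
      rw [← hχ3o, pow_orderOf_eq_one, MulChar.one_apply (Ne.isUnit h2)]
    rw [MulChar.pow_apply' _ (by norm_num)] at this
    rw [← this, show (4 : ZMod p) = 2 * 2 by norm_num, map_mul]
    ring
  rw [← rA, ← rB]
  have : (A : ℂ) + Complex.I * (B : ℂ) * (Real.sqrt 3 : ℂ) = χ3 4 * jacobiSum χ3 χ3 := by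
    rw [k1, mul_right_comm, ← hζs]
    have e1 : (N1 : ℂ) = c1 + c1 := by rw [hc1]; push_cast; ring
    have e2 : (N2 : ℂ) = c2 + c2 := by rw [hc2]; push_cast; ring
    rw [hA, hB]
    push_cast
    rw [e1, e2]
    linear_combination -(c2 + c2) * hζsum
  rw [this, ← mul_assoc, hχ2, one_mul]

end JS

namespace FN
open HD
variable {p : ℕ} [Fact p.Prime]

def SS (χ : MulChar (ZMod p) ℂ) (t : ℕ) (c : ZMod p) : ℂ :=
  ∑ x ∈ Finset.univ.filter (fun x : GaloisField p t => Algebra.trace (ZMod p) _ x = c),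
    χ (Algebra.norm (ZMod p) x)

lemma sum_norm {χ : MulChar (ZMod p) ℂ} (hχ : χ ≠ 1) {t : ℕ} :
    ∑ x : GaloisField p t, χ (Algebra.norm (ZMod p) x) = 0 := by
  obtain ⟨u, hu⟩ := (MulChar.ne_one_iff).1 hχ
  obtain ⟨x0, hx0⟩ := FiniteField.norm_surjective (ZMod p) (GaloisField p t) (u : ZMod p)
  have h0 : x0 ≠ 0 := by
    rintro rfl
    rw [Algebra.norm_zero] at hx0
    exact u.ne_zero hx0.symm
  have h : χ u * ∑ x : GaloisField p t, χ (Algebra.norm (ZMod p) x) =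
      ∑ x : GaloisField p t, χ (Algebra.norm (ZMod p) x) := by
    rw [Finset.mul_sum]
    refine Fintype.sum_bijective (fun x => x0 * x) (mulLeft_bijective₀ x0 h0) _ _ ?_
    intro x
    rw [map_mul, hx0, map_mul]
  have h2 : (χ u - 1) * ∑ x : GaloisField p t, χ (Algebra.norm (ZMod p) x) = 0 := by
    rw [sub_mul, h]; ring
  exact (mul_eq_zero.1 h2).resolve_left (sub_ne_zero.2 hu)

lemma SS_eq {χ : MulChar (ZMod p) ℂ} (hχ : χ ≠ 1) {ψ : AddChar (ZMod p) ℂ} (hψ : ψ.IsPrimitive)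
    (n : ℕ) (c : (ZMod p)ˣ) :
    (p : ℂ) * SS χ (n + 1) c = (-1) ^ n * gaussSum χ ψ ^ (n + 1) *
      ((χ⁻¹ ^ (n + 1))⁻¹ ((-c : (ZMod p)ˣ) : ZMod p) * gaussSum (χ⁻¹ ^ (n + 1)) ψ) := by
  have h1 : (p : ℂ) * SS χ (n + 1) c = ∑ x : GaloisField p (n + 1),
      ∑ y : ZMod p, ψ (y * (Algebra.trace (ZMod p) _ x - c)) * χ (Algebra.norm (ZMod p) x) := by
    simp_rw [← Finset.sum_mul, AddChar.sum_mulShift _ hψ]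
    rw [SS, Finset.sum_filter, Finset.mul_sum]
    apply Finset.sum_congr rfl
    intro x _
    simp only [ZMod.card, sub_eq_zero]
    split_ifs <;> simp
  have h2 : ∀ y : ZMod p, ∑ x : GaloisField p (n + 1),
      ψ (y * (Algebra.trace (ZMod p) _ x - c)) * χ (Algebra.norm (ZMod p) x) =
      (-1) ^ n * gaussSum χ ψ ^ (n + 1) * ((χ⁻¹ ^ (n + 1)) y * (ψ.mulShift ((-c : (ZMod p)ˣ) : ZMod p)) y) := by
    intro y
    by_cases hy : y = 0
    · subst hy
      rw [MulChar.map_zero]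
      simp only [zero_mul, AddChar.map_zero_eq_one, one_mul, mul_zero]
      exact sum_norm hχ
    · have hne : ψ.mulShift y ≠ 1 := hψ hy
      have h3 := pk_eq χ hne n
      obtain ⟨u, rfl⟩ := Ne.isUnit hy
      rw [gaussSum_mulShift_eq, mul_pow] at h3
      rw [MulChar.pow_apply_coe]
      have h4 : ∑ x : GaloisField p (n + 1),
          ψ (u * (Algebra.trace (ZMod p) _ x - c)) * χ (Algebra.norm (ZMod p) x) =
          (ψ.mulShift ((-c : (ZMod p)ˣ) : ZMod p)) u * pk χ (ψ.mulShift u) (n + 1) := by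
        rw [pk, Finset.mul_sum]
        apply Finset.sum_congr rfl
        intro x _
        rw [AddChar.mulShift_apply, AddChar.mulShift_apply, mul_sub, sub_eq_add_neg,
          AddChar.map_add_eq_mul]
        have : -((u : ZMod p) * c) = ((-c : (ZMod p)ˣ) : ZMod p) * u := by push_cast; ring
        rw [this]
        ring
      rw [h4, h3]
      ring
  rw [h1, Finset.sum_comm, Finset.sum_congr rfl (fun y _ => h2 y), ← Finset.mul_sum,
    ← gaussSum_mulShift_eq]
  rfl

lemma card_tr {t : ℕ} (ht : t ≠ 0) (c : ZMod p) :
    (Finset.univ.filter (fun x : GaloisField p t => Algebra.trace (ZMod p) _ x = c)).card = p ^ (t - 1) := by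
  have hs : Function.Surjective (Algebra.trace (ZMod p) (GaloisField p t)) := Algebra.trace_surjective _ _
  have h1 : ∀ d : ZMod p, (Finset.univ.filter (fun x : GaloisField p t => Algebra.trace (ZMod p) _ x = d)).card
      = (Finset.univ.filter (fun x : GaloisField p t => Algebra.trace (ZMod p) _ x = c)).card := by
    intro d
    exact AddMonoidHom.card_fiber_eq_of_mem_range (Algebra.trace (ZMod p) (GaloisField p t)).toAddMonoidHom
      (hs d) (hs c)
  have h2 : Fintype.card (GaloisField p t) = p ^ t := by
    rw [← Nat.card_eq_fintype_card, GaloisField.card p t ht]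
  have h3 := Finset.card_eq_sum_card_fiberwise (f := fun x : GaloisField p t => Algebra.trace (ZMod p) _ x)
    (s := Finset.univ) (t := Finset.univ) (fun _ _ => Finset.mem_coe.2 (Finset.mem_univ _))
  rw [Finset.card_univ, h2, Finset.sum_congr rfl (fun d _ => h1 d), Finset.sum_const, Finset.card_univ,
    ZMod.card, smul_eq_mul] at h3
  have hp : 0 < p := (Fact.out : p.Prime).pos
  apply Nat.eq_of_mul_eq_mul_left hp
  rw [← h3, ← pow_succ']
  congr 1; omega

lemma NN_eq {K : Type*} [Field K] [Fintype K] [Algebra (ZMod p) K] {m t : ℕ} (hm : m ≠ 0)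
    (ht : t ∣ m) (ht0 : 0 < t) (hK : Fintype.card K = p ^ m) (hpmt : ((m / t : ℕ) : ZMod p) ≠ 0)
    (g : ZMod p) (s h : ℕ) (a : ZMod p) :
    NN (ZMod p) K g s h t a = (Finset.univ.filter (fun x : GaloisField p t =>
      Algebra.trace (ZMod p) _ x = a * ((m / t : ℕ) : ZMod p)⁻¹ ∧
      ∃ k : ℕ, (Algebra.norm (ZMod p) x) ^ (m / t) = g ^ (h + s * k))).card := by
  have hpp : p.Prime := Fact.out
  have hfr : Module.finrank (ZMod p) K = m := by
    have := Module.card_eq_pow_finrank (K := ZMod p) (V := K)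
    rw [hK, ZMod.card] at this
    exact (Nat.pow_right_injective hpp.two_le this).symm
  have hft := GaloisField.finrank p ht0.ne'
  obtain ⟨φ⟩ := FiniteField.nonempty_algHom_of_finrank_dvd (F := ZMod p) (K := GaloisField p t) (L := K)
    (by rw [hfr, hft]; exact ht)
  have hinj : Function.Injective φ := φ.toRingHom.injective
  let : Algebra (GaloisField p t) K := φ.toRingHom.toAlgebra
  have : IsScalarTower (ZMod p) (GaloisField p t) K := IsScalarTower.of_algebraMap_eq' φ.comp_algebraMap.symm
  have hfE : Module.finrank (GaloisField p t) K = m / t := by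
    have := Module.finrank_mul_finrank (ZMod p) (GaloisField p t) K
    rw [hfr, hft] at this
    exact (Nat.div_eq_of_eq_mul_right ht0 this.symm).symm
  have htr : ∀ x, Algebra.trace (ZMod p) K (φ x) = ((m / t : ℕ) : ZMod p) * Algebra.trace (ZMod p) _ x := by
    intro x
    have : φ x = algebraMap (GaloisField p t) K x := rfl
    rw [← Algebra.trace_trace (S := GaloisField p t), this, Algebra.trace_algebraMap, hfE, map_nsmul,
      nsmul_eq_mul]
  have hno : ∀ x, Algebra.norm (ZMod p) (φ x) = (Algebra.norm (ZMod p) x) ^ (m / t) := by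
    intro x
    have : φ x = algebraMap (GaloisField p t) K x := rfl
    rw [← Algebra.norm_norm (S := GaloisField p t), this, Algebra.norm_algebraMap, hfE, map_pow]
  have hcardE : Fintype.card (GaloisField p t) = p ^ t := by
    rw [← Nat.card_eq_fintype_card, GaloisField.card p t ht0.ne']
  have hfix : ∀ x : GaloisField p t, x ^ p ^ t = x := by
    intro x; rw [← hcardE]; exact FiniteField.pow_card x
  have hrange : ∀ y : K, y ^ p ^ t = y → ∃ x, φ x = y := by
    have hne : (X ^ p ^ t - X : K[X]) ≠ 0 := FiniteField.X_pow_card_pow_sub_X_ne_zero _ ht0.ne' hpp.one_lt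
    have hsub : Finset.univ.image φ ⊆ (X ^ p ^ t - X : K[X]).roots.toFinset := by
      intro y hy
      obtain ⟨x, _, rfl⟩ := Finset.mem_image.1 hy
      rw [Multiset.mem_toFinset, mem_roots hne, IsRoot.def, eval_sub, eval_pow, eval_X, ← map_pow, hfix, sub_self]
    have heq := Finset.eq_of_subset_of_card_le hsub (by
      rw [Finset.card_image_of_injective _ hinj, Finset.card_univ, hcardE]
      refine (Multiset.toFinset_card_le _).trans ((card_roots' _).trans ?_)
      rw [FiniteField.X_pow_card_pow_sub_X_natDegree_eq _ ht0.ne' hpp.one_lt])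
    intro y hy
    have : y ∈ Finset.univ.image φ := by
      rw [heq, Multiset.mem_toFinset, mem_roots hne, IsRoot.def, eval_sub, eval_pow, eval_X, hy, sub_self]
    obtain ⟨x, _, hx⟩ := Finset.mem_image.1 this
    exact ⟨x, hx⟩
  rw [NN, ← Fintype.card_subtype]
  symm
  rw [← Nat.card_eq_fintype_card (α := {x : GaloisField p t // _})]
  refine Nat.card_congr (Equiv.ofBijective (fun x => ⟨φ x.1, ?_, ?_, ?_⟩) ⟨?_, ?_⟩)
  · rw [ZMod.card, ← map_pow, hfix]
  · rw [htr, x.2.1, mul_comm, mul_assoc, inv_mul_cancel₀ hpmt, mul_one]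
  · rw [hno]; exact x.2.2
  · intro x y hxy
    exact Subtype.ext (hinj (congrArg Subtype.val hxy))
  · rintro ⟨y, h1, h2, h3⟩
    rw [ZMod.card] at h1
    obtain ⟨x, rfl⟩ := hrange y h1
    refine ⟨⟨x, ?_, ?_⟩, rfl⟩
    · rw [htr] at h2
      rw [← h2, mul_comm, ← mul_assoc, inv_mul_cancel₀ hpmt, one_mul]
    · rw [hno] at h3; exact h3

end FN

namespace FN
open HD
variable {p : ℕ} [Fact p.Prime]

section vals
variable {χ : MulChar (ZMod p) ℂ} (ho : orderOf χ = 3) {ψ : AddChar (ZMod p) ℂ} (hψ : ψ.IsPrimitive)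
include ho

lemma chi3 : χ ^ 3 = 1 := by rw [← ho, pow_orderOf_eq_one]

lemma chi_ne : χ ≠ 1 := by
  rintro rfl; simp at ho

lemma chi_neg : χ (-1) = 1 := by
  have h : (χ ^ 3) (-1) = 1 := by
    rw [chi3 ho, MulChar.one_apply (isUnit_one.neg)]
  rw [MulChar.pow_apply' _ (by norm_num), ← map_pow] at h
  rw [← h]; congr 1; norm_num

lemma chi_inv2 : χ⁻¹ ^ 2 = χ := by
  rw [inv_pow, inv_eq_iff_mul_eq_one, ← pow_succ, chi3 ho]

lemma chi_sq : χ ^ 2 = χ⁻¹ := by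
  rw [eq_inv_iff_mul_eq_one, ← pow_succ, chi3 ho]

include hψ

lemma G3 : gaussSum χ ψ ^ 3 = p * jacobiSum χ χ := by
  have := gaussSum_pow_eq_prod_jacobiSum (χ := χ) (ψ := ψ) (by omega) hψ
  rw [ho, chi_neg ho, ZMod.card] at this
  simpa using this

lemma GG : gaussSum χ ψ * gaussSum χ⁻¹ ψ = p := by
  have h := gaussSum_mul_gaussSum_eq_card (chi_ne ho) hψ
  have h2 := mul_gaussSum_inv_eq_gaussSum χ⁻¹ ψ
  have h3 : χ⁻¹ (-1) = 1 := by
    rw [← chi_sq ho, MulChar.pow_apply' _ (by norm_num), chi_neg ho, one_pow]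
  rw [h3, one_mul] at h2
  rw [ZMod.card, h2] at h
  exact h

lemma val1 (k : ℕ) (c : (ZMod p)ˣ) :
    SS χ (3 * k + 1) c = (-1) ^ (3 * k) * ((p : ℂ) ^ k * jacobiSum χ χ ^ k) * χ ((-c : (ZMod p)ˣ) : ZMod p) := by
  have h := SS_eq (chi_ne ho) hψ (3 * k) c
  have e : χ⁻¹ ^ (3 * k + 1) = χ⁻¹ := by
    rw [pow_succ, pow_mul, inv_pow, chi3 ho]; simp
  have h0 : (p : ℂ) ≠ 0 := Nat.cast_ne_zero.2 (Fact.out : p.Prime).ne_zero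
  rw [e, inv_inv, pow_succ (gaussSum χ ψ), pow_mul (gaussSum χ ψ), G3 ho hψ] at h
  apply mul_left_cancel₀ h0
  rw [h, mul_pow]
  linear_combination ((-1) ^ (3 * k) * (p ^ k * jacobiSum χ χ ^ k) * χ ((-c : (ZMod p)ˣ) : ZMod p)) * GG ho hψ

lemma val2 (k : ℕ) (c : (ZMod p)ˣ) :
    SS χ (3 * k + 2) c = (-1) ^ (3 * k + 1) * ((p : ℂ) ^ k * jacobiSum χ χ ^ (k + 1)) * χ⁻¹ ((-c : (ZMod p)ˣ) : ZMod p) := by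
  have h := SS_eq (chi_ne ho) hψ (3 * k + 1) c
  have e : χ⁻¹ ^ (3 * k + 1 + 1) = χ := by
    rw [add_assoc, pow_add, pow_mul, inv_pow χ 3, chi3 ho, chi_inv2 ho]; simp
  have h0 : (p : ℂ) ≠ 0 := Nat.cast_ne_zero.2 (Fact.out : p.Prime).ne_zero
  rw [e] at h
  apply mul_left_cancel₀ h0
  rw [h]
  have : gaussSum χ ψ ^ (3 * k + 1 + 1) * gaussSum χ ψ = (p * jacobiSum χ χ) ^ (k + 1) := by
    rw [← G3 ho hψ]; ring
  rw [mul_pow] at this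
  linear_combination (-1) ^ (3 * k + 1) * χ⁻¹ ((-c : (ZMod p)ˣ) : ZMod p) * this

lemma val3 (k : ℕ) (c : (ZMod p)ˣ) :
    SS χ (3 * k + 3) c = - (-1) ^ (3 * k + 2) * ((p : ℂ) ^ k * jacobiSum χ χ ^ (k + 1)) := by
  have h := SS_eq (chi_ne ho) hψ (3 * k + 2) c
  have e : χ⁻¹ ^ (3 * k + 2 + 1) = 1 := by
    rw [add_assoc, pow_add, pow_mul, inv_pow χ 3, chi3 ho]; simp
  have h0 : (p : ℂ) ≠ 0 := Nat.cast_ne_zero.2 (Fact.out : p.Prime).ne_zero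
  have hψ1 : ψ ≠ 1 := by
    have := hψ (one_ne_zero)
    rwa [AddChar.mulShift_one] at this
  rw [e, inv_one, MulChar.one_apply_coe, gaussSum_one_left hψ1] at h
  apply mul_left_cancel₀ h0
  rw [h]
  have : gaussSum χ ψ ^ (3 * k + 2 + 1) = (p * jacobiSum χ χ) ^ (k + 1) := by
    rw [← G3 ho hψ]; ring
  rw [this, mul_pow]
  ring
end vals

lemma ind {ζ : ℂ} (hζ : IsPrimitiveRoot ζ 3) (hc : (starRingEnd ℂ) ζ = ζ ^ 2) {i j : ℕ} (hi : i < 3) (hj : j < 3) :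
    1 + ζ ^ (2 * i) * ζ ^ j + (starRingEnd ℂ) (ζ ^ (2 * i) * ζ ^ j) = if ζ ^ j = ζ ^ i then 3 else 0 := by
  have h1 : ζ ^ 3 = 1 := hζ.pow_eq_one
  have h2 : ζ ≠ 1 := hζ.ne_one (by norm_num)
  have h3 := JS.pow_sum3 h1 h2
  rw [map_mul, map_pow, map_pow, hc]
  by_cases hij : j = i
  · subst hij
    rw [if_pos rfl]
    have e1 : ζ ^ (2 * j) * ζ ^ j = 1 := by
      rw [← pow_add, show 2 * j + j = 3 * j by ring, pow_mul, h1, one_pow]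
    have e2 : (ζ ^ 2) ^ (2 * j) * (ζ ^ 2) ^ j = 1 := by
      rw [← pow_add, ← pow_mul, show 2 * (2 * j + j) = 3 * (2 * j) by ring, pow_mul, h1, one_pow]
    rw [e1, e2]; norm_num
  · rw [if_neg (fun h => hij (hζ.pow_inj hj hi h))]
    have h4 : ζ ^ 4 = ζ := by rw [pow_succ, h1, one_mul]
    have h5 : ζ ^ 5 = ζ ^ 2 := by rw [show (5 : ℕ) = 3 + 2 by rfl, pow_add, h1, one_mul]
    have h8 : ζ ^ 8 = ζ ^ 2 := by rw [show (8 : ℕ) = 3 * 2 + 2 by rfl, pow_add, pow_mul, h1, one_pow, one_mul]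
    have h10 : ζ ^ 10 = ζ := by rw [show (10 : ℕ) = 3 * 3 + 1 by rfl, pow_add, pow_mul, h1, one_pow, one_mul, pow_one]
    interval_cases i <;> interval_cases j <;> first | (exact absurd rfl hij) | skip
    all_goals
      ring_nf
      try simp only [h4, h5, h8, h10]
      linear_combination h3

lemma pow_iff {ζ : ℂ} (hζ : IsPrimitiveRoot ζ 3) (i j : ℕ) : ζ ^ i = ζ ^ j ↔ i ≡ j [MOD 3] := by
  have hm : ∀ k, ζ ^ k = ζ ^ (k % 3) := by
    intro k
    conv_lhs => rw [← Nat.div_add_mod k 3, pow_add, pow_mul, hζ.pow_eq_one, one_pow, one_mul]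
  rw [hm i, hm j]
  exact ⟨fun h => hζ.pow_inj (Nat.mod_lt _ (by norm_num)) (Nat.mod_lt _ (by norm_num)) h,
    fun h => congrArg (fun k => ζ ^ k) h⟩

lemma exists_iff {g : (ZMod p)ˣ} (hg : ∀ u : (ZMod p)ˣ, u ∈ Subgroup.zpowers g)
    {ζ : ℂ} (hζ : IsPrimitiveRoot ζ 3) {χ : MulChar (ZMod p) ℂ} (hχg : χ (g : ZMod p) = ζ)
    (h : ℕ) (hh : h < 3) {v : ZMod p} (hv : v ≠ 0) :
    (∃ k : ℕ, v = (g : ZMod p) ^ (h + 3 * k)) ↔ χ v = ζ ^ h := by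
  constructor
  · rintro ⟨k, rfl⟩
    rw [map_pow, hχg, pow_add, pow_mul, hζ.pow_eq_one, one_pow, mul_one]
  · intro h1
    obtain ⟨u, rfl⟩ := Ne.isUnit hv
    obtain ⟨i, hi⟩ := (Submonoid.mem_powers_iff _ _).1 ((mem_powers_iff_mem_zpowers).2 (hg u))
    rw [← hi, Units.val_pow_eq_pow_val, map_pow, hχg, pow_iff hζ] at h1
    unfold Nat.ModEq at h1
    have hp : 2 ≤ p := (Fact.out : p.Prime).two_le
    refine ⟨(i + 3 * (p - 1) - h) / 3, ?_⟩
    rw [show h + 3 * ((i + 3 * (p - 1) - h) / 3) = (p - 1) * 3 + i by omega, pow_add, pow_mul,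
      ZMod.pow_card_sub_one_eq_one (Units.ne_zero g), one_pow, one_mul, ← hi, Units.val_pow_eq_pow_val]

lemma count {g : (ZMod p)ˣ} (hg : ∀ u : (ZMod p)ˣ, u ∈ Subgroup.zpowers g)
    {ζ : ℂ} (hζ : IsPrimitiveRoot ζ 3) (hc : (starRingEnd ℂ) ζ = ζ ^ 2)
    {χ : MulChar (ZMod p) ℂ} (hχg : χ (g : ZMod p) = ζ)
    (n h i0 : ℕ) (hh : h < 3) (hi0 : i0 < 3) (hn : Nat.Coprime n 3) (hnh : n * i0 ≡ h [MOD 3])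
    {t : ℕ} (ht : t ≠ 0) {c : ZMod p} (hc0 : c ≠ 0) :
    ((Finset.univ.filter (fun x : GaloisField p t =>
      Algebra.trace (ZMod p) _ x = c ∧
      ∃ k : ℕ, (Algebra.norm (ZMod p) x) ^ n = (g : ZMod p) ^ (h + 3 * k))).card : ℂ) =
    (1 / 3) * ((p : ℂ) ^ (t - 1) + 2 * ((ζ ^ (2 * i0) * SS χ t c).re : ℂ)) := by
  have key : (3 : ℂ) * ((Finset.univ.filter (fun x : GaloisField p t =>
      Algebra.trace (ZMod p) _ x = c ∧
      ∃ k : ℕ, (Algebra.norm (ZMod p) x) ^ n = (g : ZMod p) ^ (h + 3 * k))).card : ℂ) =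
    ∑ x ∈ Finset.univ.filter (fun x : GaloisField p t => Algebra.trace (ZMod p) _ x = c),
      (1 + ζ ^ (2 * i0) * χ (Algebra.norm (ZMod p) x) + (starRingEnd ℂ) (ζ ^ (2 * i0) * χ (Algebra.norm (ZMod p) x))) := by
    rw [← Finset.filter_filter, Finset.card_filter, Nat.cast_sum, Finset.mul_sum]
    apply Finset.sum_congr rfl
    intro x hx
    rw [Finset.mem_filter] at hx
    have hx0 : x ≠ 0 := by
      rintro rfl
      apply hc0
      rw [← hx.2, map_zero]
    have hN : Algebra.norm (ZMod p) x ≠ 0 := Algebra.norm_ne_zero_iff.2 hx0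
    obtain ⟨u, hu⟩ := Ne.isUnit hN
    obtain ⟨k, hk⟩ := (Submonoid.mem_powers_iff _ _).1 ((mem_powers_iff_mem_zpowers).2 (hg u))
    have hχ : χ (Algebra.norm (ZMod p) x) = ζ ^ (k % 3) := by
      rw [← hu, ← hk, Units.val_pow_eq_pow_val, map_pow, hχg, pow_iff hζ]
      exact (Nat.mod_modEq k 3).symm
    rw [hχ, ind hζ hc hi0 (Nat.mod_lt _ (by norm_num))]
    have hiff : (∃ k : ℕ, (Algebra.norm (ZMod p) x) ^ n = (g : ZMod p) ^ (h + 3 * k)) ↔ ζ ^ (k % 3) = ζ ^ i0 := by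
      rw [exists_iff hg hζ hχg h hh (pow_ne_zero n hN), map_pow, hχ, ← pow_mul, pow_iff hζ,
        pow_iff hζ]
      constructor
      · intro h1
        have h2 := h1.trans hnh.symm
        rw [mul_comm] at h2
        exact Nat.ModEq.cancel_left_of_coprime (by rw [Nat.gcd_comm]; exact hn) h2
      · intro h1
        rw [mul_comm]
        exact (h1.mul_left n).trans hnh
    by_cases hcase : ζ ^ (k % 3) = ζ ^ i0
    · rw [if_pos hcase, if_pos (hiff.2 hcase)]; norm_num
    · rw [if_neg hcase, if_neg (fun h => hcase (hiff.1 h))]; norm_num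
  have h2 : ∑ x ∈ Finset.univ.filter (fun x : GaloisField p t => Algebra.trace (ZMod p) _ x = c),
      (1 + ζ ^ (2 * i0) * χ (Algebra.norm (ZMod p) x) + (starRingEnd ℂ) (ζ ^ (2 * i0) * χ (Algebra.norm (ZMod p) x)))
      = (p : ℂ) ^ (t - 1) + 2 * ((ζ ^ (2 * i0) * SS χ t c).re : ℂ) := by
    rw [Finset.sum_add_distrib, Finset.sum_add_distrib, ← map_sum, ← Finset.mul_sum, add_assoc,
      Complex.add_conj, Finset.sum_const, card_tr ht]
    simp [SS]
  rw [← h2, ← key]; ring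

end FN

/-- The values of `N_t` for `s = 3`, `q = p ≡ 1 (mod 3)` and `a ≠ 0`, assuming
`p ∤ m/t` and `d ∣ h`, in terms of `π_3 = χ_3(2)·(a_3 + i·b_3·√3)`, `ζ = e^{2πi/3}`
and `Q_{t,3}`. -/
theorem stmt15 (p m h t d l i0 : ℕ) [Fact p.Prime] (hm : 2 ≤ m)
    (ht : t ∣ m) (ht0 : 0 < t)
    (K : Type*) [Field K] [Fintype K] [Algebra (ZMod p) K]
    (hK : Fintype.card K = p ^ m)
    (hp : p % 3 = 1)
    (g : (ZMod p)ˣ) (hg : ∀ u : (ZMod p)ˣ, u ∈ Subgroup.zpowers g)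
    (hh : h < 3)
    (ζ : ℂ) (hζ : ζ = Complex.exp (2 * Real.pi * Complex.I / 3))
    (χ3 : MulChar (ZMod p) ℂ) (hχ3o : orderOf χ3 = 3) (hχ3g : χ3 (g : ZMod p) = ζ)
    (a3 b3 : ℤ) (hab : a3 ^ 2 + 3 * b3 ^ 2 = (p : ℤ))
    (ha3 : a3 ≡ -1 [ZMOD 3])
    (hb3 : ((3 * b3 : ℤ) : ZMod p) = (2 * (g : ZMod p) ^ ((p - 1) / 3) + 1) * (a3 : ZMod p))
    (π3 : ℂ) (hπ3 : π3 = χ3 (2 : ZMod p) * ((a3 : ℂ) + Complex.I * (b3 : ℂ) * (Real.sqrt 3 : ℂ)))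
    (hd : d = Nat.gcd (m / t) 3) (hl : l = Nat.gcd t (3 / d))
    (hpmt : ¬ p ∣ m / t) (hdh : d ∣ h)
    (hi0 : i0 < 3 / d ∧ (m / (d * t)) * i0 ≡ h / d [MOD 3 / d])
    (a : ZMod p) (ha : a ≠ 0)
    (a0 : ZMod p) (ha0 : a0 = -(((m / t : ℕ) : ZMod p)) * a⁻¹) :
    (d = 1 ∧ l = 1 ∧ t % 3 = 1 →
      (NN (ZMod p) K (g : ZMod p) 3 h t a : ℂ) =
        (1 / 3) * ((p : ℂ) ^ (t - 1) - 2 * (-1 : ℂ) ^ t *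
          (((p : ℂ) ^ ((t - 1) / 3) * π3 ^ ((t - 1) / 3) * χ3⁻¹ a0 * ζ ^ (2 * i0)).re : ℂ))) ∧
    (d = 1 ∧ l = 1 ∧ t % 3 = 2 →
      (NN (ZMod p) K (g : ZMod p) 3 h t a : ℂ) =
        (1 / 3) * ((p : ℂ) ^ (t - 1) - 2 * (-1 : ℂ) ^ t *
          (((p : ℂ) ^ ((t - 2) / 3) * π3 ^ ((t + 1) / 3) * χ3 a0 * ζ ^ (2 * i0)).re : ℂ))) ∧
    (d = 1 ∧ l = 3 →
      (NN (ZMod p) K (g : ZMod p) 3 h t a : ℂ) =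
        (1 / 3) * ((p : ℂ) ^ (t - 1) + 2 * (-1 : ℂ) ^ t * (p : ℂ) ^ ((t - 3) / 3) *
          ((π3 ^ (t / 3) * ζ ^ (2 * i0)).re : ℂ))) ∧
    (d = 3 ∧ l = 1 →
      (NN (ZMod p) K (g : ZMod p) 3 h t a : ℂ) = (p : ℂ) ^ (t - 1)) := by
  have hpp : p.Prime := Fact.out
  have hnz : ((m / t : ℕ) : ZMod p) ≠ 0 := by
    rwa [Ne, ZMod.natCast_eq_zero_iff]
  have hNN := FN.NN_eq (by omega : m ≠ 0) ht ht0 hK hnz (g : ZMod p) 3 h a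
  have hc0 : a * ((m / t : ℕ) : ZMod p)⁻¹ ≠ 0 := mul_ne_zero ha (inv_ne_zero hnz)
  have hζp : IsPrimitiveRoot ζ 3 := by
    rw [hζ]
    exact_mod_cast Complex.isPrimitiveRoot_exp 3 (by norm_num)
  have hζc : (starRingEnd ℂ) ζ = ζ ^ 2 := by
    have h1 := (JS.zeta_sq hζ).2
    have h2 := congrArg (starRingEnd ℂ) h1
    simp only [map_add, map_mul, map_one, Complex.conj_I, Complex.conj_ofReal] at h2
    have h3 := JS.pow_sum3 hζp.pow_eq_one (hζp.ne_one (by norm_num))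
    have h4 : (starRingEnd ℂ) 2 = 2 := Complex.conj_ofNat 2
    rw [h4] at h2
    linear_combination (1 / 2 : ℂ) * h1 + (1 / 2 : ℂ) * h2 - h3
  have hJ := JS.jac_eq hp g hg ζ hζ χ3 hχ3o hχ3g a3 b3 hab ha3 hb3
  rw [← hπ3] at hJ
  have hψ := ZMod.isPrimitive_stdAddChar p
  obtain ⟨c, hcu⟩ := Ne.isUnit hc0
  rw [← hcu] at hNN hc0
  have hca : a0 = (((-c)⁻¹ : (ZMod p)ˣ) : ZMod p) := by
    rw [Units.val_inv_eq_inv_val, Units.val_neg, hcu, ha0, inv_neg, mul_inv, inv_inv]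
    ring
  have hx1 : χ3⁻¹ a0 = χ3 ((-c : (ZMod p)ˣ) : ZMod p) := by
    rw [hca, MulChar.inv_apply, Ring.inverse_unit, inv_inv]
  have hx2 : χ3 a0 = χ3⁻¹ ((-c : (ZMod p)ˣ) : ZMod p) := by
    rw [hca, MulChar.inv_apply, Ring.inverse_unit]
  have hcount : d = 1 → (NN (ZMod p) K (g : ZMod p) 3 h t a : ℂ) =
      (1 / 3) * ((p : ℂ) ^ (t - 1) + 2 * ((ζ ^ (2 * i0) * FN.SS χ3 t c).re : ℂ)) := by
    intro hd1
    rw [hd1] at hd hi0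
    rw [hNN]
    refine FN.count hg hζp hζc hχ3g (m / t) h i0 hh hi0.1 hd.symm ?_ ht0.ne' hc0
    simpa using hi0.2
  have hre : ∀ (n : ℕ) (z : ℂ), ((((-1 : ℂ) ^ n * z).re : ℝ) : ℂ) = (-1) ^ n * (z.re : ℂ) := by
    intro n z
    rcases neg_one_pow_eq_or ℂ n with h | h <;> rw [h] <;> simp
  refine ⟨?_, ?_, ?_, ?_⟩
  · rintro ⟨hd1, _, ht1⟩
    rw [hcount hd1, hx1]
    obtain ⟨k, rfl⟩ : ∃ k, t = 3 * k + 1 := ⟨t / 3, by omega⟩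
    rw [FN.val1 hχ3o hψ, hJ, show (3 * k + 1 - 1) / 3 = k by omega]
    rw [show ζ ^ (2 * i0) * ((-1) ^ (3 * k) * ((p : ℂ) ^ k * π3 ^ k) * χ3 ((-c : (ZMod p)ˣ) : ZMod p)) =
      (-1) ^ (3 * k) * ((p : ℂ) ^ k * π3 ^ k * χ3 ((-c : (ZMod p)ˣ) : ZMod p) * ζ ^ (2 * i0)) by ring, hre,
      pow_succ (-1 : ℂ)]
    ring
  · rintro ⟨hd1, _, ht1⟩
    rw [hcount hd1, hx2]
    obtain ⟨k, rfl⟩ : ∃ k, t = 3 * k + 2 := ⟨t / 3, by omega⟩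
    rw [FN.val2 hχ3o hψ, hJ, show (3 * k + 2 - 2) / 3 = k by omega, show (3 * k + 2 + 1) / 3 = k + 1 by omega]
    rw [show ζ ^ (2 * i0) * ((-1) ^ (3 * k + 1) * ((p : ℂ) ^ k * π3 ^ (k + 1)) * χ3⁻¹ ((-c : (ZMod p)ˣ) : ZMod p)) =
      (-1) ^ (3 * k + 1) * ((p : ℂ) ^ k * π3 ^ (k + 1) * χ3⁻¹ ((-c : (ZMod p)ˣ) : ZMod p) * ζ ^ (2 * i0)) by ring, hre,
      show (-1 : ℂ) ^ (3 * k + 2) = (-1) ^ (3 * k + 1) * (-1) from pow_succ _ _]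
    ring
  · rintro ⟨hd1, hl3⟩
    rw [hcount hd1]
    have h3t : 3 ∣ t := by
      rw [hd1, hl3] at hl
      rw [hl]
      exact Nat.gcd_dvd_left _ _
    obtain ⟨k, rfl⟩ : ∃ k, t = 3 * k + 3 := ⟨t / 3 - 1, by omega⟩
    rw [FN.val3 hχ3o hψ, hJ, show (3 * k + 3 - 3) / 3 = k by omega, show (3 * k + 3) / 3 = k + 1 by omega]
    rw [show ζ ^ (2 * i0) * (-(-1) ^ (3 * k + 2) * ((p : ℂ) ^ k * π3 ^ (k + 1))) =
      (-1) ^ (3 * k + 3) * ((((p : ℝ) ^ k : ℝ) : ℂ) * (π3 ^ (k + 1) * ζ ^ (2 * i0))) by push_cast; ring, hre,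
      Complex.re_ofReal_mul]
    push_cast
    ring
  · rintro ⟨hd3, _⟩
    rw [hNN, ← Nat.cast_pow, ← FN.card_tr ht0.ne' (c : ZMod p)]
    congr 2
    ext x
    simp only [Finset.mem_filter, Finset.mem_univ, true_and, and_iff_left_iff_imp]
    intro hx
    have hx0 : x ≠ 0 := by
      rintro rfl
      apply hc0
      rw [← hx, map_zero]
    have hN : Algebra.norm (ZMod p) x ≠ 0 := Algebra.norm_ne_zero_iff.2 hx0
    rw [FN.exists_iff hg hζp hχ3g h hh (pow_ne_zero _ hN)]
    have h0 : h = 0 := by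
      rw [hd3] at hdh
      exact Nat.eq_zero_of_dvd_of_lt hdh hh
    have h3n : 3 ∣ m / t := by
      rw [← hd3, hd]
      exact Nat.gcd_dvd_left _ _
    obtain ⟨n, hn⟩ := h3n
    rw [h0, pow_zero, hn, pow_mul, map_pow, map_pow, ← MulChar.pow_apply' _ (by norm_num), FN.chi3 hχ3o,
      MulChar.one_apply (Ne.isUnit hN), one_pow]

end
end
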